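/- Assume in addition that (X_i)_{i≥0} is stationary with stationary density φ with respect to Lebesgue measure on ℝ^d and that φ(x) ≥ κ₀ > 0 for all x ∈ [0,1]^d. Then there exist universal constants C > 0 and L₀ > 0 (L₀ the constant of the oracle inequality of Theorem 1) such that for every ℓ ∈ ℕ* and L ≥ L₀, the estimator ŝ = ŝ(L, ℓ) satisfies C · E[ h²(s 1_A, ŝ) ] ≤ inf_{m ∈ 𝓜_ℓ} { h²(s 1_A, V_m) + L |m| (log n)/n } + R_n(ℓ)/n, where R_n(ℓ) = n 2^{3ℓd} inf_{1 ≤ q ≤ n} { exp( −(κ₀/10) n/(q 2^{ℓd}) ) + n β_q / q }. -/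

import Mathlib

/-!
The proof has a deterministic part and two probabilistic parts. Write `ŝ_m` for the histogram on
the partition `m`, `E_n` for the empirical average `(1/n) ∑_i ∫ F(X_i, y) dy`, `N(K)` for the
fraction of indices `i` with `(X_i, X_{i+1}) ∈ K`, and `V(K) = E_n (s 1_K)` for its compensator.

*Oracle inequality for the empirical loss.* Two dyadic cubes are disjoint or nested, so each
`K ∩ K'` occurring in the criterion `γ` is a single dyadic cube, of level at most `ℓ`, on which both
histograms are constant. On such a cube the test statistic depends on the data only through `N`
and `E_n 1_K`, and an elementary inequality (`piece_bound`) bounds `α H² + T` by twice the empirical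
loss of the first histogram plus `72 τ²`, as soon as `|√N - √V| ≤ τ` on that cube. When `72 τ² ≤ L log n / n` the penalty absorbs
the second term, and comparing `γ(m̂)` with `γ(m)` shows that the empirical Hellinger distance
between `ŝ_{m̂}` and *any* histogram on `m` is at most a constant times the empirical loss of that
histogram plus the penalty of `m` (`oracle_det`).

*Deviations.* For a cube `R` the process `exp (λ n N(R) - (e^λ - 1) n V(R))` is a supermartingale
with mean at most `1` (`exp_super`). Markov's inequality for `λ = ±1/k`, `1 ≤ k ≤ n`, and the choice `k ≈ √(n V / x)` give
`|√N - √V| ≤ 4 √(x/n)` (`dev_of_not_bad`). When `2^{ℓd} ≤ n` there are at most `n³` cubes of level at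
most `ℓ`, so `x = 6 log n` makes the failure probability at most `2/n²`.

*From the empirical to the deterministic loss.* Both histograms are constant in `x` on the `2^{ℓd}`
fine cells of `[0,1]^d`. If each cell is visited at least a tenth as often as expected, the
deterministic distance between them is at most ten times the empirical one (`occ_compare`). A
rarely visited cell is rarely visited by at least half of the `q` interlaced skeletons
`X_r, X_{r+q}, …`; along a skeleton the visits behave like independent Bernoulli trials up to an
error `β_q` per step (`ChainOK.decouple`), and a Laplace transform bound with success probability
at least `κ₀ 2^{-ℓd}` yields the two terms of the remainder (`fewV_bound`, `RareV_prob`).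

On the exceptional event the loss is bounded by `2^{ℓd}` (`hellDet_le`), and stationarity turns
the mean of the empirical loss of a fixed function into its deterministic loss
(`Slice.Ea_mean`). If `2^{ℓd} > n` the remainder exceeds the trivial bound. This gives `risk_bound`
for every partition, every histogram and every lag; the infima are then taken one by one.
-/

open MeasureTheory Real
open scoped ENNReal
noncomputable section
open Classical

/-- Dyadic subinterval of `[0,1]`: `[l/2^j, (l+1)/2^j)`, closed on the right when
`l + 1 = 2^j`. -/
def dyadicI (j l : ℕ) : Set ℝ :=
  if l + 1 = 2 ^ j then Set.Icc ((l : ℝ) / 2 ^ j) 1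
  else Set.Ico ((l : ℝ) / 2 ^ j) (((l : ℝ) + 1) / 2 ^ j)

/-- A dyadic cube of `[0,1]^{2d}` is coded by its level and its multi-index. -/
abbrev CubeIdx (d : ℕ) := ℕ × (Fin (2 * d) → ℕ)

/-- The subset of `[0,1]^{2d}` coded by a cube index. -/
def cubeSet (d : ℕ) (K : CubeIdx d) : Set (Fin (2 * d) → ℝ) :=
  {x | ∀ i, x i ∈ dyadicI K.1 (K.2 i)}

/-- The `4^d` dyadic children (of half side length) of a dyadic cube. -/
def childrenC (d : ℕ) (K : CubeIdx d) : Finset (CubeIdx d) :=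
  (Finset.univ : Finset (Fin (2 * d) → Fin 2)).image
    (fun ε => (K.1 + 1, fun i => 2 * K.2 i + (ε i : ℕ)))

/-- `IsPartOf d ℓ K m` means: `m` is a partition of the dyadic cube `K` into dyadic
cubes, obtained by at most `ℓ` recursive splitting steps (at each step, each current
cube may be split into its `4^d` children). -/
inductive IsPartOf (d : ℕ) : ℕ → CubeIdx d → Finset (CubeIdx d) → Prop
  | leaf (ℓ : ℕ) (K : CubeIdx d) : IsPartOf d ℓ K {K}
  | node (ℓ : ℕ) (K : CubeIdx d) (f : CubeIdx d → Finset (CubeIdx d))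
      (h : ∀ K' ∈ childrenC d K, IsPartOf d ℓ K' (f K')) :
      IsPartOf d (ℓ + 1) K ((childrenC d K).biUnion f)

/-- The root cube, coding `[0,1]^{2d}`. -/
def rootC (d : ℕ) : CubeIdx d := (0, fun _ => 0)

/-- The collection `𝓜_ℓ` of dyadic partitions of `[0,1]^{2d}` built in at most `ℓ` steps. -/
def Mpart (d ℓ : ℕ) : Set (Finset (CubeIdx d)) := {m | IsPartOf d ℓ (rootC d) m}

/-- The collection `𝓜_∞ = ⋃_ℓ 𝓜_ℓ`. -/
def MpartInf (d : ℕ) : Set (Finset (CubeIdx d)) := ⋃ ℓ, Mpart d ℓ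

/-- The collection `𝓜_ℓ` for `ℓ ∈ ℕ ∪ {∞}`. -/
def MpartE (d : ℕ) (ℓ : ℕ∞) : Set (Finset (CubeIdx d)) :=
  if ℓ = ⊤ then MpartInf d else Mpart d ℓ.toNat

/-- Concatenation of two points of `ℝ^d` into a point of `ℝ^{2d}`. -/
def pairPt (d : ℕ) (x y : Fin d → ℝ) : Fin (2 * d) → ℝ :=
  fun i => if h : (i : ℕ) < d then x ⟨i, h⟩
    else y ⟨(i : ℕ) - d, by have := i.isLt; omega⟩

/-- The indicator function `1_K` of a dyadic cube, as a function on `ℝ^d × ℝ^d`. -/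
def indC (d : ℕ) (K : CubeIdx d) (p : (Fin d → ℝ) × (Fin d → ℝ)) : ℝ :=
  (cubeSet d K).indicator (fun _ => (1 : ℝ)) (pairPt d p.1 p.2)

/-- The set `A = [0,1]^d × [0,1]^d` on which the transition density is estimated. -/
def unitSq (d : ℕ) : Set ((Fin d → ℝ) × (Fin d → ℝ)) :=
  (Set.Icc (0 : Fin d → ℝ) 1) ×ˢ (Set.Icc (0 : Fin d → ℝ) 1)

/-- The empirical Hellinger-type squared distance
`H²(f,f') = (1/(2n)) ∑_{i<n} ∫ (√f(X_i,y) - √f'(X_i,y))² dy`. -/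
def hellSq (d : ℕ) {Ω : Type*} (n : ℕ) (X : ℕ → Ω → (Fin d → ℝ)) (ω : Ω)
    (f g : (Fin d → ℝ) × (Fin d → ℝ) → ℝ) : ℝ :=
  (1 / (2 * n)) * ∑ i ∈ Finset.range n,
    ∫ y, (Real.sqrt (f (X i ω, y)) - Real.sqrt (g (X i ω, y))) ^ 2

/-- The test statistic `T(f,f')` (conventions `0/0 = 0` are those of real division). -/
def Tstat (d : ℕ) {Ω : Type*} (n : ℕ) (X : ℕ → Ω → (Fin d → ℝ)) (ω : Ω)
    (f g : (Fin d → ℝ) × (Fin d → ℝ) → ℝ) : ℝ :=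
  (1 / (2 * Real.sqrt 2 * n)) * (∑ i ∈ Finset.range n,
      ∫ y, Real.sqrt (f (X i ω, y) + g (X i ω, y)) *
        (Real.sqrt (g (X i ω, y)) - Real.sqrt (f (X i ω, y))))
  + (1 / (Real.sqrt 2 * n)) * (∑ i ∈ Finset.range n,
      (Real.sqrt (g (X i ω, X (i + 1) ω)) - Real.sqrt (f (X i ω, X (i + 1) ω))) /
        Real.sqrt (f (X i ω, X (i + 1) ω) + g (X i ω, X (i + 1) ω)))
  + (1 / (2 * n)) * (∑ i ∈ Finset.range n,
      ∫ y, (f (X i ω, y) - g (X i ω, y)))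

/-- The histogram estimator `ŝ_m` on a dyadic partition `m` (convention `0/0 = 0`). -/
def histEst (d : ℕ) {Ω : Type*} (n : ℕ) (X : ℕ → Ω → (Fin d → ℝ))
    (m : Finset (CubeIdx d)) (ω : Ω) : (Fin d → ℝ) × (Fin d → ℝ) → ℝ :=
  fun p => ∑ K ∈ m,
    ((∑ i ∈ Finset.range n, indC d K (X i ω, X (i + 1) ω)) /
      (∑ i ∈ Finset.range n, ∫ y, indC d K (X i ω, y))) * indC d K p

/-- The set `V_m` of nonnegative piecewise constant functions on a dyadic partition `m`. -/
def VmD (d : ℕ) (m : Finset (CubeIdx d)) : Set ((Fin d → ℝ) × (Fin d → ℝ) → ℝ) :=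
  {g | ∃ a : CubeIdx d → ℝ, (∀ K ∈ m, 0 ≤ a K) ∧
    g = fun p => ∑ K ∈ m, a K * indC d K p}

/-- `|m' ∨ K|`: the number of nonempty pieces `K' ∩ K`, `K' ∈ m'`. -/
def veeCard (d : ℕ) (m' : Finset (CubeIdx d)) (K : CubeIdx d) : ℕ :=
  ((m'.filter fun K' => (cubeSet d K' ∩ cubeSet d K).Nonempty).image
    fun K' => cubeSet d K' ∩ cubeSet d K).card

/-- The penalty `L ⬝ c ⬝ log n / n` attached to a cardinality `c`. -/
def penC (L : ℝ) (n : ℕ) (c : ℕ) : ℝ := L * c * Real.log n / n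

/-- `α = (1 - 1/√2)/2`. -/
def alphaC : ℝ := (1 - 1 / Real.sqrt 2) / 2

/-- Restriction `f ⬝ 1_{K ∩ K'}`. -/
def restr2 (d : ℕ) (f : (Fin d → ℝ) × (Fin d → ℝ) → ℝ) (K K' : CubeIdx d) :
    (Fin d → ℝ) × (Fin d → ℝ) → ℝ :=
  fun p => f p * indC d K p * indC d K' p

/-- Restriction `f ⬝ 1_K`. -/
def restr1 (d : ℕ) (f : (Fin d → ℝ) × (Fin d → ℝ) → ℝ) (K : CubeIdx d) :
    (Fin d → ℝ) × (Fin d → ℝ) → ℝ :=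
  fun p => f p * indC d K p

/-- The selection criterion `γ`. -/
def gammaSel (d : ℕ) {Ω : Type*} (n : ℕ) (X : ℕ → Ω → (Fin d → ℝ)) (L : ℝ) (ℓ : ℕ∞)
    (ω : Ω) (m : Finset (CubeIdx d)) : ℝ :=
  (∑ K ∈ m, ⨆ m' : MpartE d ℓ,
      ((∑ K' ∈ (m' : Finset (CubeIdx d)),
          (alphaC * hellSq d n X ω (restr2 d (histEst d n X m ω) K K')
                (restr2 d (histEst d n X (m' : Finset (CubeIdx d)) ω) K K')
            + Tstat d n X ω (restr2 d (histEst d n X m ω) K K')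
                (restr2 d (histEst d n X (m' : Finset (CubeIdx d)) ω) K K')))
        - penC L n (veeCard d (m' : Finset (CubeIdx d)) K)))
  + 2 * penC L n m.card

/-- `s ⬝ 1_A`, the target function restricted to `A = [0,1]^{2d}`. -/
def sIndA (d : ℕ) (s : (Fin d → ℝ) → (Fin d → ℝ) → ℝ) :
    (Fin d → ℝ) × (Fin d → ℝ) → ℝ :=
  (unitSq d).indicator fun p => s p.1 p.2

end

noncomputable section
open Classical

/-- The deterministic Hellinger-type squared distance
`h²(f,f') = (1/2) ∫_{[0,1]^{2d}} (√f(x,y) - √f'(x,y))² φ(x) dx dy`. -/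
def hellDet (d : ℕ) (φ : (Fin d → ℝ) → ℝ)
    (f g : (Fin d → ℝ) × (Fin d → ℝ) → ℝ) : ℝ :=
  (1 / 2) * ∫ p in unitSq d, (Real.sqrt (f p) - Real.sqrt (g p)) ^ 2 * φ p.1


/-! ### Geometry of dyadic cubes -/

/-- The index of the level-`j` dyadic interval of `[0,1]` containing `t`; the cap `2 ^ j - 1`
accounts for the last interval being closed. -/
def cellD (j : ℕ) (t : ℝ) : ℕ := min ⌊(2 : ℝ) ^ j * t⌋₊ (2 ^ j - 1)

lemma cellD_lt (j : ℕ) (t : ℝ) : cellD j t < 2 ^ j := by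
  have : 0 < 2 ^ j := by positivity
  unfold cellD
  omega

lemma mem_dyadicI {j l : ℕ} {t : ℝ} (hl : l < 2 ^ j) :
    t ∈ dyadicI j l ↔ t ∈ Set.Icc (0 : ℝ) 1 ∧ cellD j t = l := by
  have hp : (0 : ℝ) < 2 ^ j := by positivity
  have hlr : ((l : ℝ) + 1) ≤ 2 ^ j := by exact_mod_cast hl
  unfold dyadicI cellD
  by_cases h : l + 1 = 2 ^ j
  · have hr : ((l : ℝ) + 1) = 2 ^ j := by exact_mod_cast h
    rw [if_pos h, Set.mem_Icc, div_le_iff₀ hp]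
    constructor
    · rintro ⟨h1, h2⟩
      have ht : 0 ≤ t := by
        by_contra hc
        push Not at hc
        have : (0 : ℝ) ≤ l := by positivity
        nlinarith
      refine ⟨⟨ht, h2⟩, ?_⟩
      have : l ≤ ⌊(2 : ℝ) ^ j * t⌋₊ := Nat.le_floor (by linarith)
      omega
    · rintro ⟨⟨h1, h2⟩, h3⟩
      refine ⟨?_, h2⟩
      have : l ≤ ⌊(2 : ℝ) ^ j * t⌋₊ := by omega
      have := (Nat.le_floor_iff (by positivity)).1 this
      linarith
  · rw [if_neg h, Set.mem_Ico, div_le_iff₀ hp, lt_div_iff₀ hp]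
    have h' : l < 2 ^ j - 1 := by omega
    constructor
    · rintro ⟨h1, h2⟩
      have ht : 0 ≤ t := by
        by_contra hc
        push Not at hc
        have : (0 : ℝ) ≤ l := by positivity
        nlinarith
      refine ⟨⟨ht, ?_⟩, ?_⟩
      · nlinarith
      · have : ⌊(2 : ℝ) ^ j * t⌋₊ = l := by
          rw [Nat.floor_eq_iff (by positivity)]
          constructor <;> linarith
        omega
    · rintro ⟨⟨h1, h2⟩, h3⟩
      have : ⌊(2 : ℝ) ^ j * t⌋₊ = l := by omega
      rw [Nat.floor_eq_iff (by positivity)] at this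
      constructor <;> linarith [this.1, this.2]

lemma cellD_succ (j : ℕ) (t : ℝ) : cellD j t = cellD (j + 1) t / 2 := by
  unfold cellD
  have h : ⌊(2 : ℝ) ^ j * t⌋₊ = ⌊(2 : ℝ) ^ (j + 1) * t⌋₊ / 2 := by
    rw [← Nat.floor_div_ofNat]
    congr 1
    rw [pow_succ]
    ring
  have h2 : 2 ^ (j + 1) = 2 * 2 ^ j := by rw [pow_succ]; ring
  have : 0 < 2 ^ j := by positivity
  rw [h]
  omega

lemma cellD_add (j k : ℕ) (t : ℝ) : cellD j t = cellD (j + k) t / 2 ^ k := by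
  induction k with
  | zero => simp
  | succ k ih =>
    rw [ih, cellD_succ, Nat.div_div_eq_div_mul, pow_succ, mul_comm 2, add_assoc]

lemma cellD_eq_of_le {j j' : ℕ} (h : j ≤ j') {t u : ℝ} (he : cellD j' t = cellD j' u) :
    cellD j t = cellD j u := by
  obtain ⟨k, rfl⟩ := Nat.exists_eq_add_of_le h
  rw [cellD_add j k t, cellD_add j k u, he]

lemma measurableSet_dyadicI (j l : ℕ) : MeasurableSet (dyadicI j l) := by
  unfold dyadicI
  split_ifs
  · exact measurableSet_Icc
  · exact measurableSet_Ico

lemma volume_dyadicI {j l : ℕ} :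
    volume (dyadicI j l) = ENNReal.ofReal ((2 : ℝ) ^ j)⁻¹ := by
  have hp : (0 : ℝ) < 2 ^ j := by positivity
  unfold dyadicI
  split_ifs with h
  · have hr : ((l : ℝ) + 1) = 2 ^ j := by exact_mod_cast h
    rw [Real.volume_Icc]
    congr 1
    rw [← hr] at hp ⊢
    field_simp
    ring
  · rw [Real.volume_Ico]
    congr 1
    field_simp
    ring

/-- A cube index is valid when it codes an actual dyadic subcube of `[0,1]^{2d}`. -/
def ValidC (d : ℕ) (K : CubeIdx d) : Prop := ∀ i, K.2 i < 2 ^ K.1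

lemma mem_cubeSet {d : ℕ} {K : CubeIdx d} (hK : ValidC d K) {x : Fin (2 * d) → ℝ} :
    x ∈ cubeSet d K ↔ (∀ i, x i ∈ Set.Icc (0 : ℝ) 1) ∧ ∀ i, cellD K.1 (x i) = K.2 i := by
  unfold cubeSet
  simp only [Set.mem_ofPred_eq]
  rw [← forall_and]
  exact forall_congr' fun i => mem_dyadicI (hK i)

lemma cubeSet_nested {d : ℕ} {K K' : CubeIdx d} (hK : ValidC d K) (hK' : ValidC d K')
    (hl : K.1 ≤ K'.1) (hne : (cubeSet d K ∩ cubeSet d K').Nonempty) :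
    cubeSet d K' ⊆ cubeSet d K := by
  obtain ⟨x, hx, hx'⟩ := hne
  rw [mem_cubeSet hK] at hx
  rw [mem_cubeSet hK'] at hx'
  intro y hy
  rw [mem_cubeSet hK'] at hy
  rw [mem_cubeSet hK]
  refine ⟨hy.1, fun i => ?_⟩
  rw [← hx.2 i]
  exact cellD_eq_of_le hl (by rw [hy.2 i, hx'.2 i])

lemma dyadicI_nonempty {j l : ℕ} (hl : l < 2 ^ j) : ((l : ℝ) / 2 ^ j) ∈ dyadicI j l := by
  have hp : (0 : ℝ) < 2 ^ j := by positivity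
  have hlr : ((l : ℝ) + 1) ≤ 2 ^ j := by exact_mod_cast hl
  unfold dyadicI
  split_ifs
  · refine ⟨le_refl _, ?_⟩
    rw [div_le_one hp]
    linarith
  · refine ⟨le_refl _, ?_⟩
    gcongr
    linarith

lemma cubeSet_nonempty {d : ℕ} {K : CubeIdx d} (hK : ValidC d K) : (cubeSet d K).Nonempty :=
  ⟨fun i => (K.2 i : ℝ) / 2 ^ K.1, fun i => dyadicI_nonempty (hK i)⟩

lemma mem_childrenC {d : ℕ} {K C : CubeIdx d} :
    C ∈ childrenC d K ↔ C.1 = K.1 + 1 ∧ ∀ i, C.2 i / 2 = K.2 i := by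
  unfold childrenC
  simp only [Finset.mem_image, Finset.mem_univ, true_and]
  constructor
  · rintro ⟨ε, rfl⟩
    refine ⟨rfl, fun i => ?_⟩
    have := (ε i).isLt
    simp only
    omega
  · rintro ⟨h1, h2⟩
    refine ⟨fun i => ⟨C.2 i % 2, Nat.mod_lt _ (by norm_num)⟩, ?_⟩
    refine Prod.ext h1.symm (funext fun i => ?_)
    have := h2 i
    simp only
    omega

lemma ValidC.child {d : ℕ} {K C : CubeIdx d} (hK : ValidC d K) (hC : C ∈ childrenC d K) :
    ValidC d C := by
  rw [mem_childrenC] at hC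
  intro i
  have h1 := hC.2 i
  have h2 := hK i
  rw [hC.1, pow_succ]
  omega

lemma childrenC_subset {d : ℕ} {K C : CubeIdx d} (hK : ValidC d K) (hC : C ∈ childrenC d K) :
    cubeSet d C ⊆ cubeSet d K := by
  intro x hx
  rw [mem_cubeSet (hK.child hC)] at hx
  rw [mem_cubeSet hK]
  refine ⟨hx.1, fun i => ?_⟩
  rw [mem_childrenC] at hC
  rw [cellD_succ, ← hC.1, hx.2 i, hC.2 i]

/-- The properties of a dyadic partition that the argument uses: valid cubes of level at
most `ℓ` that cover `[0,1]^{2d}` and are pairwise disjoint. -/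
structure GoodP (d ℓ : ℕ) (m : Finset (CubeIdx d)) : Prop where
  valid : ∀ K ∈ m, ValidC d K
  level : ∀ K ∈ m, K.1 ≤ ℓ
  cover : ∀ x : Fin (2 * d) → ℝ, (∀ i, x i ∈ Set.Icc (0 : ℝ) 1) → ∃ K ∈ m, x ∈ cubeSet d K
  disj : ∀ K ∈ m, ∀ K' ∈ m, ∀ x, x ∈ cubeSet d K → x ∈ cubeSet d K' → K = K'

lemma IsPartOf.props {d ℓ : ℕ} {K : CubeIdx d} {m : Finset (CubeIdx d)}
    (h : IsPartOf d ℓ K m) (hK : ValidC d K) :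
    (∀ K' ∈ m, ValidC d K' ∧ K'.1 ≤ K.1 + ℓ ∧ cubeSet d K' ⊆ cubeSet d K) ∧
    (∀ x ∈ cubeSet d K, ∃ K' ∈ m, x ∈ cubeSet d K') ∧
    (∀ K' ∈ m, ∀ K'' ∈ m, ∀ x, x ∈ cubeSet d K' → x ∈ cubeSet d K'' → K' = K'') := by
  induction h with
  | leaf ℓ K =>
    simp only [Finset.mem_singleton, forall_eq, exists_eq_left]
    exact ⟨⟨hK, by omega, le_refl _⟩, fun x hx => hx, fun _ _ _ => trivial⟩
  | node ℓ K f h ih =>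
    refine ⟨?_, ?_, ?_⟩
    · intro K' hK'
      obtain ⟨C, hC, hKC⟩ := Finset.mem_biUnion.1 hK'
      have := (ih C hC (hK.child hC)).1 K' hKC
      refine ⟨this.1, ?_, this.2.2.trans (childrenC_subset hK hC)⟩
      have h1 := (mem_childrenC.1 hC).1
      omega
    · intro x hx
      rw [mem_cubeSet hK] at hx
      have hC : ((K.1 + 1, fun i => cellD (K.1 + 1) (x i)) : CubeIdx d) ∈ childrenC d K := by
        rw [mem_childrenC]
        exact ⟨rfl, fun i => by rw [← cellD_succ, hx.2 i]⟩
      have hx' : x ∈ cubeSet d ((K.1 + 1, fun i => cellD (K.1 + 1) (x i)) : CubeIdx d) := by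
        rw [mem_cubeSet (hK.child hC)]
        exact ⟨hx.1, fun i => rfl⟩
      obtain ⟨K', h1, h2⟩ := (ih _ hC (hK.child hC)).2.1 x hx'
      exact ⟨K', Finset.mem_biUnion.2 ⟨_, hC, h1⟩, h2⟩
    · intro K' hK' K'' hK'' x hx' hx''
      obtain ⟨C, hC, hKC⟩ := Finset.mem_biUnion.1 hK'
      obtain ⟨C', hC', hKC'⟩ := Finset.mem_biUnion.1 hK''
      have e1 := ((ih C hC (hK.child hC)).1 K' hKC).2.2 hx'
      have e2 := ((ih C' hC' (hK.child hC')).1 K'' hKC').2.2 hx''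
      rw [mem_cubeSet (hK.child hC)] at e1
      rw [mem_cubeSet (hK.child hC')] at e2
      have : C = C' := by
        have l1 := (mem_childrenC.1 hC).1
        have l2 := (mem_childrenC.1 hC').1
        refine Prod.ext (by omega) (funext fun i => ?_)
        rw [← e1.2 i, ← e2.2 i, l1, l2]
      subst this
      exact (ih C hC (hK.child hC)).2.2 K' hKC K'' hKC' x hx' hx''

lemma validC_root (d : ℕ) : ValidC d (rootC d) := fun i => by simp [rootC]

lemma GoodP.of_mem {d ℓ : ℕ} {m : Finset (CubeIdx d)} (h : m ∈ Mpart d ℓ) : GoodP d ℓ m := by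
  have h' : IsPartOf d ℓ (rootC d) m := h
  obtain ⟨h1, h2, h3⟩ := h'.props (validC_root d)
  refine ⟨fun K hK => (h1 K hK).1, fun K hK => ?_, fun x hx => h2 x ?_, h3⟩
  · have := (h1 K hK).2.1
    simpa [rootC] using this
  · rw [mem_cubeSet (validC_root d)]
    refine ⟨hx, fun i => ?_⟩
    have := cellD_lt 0 (x i)
    simp only [rootC]
    simp only [pow_zero] at this
    omega

lemma root_mem_Mpart (d ℓ : ℕ) : {rootC d} ∈ Mpart d ℓ := IsPartOf.leaf ℓ (rootC d)

/-- A finite set of cube indices containing every cube of every partition in `𝓜_ℓ`. -/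
def allC (d ℓ : ℕ) : Finset (CubeIdx d) :=
  (Finset.range (ℓ + 1) ×ˢ Fintype.piFinset fun _ => Finset.range (2 ^ ℓ)).filter (ValidC d)

lemma mem_allC {d ℓ : ℕ} {K : CubeIdx d} : K ∈ allC d ℓ ↔ K.1 ≤ ℓ ∧ ValidC d K := by
  unfold allC
  simp only [Finset.mem_filter, Finset.mem_product, Finset.mem_range, Fintype.mem_piFinset]
  constructor
  · rintro ⟨⟨h1, h2⟩, h3⟩
    exact ⟨by omega, h3⟩
  · rintro ⟨h1, h2⟩
    exact ⟨⟨by omega, fun i => (h2 i).trans_le (Nat.pow_le_pow_right (by norm_num) h1)⟩, h2⟩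

lemma card_allC (d ℓ : ℕ) : (allC d ℓ).card ≤ (ℓ + 1) * 2 ^ (2 * (ℓ * d)) := by
  refine (Finset.card_filter_le _ _).trans ?_
  rw [Finset.card_product, Fintype.card_piFinset]
  simp only [Finset.card_range, Finset.prod_const, Finset.card_univ, Fintype.card_fin]
  rw [← pow_mul]
  apply le_of_eq
  ring_nf

lemma GoodP.subset {d ℓ : ℕ} {m : Finset (CubeIdx d)} (h : GoodP d ℓ m) : m ⊆ allC d ℓ :=
  fun K hK => mem_allC.2 ⟨h.level K hK, h.valid K hK⟩

lemma Mpart_finite (d ℓ : ℕ) : (Mpart d ℓ).Finite :=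
  (Finset.finite_toSet (allC d ℓ).powerset).subset fun m hm => by
    simpa using (GoodP.of_mem hm).subset

/-- The product of the dyadic intervals of level `j` indexed by `k`, in `ℝ^d`. -/
def boxS (d j : ℕ) (k : Fin d → ℕ) : Set (Fin d → ℝ) := {x | ∀ i, x i ∈ dyadicI j (k i)}

lemma boxS_eq_pi (d j : ℕ) (k : Fin d → ℕ) :
    boxS d j k = Set.univ.pi fun i => dyadicI j (k i) := by
  ext x
  simp [boxS]

lemma measurableSet_boxS (d j : ℕ) (k : Fin d → ℕ) : MeasurableSet (boxS d j k) := by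
  rw [boxS_eq_pi]
  exact MeasurableSet.univ_pi fun i => measurableSet_dyadicI _ _

lemma volume_boxS (d j : ℕ) (k : Fin d → ℕ) :
    volume (boxS d j k) = ENNReal.ofReal (((2 : ℝ) ^ (j * d))⁻¹) := by
  rw [boxS_eq_pi, volume_pi_pi]
  simp only [volume_dyadicI, Finset.prod_const, Finset.card_univ, Fintype.card_fin]
  rw [← ENNReal.ofReal_pow (by positivity), inv_pow, ← pow_mul]

lemma boxS_subset {d j : ℕ} {k : Fin d → ℕ} (hk : ∀ i, k i < 2 ^ j) :
    boxS d j k ⊆ Set.Icc 0 1 := by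
  intro x hx
  have := fun i => ((mem_dyadicI (hk i)).1 (hx i)).1
  exact ⟨fun i => (this i).1, fun i => (this i).2⟩

/-- The multi-index of the projection of a cube on the first `d` coordinates. -/
def kx (d : ℕ) (K : CubeIdx d) : Fin d → ℕ := fun i => K.2 ⟨i, by have := i.isLt; omega⟩

/-- The multi-index of the projection of a cube on the last `d` coordinates. -/
def ky (d : ℕ) (K : CubeIdx d) : Fin d → ℕ := fun i => K.2 ⟨d + i, by have := i.isLt; omega⟩

lemma pairPt_mem {d : ℕ} {K : CubeIdx d} {x y : Fin d → ℝ} :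
    pairPt d x y ∈ cubeSet d K ↔ x ∈ boxS d K.1 (kx d K) ∧ y ∈ boxS d K.1 (ky d K) := by
  unfold cubeSet boxS kx ky pairPt
  simp only [Set.mem_ofPred_eq]
  constructor
  · intro h
    refine ⟨fun i => ?_, fun i => ?_⟩
    · have := h ⟨i, by have := i.isLt; omega⟩
      simpa using this
    · have := h ⟨d + i, by have := i.isLt; omega⟩
      simpa using this
  · rintro ⟨h1, h2⟩ i
    by_cases hi : (i : ℕ) < d
    · rw [dif_pos hi]
      exact h1 ⟨i, hi⟩
    · rw [dif_neg hi]
      have := h2 ⟨(i : ℕ) - d, by have := i.isLt; omega⟩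
      convert this using 4
      simp only
      omega

lemma pairPt_Icc {d : ℕ} {x y : Fin d → ℝ} :
    (∀ i, pairPt d x y i ∈ Set.Icc (0 : ℝ) 1) ↔ (x, y) ∈ unitSq d := by
  unfold unitSq pairPt
  simp only [Set.mem_prod, Set.mem_Icc, Pi.le_def]
  constructor
  · intro h
    refine ⟨⟨fun i => ?_, fun i => ?_⟩, fun i => ?_, fun i => ?_⟩
    · simpa using (h ⟨i, by have := i.isLt; omega⟩).1
    · simpa using (h ⟨i, by have := i.isLt; omega⟩).2
    · simpa using (h ⟨d + i, by have := i.isLt; omega⟩).1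
    · simpa using (h ⟨d + i, by have := i.isLt; omega⟩).2
  · rintro ⟨⟨h1, h2⟩, h3, h4⟩ i
    by_cases hi : (i : ℕ) < d
    · rw [dif_pos hi]
      exact ⟨h1 _, h2 _⟩
    · rw [dif_neg hi]
      exact ⟨h3 _, h4 _⟩

lemma ValidC.kx {d : ℕ} {K : CubeIdx d} (h : ValidC d K) (i : Fin d) : kx d K i < 2 ^ K.1 := h _
lemma ValidC.ky {d : ℕ} {K : CubeIdx d} (h : ValidC d K) (i : Fin d) : ky d K i < 2 ^ K.1 := h _

lemma indC_eq_ite {d : ℕ} (K : CubeIdx d) (p) :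
    indC d K p = if pairPt d p.1 p.2 ∈ cubeSet d K then 1 else 0 := by
  simp [indC, Set.indicator]

lemma indC_prod {d : ℕ} (K : CubeIdx d) (x y) :
    indC d K (x, y) = (boxS d K.1 (kx d K)).indicator 1 x * (boxS d K.1 (ky d K)).indicator 1 y := by
  rw [indC_eq_ite]
  simp only [pairPt_mem, Set.indicator, Pi.one_apply]
  split_ifs <;> simp_all

lemma indC_zero_or_one {d : ℕ} (K : CubeIdx d) (p) : indC d K p = 0 ∨ indC d K p = 1 := by
  rw [indC_eq_ite]
  split_ifs <;> simp

lemma indC_nonneg {d : ℕ} (K : CubeIdx d) (p) : 0 ≤ indC d K p := by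
  rcases indC_zero_or_one K p with h | h <;> simp [h]

lemma indC_le_one {d : ℕ} (K : CubeIdx d) (p) : indC d K p ≤ 1 := by
  rcases indC_zero_or_one K p with h | h <;> simp [h]

lemma measurable_indC {d : ℕ} (K : CubeIdx d) : Measurable (indC d K) := by
  have : indC d K = fun p => (boxS d K.1 (kx d K)).indicator (1 : (Fin d → ℝ) → ℝ) p.1 *
      (boxS d K.1 (ky d K)).indicator (1 : (Fin d → ℝ) → ℝ) p.2 := by
    funext p
    exact indC_prod K p.1 p.2
  rw [this]
  exact ((measurable_one.indicator (measurableSet_boxS _ _ _)).comp measurable_fst).mul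
    ((measurable_one.indicator (measurableSet_boxS _ _ _)).comp measurable_snd)

lemma indC_disj {d ℓ : ℕ} {m : Finset (CubeIdx d)} (hm : GoodP d ℓ m) {K K' : CubeIdx d}
    (hK : K ∈ m) (hK' : K' ∈ m) (hne : K ≠ K') (p) : indC d K p * indC d K' p = 0 := by
  rw [indC_eq_ite, indC_eq_ite]
  split_ifs with h1 h2
  · exact absurd (hm.disj K hK K' hK' _ h1 h2) hne
  all_goals simp

lemma sum_indC {d ℓ : ℕ} {m : Finset (CubeIdx d)} (hm : GoodP d ℓ m) (p) :
    ∑ K ∈ m, indC d K p = (unitSq d).indicator 1 p := by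
  by_cases hp : p ∈ unitSq d
  · obtain ⟨K, hK, hx⟩ := hm.cover (pairPt d p.1 p.2) (pairPt_Icc.2 hp)
    rw [Finset.sum_eq_single_of_mem K hK]
    · simp [indC_eq_ite, hx, hp]
    · intro K' hK' hne
      rw [indC_eq_ite, if_neg]
      intro h
      exact hne (hm.disj K' hK' K hK _ h hx)
  · rw [Set.indicator_of_notMem hp]
    refine Finset.sum_eq_zero fun K hK => ?_
    rw [indC_eq_ite, if_neg]
    intro h
    exact hp (pairPt_Icc.1 ((mem_cubeSet (hm.valid K hK)).1 h).1)

/-- Two dyadic cubes are disjoint or nested, expressed with indicator functions. -/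
lemma indC_mul_cases {d : ℕ} {K K' : CubeIdx d} (hK : ValidC d K) (hK' : ValidC d K') :
    (¬ (cubeSet d K' ∩ cubeSet d K).Nonempty ∧ ∀ p, indC d K p * indC d K' p = 0) ∨
    ((cubeSet d K' ∩ cubeSet d K).Nonempty ∧ ∃ R, (R = K ∨ R = K') ∧
      ∀ p, indC d K p * indC d K' p = indC d R p) := by
  by_cases hne : (cubeSet d K' ∩ cubeSet d K).Nonempty
  · refine Or.inr ⟨hne, ?_⟩
    rcases le_total K.1 K'.1 with h | h
    · refine ⟨K', Or.inr rfl, fun p => ?_⟩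
      have := cubeSet_nested hK hK' h (by rwa [Set.inter_comm])
      rw [indC_eq_ite, indC_eq_ite]
      by_cases h2 : pairPt d p.1 p.2 ∈ cubeSet d K'
      · simp [h2, this h2]
      · simp [h2]
    · refine ⟨K, Or.inl rfl, fun p => ?_⟩
      have := cubeSet_nested hK' hK h hne
      rw [indC_eq_ite, indC_eq_ite]
      by_cases h2 : pairPt d p.1 p.2 ∈ cubeSet d K
      · simp [h2, this h2]
      · simp [h2]
  · refine Or.inl ⟨hne, fun p => ?_⟩
    rw [indC_eq_ite, indC_eq_ite]
    split_ifs with h1 h2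
    · exact absurd ⟨_, h2, h1⟩ hne
    all_goals simp

lemma indC_le_unit {d : ℕ} {K : CubeIdx d} (hK : ValidC d K) {p} (hp : p ∉ unitSq d) :
    indC d K p = 0 := by
  rw [indC_eq_ite, if_neg]
  intro h
  exact hp (pairPt_Icc.1 ((mem_cubeSet hK).1 h).1)

lemma integrable_indicator_boxS (d j : ℕ) (k : Fin d → ℕ) :
    Integrable ((boxS d j k).indicator (1 : (Fin d → ℝ) → ℝ)) volume := by
  rw [integrable_indicator_iff (measurableSet_boxS _ _ _)]
  refine integrableOn_const (C := (1 : ℝ)) ?_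
  rw [volume_boxS]
  exact ENNReal.ofReal_ne_top

lemma integral_indC {d : ℕ} (K : CubeIdx d) (x) :
    ∫ y, indC d K (x, y) =
      (boxS d K.1 (kx d K)).indicator 1 x * ((2 : ℝ) ^ (K.1 * d))⁻¹ := by
  simp only [indC_prod]
  rw [integral_const_mul, integral_indicator_one (measurableSet_boxS _ _ _), measureReal_def,
    volume_boxS, ENNReal.toReal_ofReal (by positivity)]

lemma integrable_indC {d : ℕ} (K : CubeIdx d) (x) : Integrable (fun y => indC d K (x, y)) := by
  simp only [indC_prod]
  exact (integrable_indicator_boxS _ _ _).const_mul _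

/-- On a fine cell of level `ℓ` in the first variable, the indicator of a cube of level at most
`ℓ` does not depend on the first variable. -/
lemma indC_eq_of_cell {d ℓ : ℕ} {K : CubeIdx d} (hK : ValidC d K) (hl : K.1 ≤ ℓ)
    {x x' : Fin d → ℝ} {k : Fin d → ℕ} (hk : ∀ i, k i < 2 ^ ℓ)
    (hx : x ∈ boxS d ℓ k) (hx' : x' ∈ boxS d ℓ k) (y) : indC d K (x, y) = indC d K (x', y) := by
  have key : x ∈ boxS d K.1 (kx d K) ↔ x' ∈ boxS d K.1 (kx d K) := by
    refine forall_congr' fun i => ?_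
    have h1 := (mem_dyadicI (hk i)).1 (hx i)
    have h2 := (mem_dyadicI (hk i)).1 (hx' i)
    rw [mem_dyadicI (hK.kx i), mem_dyadicI (hK.kx i),
      cellD_eq_of_le hl (h1.2.trans h2.2.symm)]
    simp [h1.1, h2.1]
  rw [indC_prod, indC_prod]
  simp only [Set.indicator, key, Pi.one_apply]

/-- The fine cells of level `ℓ` partition `[0,1]^d`. -/
lemma sum_boxS {d : ℕ} (ℓ : ℕ) (x : Fin d → ℝ) :
    ∑ k ∈ Fintype.piFinset (fun _ : Fin d => Finset.range (2 ^ ℓ)),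
      (boxS d ℓ k).indicator (1 : (Fin d → ℝ) → ℝ) x = (Set.Icc (0 : Fin d → ℝ) 1).indicator 1 x := by
  by_cases hx : x ∈ Set.Icc (0 : Fin d → ℝ) 1
  · have hmem : (fun i => cellD ℓ (x i)) ∈
        Fintype.piFinset (fun _ : Fin d => Finset.range (2 ^ ℓ)) := by
      simp [cellD_lt]
    rw [Finset.sum_eq_single_of_mem _ hmem]
    · have : x ∈ boxS d ℓ (fun i => cellD ℓ (x i)) := fun i =>
        (mem_dyadicI (cellD_lt _ _)).2 ⟨⟨hx.1 i, hx.2 i⟩, rfl⟩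
      simp [this, hx]
    · intro k hk hne
      refine Set.indicator_of_notMem (fun h => hne ?_) _
      funext i
      simp only [Fintype.mem_piFinset, Finset.mem_range] at hk
      exact ((mem_dyadicI (hk i)).1 (h i)).2.symm
  · rw [Set.indicator_of_notMem hx]
    refine Finset.sum_eq_zero fun k hk => Set.indicator_of_notMem (fun h => hx ?_) _
    simp only [Fintype.mem_piFinset, Finset.mem_range] at hk
    exact boxS_subset hk h

/-- The number of pairs of intersecting cubes of two dyadic partitions is at most the sum of
their cardinalities, since each intersection is one of the two cubes. -/
lemma card_pairs_le {d ℓ : ℕ} {m m' : Finset (CubeIdx d)} (hm : GoodP d ℓ m)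
    (hm' : GoodP d ℓ m') :
    ∑ K ∈ m, (m'.filter fun K' => (cubeSet d K' ∩ cubeSet d K).Nonempty).card
      ≤ m.card + m'.card := by
  rw [← Finset.card_sigma]
  set S := m.sigma fun K => m'.filter fun K' => (cubeSet d K' ∩ cubeSet d K).Nonempty with hS
  have hmem : ∀ z ∈ S, z.1 ∈ m ∧ z.2 ∈ m' ∧ (cubeSet d z.2 ∩ cubeSet d z.1).Nonempty := by
    intro z hz
    rw [hS, Finset.mem_sigma, Finset.mem_filter] at hz
    exact ⟨hz.1, hz.2.1, hz.2.2⟩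
  have h1 : (S.filter fun z => z.1.1 ≤ z.2.1).card ≤ m'.card := by
    refine Finset.card_le_card_of_injOn (fun z => z.2) (fun z hz => ?_) ?_
    · exact (hmem z (Finset.mem_filter.1 hz).1).2.1
    · rintro ⟨K, K'⟩ hz ⟨K2, K2'⟩ hz2 heq
      simp only at heq
      subst heq
      have hz' := Finset.mem_filter.1 hz
      have hz2' := Finset.mem_filter.1 hz2
      have a := hmem _ hz'.1
      have b := hmem _ hz2'.1
      obtain ⟨x, hx⟩ := cubeSet_nonempty (hm'.valid K' a.2.1)
      have s1 := cubeSet_nested (hm.valid _ a.1) (hm'.valid _ a.2.1) hz'.2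
        (by rw [Set.inter_comm]; exact a.2.2) hx
      have s2 := cubeSet_nested (hm.valid _ b.1) (hm'.valid _ b.2.1) hz2'.2
        (by rw [Set.inter_comm]; exact b.2.2) hx
      have := hm.disj K a.1 K2 b.1 x s1 s2
      subst this
      rfl
  have h2 : (S.filter fun z => ¬ z.1.1 ≤ z.2.1).card ≤ m.card := by
    refine Finset.card_le_card_of_injOn (fun z => z.1) (fun z hz => ?_) ?_
    · exact (hmem z (Finset.mem_filter.1 hz).1).1
    · rintro ⟨K, K'⟩ hz ⟨K2, K2'⟩ hz2 heq
      simp only at heq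
      subst heq
      have hz' := Finset.mem_filter.1 hz
      have hz2' := Finset.mem_filter.1 hz2
      have a := hmem _ hz'.1
      have b := hmem _ hz2'.1
      obtain ⟨x, hx⟩ := cubeSet_nonempty (hm.valid K a.1)
      have s1 := cubeSet_nested (hm'.valid _ a.2.1) (hm.valid _ a.1) (not_le.1 hz'.2).le a.2.2 hx
      have s2 := cubeSet_nested (hm'.valid _ b.2.1) (hm.valid _ b.1) (not_le.1 hz2'.2).le b.2.2 hx
      have := hm'.disj K' a.2.1 K2' b.2.1 x s1 s2
      subst this
      rfl
  have := Finset.card_filter_add_card_filter_not (s := S) (fun z => z.1.1 ≤ z.2.1)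
  omega

lemma veeCard_eq {d ℓ : ℕ} {m' : Finset (CubeIdx d)} (hm' : GoodP d ℓ m') (K : CubeIdx d) :
    veeCard d m' K = (m'.filter fun K' => (cubeSet d K' ∩ cubeSet d K).Nonempty).card := by
  unfold veeCard
  refine Finset.card_image_of_injOn ?_
  intro K1 h1 K2 h2 heq
  simp only [Finset.coe_filter, Set.mem_ofPred_eq] at h1 h2
  simp only at heq
  obtain ⟨x, hx⟩ := h1.2
  have hx2 := heq ▸ hx
  exact hm'.disj K1 h1.1 K2 h2.1 x hx.1 hx2.1


/-! ### Elementary inequalities for the test statistic -/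

lemma inv_sqrt_two_bounds : (0.707 : ℝ) ≤ 1 / √2 ∧ 1 / √2 ≤ (0.7072 : ℝ) := by
  have h0 : (0 : ℝ) < √2 := by positivity
  have h1 : (√2 : ℝ) ^ 2 = 2 := Real.sq_sqrt (by norm_num)
  have h2 : (√2 : ℝ) ≤ 1.41421357 := by
    refine Real.sqrt_le_iff.2 ⟨by norm_num, by norm_num⟩
  have h3 : (1.4142135 : ℝ) ≤ √2 := by
    exact Real.le_sqrt_of_sq_le (by norm_num)
  constructor
  · rw [le_div_iff₀ h0]; linarith
  · rw [div_le_iff₀ h0]; linarith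

/-- The test lemma in normalized form: if the true density is `u ^ 2`, the expectation of the
test statistic comparing `a ^ 2` and `b ^ 2` is dominated by a difference of squared Hellinger
distances. With `r = √((a ^ 2 + b ^ 2) / 2)`, the left side equals
`(b - a) (u - r) ^ 2 / (2 r)` plus half the difference of the squared distances. -/
lemma test_mean {u a b : ℝ} (hu : 0 ≤ u) (ha : 0 ≤ a) (hb : 0 ≤ b) :
    1 / √2 * (1 / 2 * √(a ^ 2 + b ^ 2) * (b - a) + (b - a) / √(a ^ 2 + b ^ 2) * u ^ 2)
      + 1 / 2 * (a ^ 2 - b ^ 2)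
      ≤ (1 + 1 / √2) * (1 / 2 * (u - a) ^ 2) - (1 - 1 / √2) * (1 / 2 * (u - b) ^ 2) := by
  obtain ⟨k, hk⟩ : ∃ k, k = 1 / √2 := ⟨_, rfl⟩
  have hk0 : 0 < k := by rw [hk]; positivity
  have hk2 : k ^ 2 = 1 / 2 := by
    rw [hk, div_pow, Real.sq_sqrt (by norm_num)]; norm_num
  rw [← hk]
  rcases eq_or_lt_of_le (show 0 ≤ a ^ 2 + b ^ 2 by positivity) with h | h
  · have ha' : a = 0 := by nlinarith [sq_nonneg a, sq_nonneg b]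
    have hb' : b = 0 := by nlinarith [sq_nonneg a, sq_nonneg b]
    subst ha' hb'
    simp
    nlinarith [sq_nonneg u, mul_nonneg hk0.le (sq_nonneg u)]
  · obtain ⟨R, hR⟩ : ∃ R, R = √(a ^ 2 + b ^ 2) := ⟨_, rfl⟩
    have hR0 : 0 < R := by rw [hR]; exact Real.sqrt_pos.2 h
    have hR2 : R ^ 2 = a ^ 2 + b ^ 2 := by rw [hR, Real.sq_sqrt h.le]
    rw [← hR]
    obtain ⟨r, hr⟩ : ∃ r, r = k * R := ⟨_, rfl⟩
    have hr0 : 0 < r := by rw [hr]; positivity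
    have hr2 : r ^ 2 = (a ^ 2 + b ^ 2) / 2 := by rw [hr, mul_pow, hk2, hR2]; ring
    have hψ : (b - a) / R ≤ 1 := by
      rw [div_le_one hR0]
      refine le_of_sq_le_sq ?_ hR0.le |>.trans (le_refl _)
      nlinarith [mul_nonneg ha hb]
    have hconv : (u - r) ^ 2 ≤ ((u - a) ^ 2 + (u - b) ^ 2) / 2 := by
      have : (a + b) / 2 ≤ r := by
        refine le_of_sq_le_sq ?_ hr0.le
        nlinarith [sq_nonneg (a - b)]
      nlinarith [mul_le_mul_of_nonneg_left this hu]
    have e1 : k * (1 / 2 * R * (b - a) + (b - a) / R * u ^ 2)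
        = k * ((b - a) / R) * (u - r) ^ 2 + (b - a) * u := by
      field_simp
      rw [hr]
      have : k * k = 1 / 2 := by rw [← hk2]; ring
      linear_combination (-2 * (b - a) * (k * R ^ 2 - 2 * R * u)) * this
    rw [e1]
    have e2 : k * ((b - a) / R) * (u - r) ^ 2 ≤ k * (((u - a) ^ 2 + (u - b) ^ 2) / 2) := by
      rw [mul_assoc]
      refine mul_le_mul_of_nonneg_left ?_ hk0.le
      exact (mul_le_of_le_one_left (sq_nonneg _) hψ).trans hconv
    nlinarith [e2]

/-- The normalized increment of the test statistic is controlled, relatively to the true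
density `u ^ 2`, by the two squared Hellinger distances. -/
lemma psi_sq_le {u a b : ℝ} :
    ((b - a) / √(a ^ 2 + b ^ 2)) ^ 2 * u ^ 2 ≤ 3 * ((u - a) ^ 2 + (u - b) ^ 2) := by
  rcases eq_or_lt_of_le (show 0 ≤ a ^ 2 + b ^ 2 by positivity) with h | h
  · rw [← h]
    simp
    positivity
  · rw [div_pow, Real.sq_sqrt h.le, div_mul_eq_mul_div, div_le_iff₀ h]
    nlinarith [sq_nonneg (a * (u - b) + b * (u - a)), sq_nonneg (a * (u - a)),
      sq_nonneg (b * (u - b)), sq_nonneg (a * (u - b)), sq_nonneg (b * (u - a)),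
      sq_nonneg ((b - a) * u), sq_nonneg ((b - a) * (u - a)), sq_nonneg ((b - a) * (u - b)),
      sq_nonneg (b * (u - b) - a * (u - a)), sq_nonneg (b * (u - b) + a * (u - a)),
      sq_nonneg (a * (u - b) - b * (u - a))]

lemma psi_abs_le {a b : ℝ} (ha : 0 ≤ a) (hb : 0 ≤ b) :
    |(b - a) / √(a ^ 2 + b ^ 2)| ≤ 1 := by
  rw [← sq_le_one_iff_abs_le_one, div_pow, Real.sq_sqrt (by positivity)]
  refine div_le_one_of_le₀ ?_ (by positivity)
  nlinarith [mul_nonneg ha hb]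

/-- The normalized one-cell bound: with empirical mass `N` close to `u ^ 2` in Hellinger sense,
the criterion comparing `a ^ 2` and `b ^ 2` only involves the loss of `a ^ 2`. -/
lemma piece_normalized {u a b N τ : ℝ} (hu : 0 ≤ u) (ha : 0 ≤ a) (hb : 0 ≤ b) (hN : 0 ≤ N)
    (hτ : 0 ≤ τ) (hdev : |√N - u| ≤ τ) :
    alphaC * (1 / 2 * (a - b) ^ 2)
      + (1 / √2 * (1 / 2 * √(a ^ 2 + b ^ 2) * (b - a) + (b - a) / √(a ^ 2 + b ^ 2) * N)
        + 1 / 2 * (a ^ 2 - b ^ 2))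
      ≤ 2 * (u - a) ^ 2 + 72 * τ ^ 2 := by
  have h1 := test_mean hu ha hb
  have h2 := psi_sq_le (u := u) (a := a) (b := b)
  have h3 := psi_abs_le ha hb
  obtain ⟨k1, k2⟩ := inv_sqrt_two_bounds
  unfold alphaC
  set k := 1 / √2
  set ψ := (b - a) / √(a ^ 2 + b ^ 2)
  set w := √(a ^ 2 + b ^ 2)
  have hdev2 : |N - u ^ 2| ≤ τ * (2 * u + τ) := by
    have e : N - u ^ 2 = (√N - u) * (√N + u) := by
      linear_combination -(Real.sq_sqrt hN)
    rw [e, abs_mul, abs_of_nonneg (by positivity : 0 ≤ √N + u)]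
    have : √N ≤ u + τ := by linarith [(abs_le.1 hdev).2]
    exact mul_le_mul hdev (by linarith) (by positivity) hτ
  have h4 : ψ * N ≤ ψ * u ^ 2 + |ψ| * (τ * (2 * u + τ)) := by
    have : ψ * (N - u ^ 2) ≤ |ψ| * (τ * (2 * u + τ)) := by
      refine (le_abs_self _).trans ?_
      rw [abs_mul]
      gcongr
    linarith
  have h5 : |ψ| * (τ * (2 * u + τ)) ≤ 1 / 100 * (ψ ^ 2 * u ^ 2) + 101 * τ ^ 2 := by
    have a1 : |ψ| ^ 2 = ψ ^ 2 := sq_abs ψ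
    have a2 : |ψ| * τ ^ 2 ≤ τ ^ 2 := mul_le_of_le_one_left (sq_nonneg _) h3
    nlinarith [sq_nonneg (1 / 10 * |ψ| * u - 10 * τ)]
  have h6 : k * (ψ * N) ≤ k * (ψ * u ^ 2) +
      k * (1 / 100 * (3 * ((u - a) ^ 2 + (u - b) ^ 2)) + 101 * τ ^ 2) := by
    rw [← mul_add]
    refine mul_le_mul_of_nonneg_left ?_ (by linarith)
    linarith
  have h7 : k * (1 / 100 * (3 * ((u - a) ^ 2 + (u - b) ^ 2)) + 101 * τ ^ 2)
      ≤ 0.7072 * (1 / 100 * (3 * ((u - a) ^ 2 + (u - b) ^ 2)) + 101 * τ ^ 2) :=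
    mul_le_mul_of_nonneg_right k2 (by positivity)
  have h8 : (a - b) ^ 2 ≤ 3 / 2 * (u - b) ^ 2 + 3 * (u - a) ^ 2 := by
    nlinarith [sq_nonneg ((u - b) - 2 * ((u - a) * (1 : ℝ)) + 0), sq_nonneg ((u - b) + 2 * (u - a))]
  have h9 : (1 - k) / 2 * (1 / 2 * (a - b) ^ 2)
      ≤ (1 - k) / 2 * (1 / 2 * (3 / 2 * (u - b) ^ 2 + 3 * (u - a) ^ 2)) :=
    mul_le_mul_of_nonneg_left (by linarith) (by linarith)
  have p1 : k * (u - a) ^ 2 ≤ 0.7072 * (u - a) ^ 2 :=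
    mul_le_mul_of_nonneg_right k2 (sq_nonneg _)
  have p2 : k * (u - b) ^ 2 ≤ 0.7072 * (u - b) ^ 2 :=
    mul_le_mul_of_nonneg_right k2 (sq_nonneg _)
  have p3 : 0.707 * (u - a) ^ 2 ≤ k * (u - a) ^ 2 :=
    mul_le_mul_of_nonneg_right k1 (sq_nonneg _)
  nlinarith [sq_nonneg (u - a), sq_nonneg (u - b), sq_nonneg τ]

/-- The one-cell bound for piecewise constant functions with values `f` and `g` on a cell of mass
`A`, true mass `v` and empirical mass `N`. -/
lemma piece_bound {A v N f g τ : ℝ} (hA : 0 ≤ A) (hN : 0 ≤ N) (hf : 0 ≤ f)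
    (hg : 0 ≤ g) (hτ : 0 ≤ τ) (hAN : A = 0 → N = 0) (hdev : |√N - √v| ≤ τ) :
    alphaC * (1 / 2 * ((√f - √g) ^ 2 * A))
      + (1 / (2 * √2) * (√(f + g) * (√g - √f) * A) + 1 / √2 * ((√g - √f) / √(f + g) * N)
        + 1 / 2 * ((f - g) * A))
      ≤ 2 * (√v - √f * √A) ^ 2 + 72 * τ ^ 2 := by
  rcases eq_or_lt_of_le hA with h | h
  · rw [hAN h.symm, ← h]
    simp
    positivity
  · have key := piece_normalized (Real.sqrt_nonneg v) (by positivity : 0 ≤ √f * √A)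
      (by positivity : 0 ≤ √g * √A) hN hτ hdev
    have hsA : 0 < √A := Real.sqrt_pos.2 h
    have e0 : √((√f * √A) ^ 2 + (√g * √A) ^ 2) = √(f + g) * √A := by
      rw [mul_pow, mul_pow, Real.sq_sqrt hf, Real.sq_sqrt hg, ← add_mul,
        Real.sqrt_mul (by positivity), Real.sqrt_sq hsA.le]
    have e1 : (√g * √A - √f * √A) / (√(f + g) * √A) = (√g - √f) / √(f + g) := by
      rw [← sub_mul, mul_div_mul_right _ _ hsA.ne']
    rw [e0, e1] at key
    have hA2 : √A ^ 2 = A := Real.sq_sqrt hA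
    have hf2 : √f ^ 2 = f := Real.sq_sqrt hf
    have hg2 : √g ^ 2 = g := Real.sq_sqrt hg
    refine le_trans (le_of_eq ?_) key
    have e2 : (√f * √A - √g * √A) ^ 2 = (√f - √g) ^ 2 * A := by rw [← sub_mul, mul_pow, hA2]
    have e3 : (√f * √A) ^ 2 - (√g * √A) ^ 2 = (f - g) * A := by
      rw [mul_pow, mul_pow, hA2, hf2, hg2]; ring
    have e4 : √(f + g) * √A * (√g * √A - √f * √A) = √(f + g) * (√g - √f) * A := by
      linear_combination √(f + g) * (√g - √f) * hA2
    rw [e2, e3]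
    have e5 : 1 / 2 * (√(f + g) * √A) * (√g * √A - √f * √A)
      = 1 / 2 * (√(f + g) * (√g - √f) * A) := by rw [← e4]; ring
    rw [e5]
    have e6 : (1 : ℝ) / (2 * √2) = 1 / 2 * (1 / √2) := by
      rw [one_div_mul_one_div]
    rw [e6]
    ring


/-! ### Deterministic analysis of the selection procedure -/

/-- The empirical average `(1/n) ∑_{i<n} ∫ F(x_i, y) dy`. -/
def Ea (d n : ℕ) (x : ℕ → Fin d → ℝ) (F : (Fin d → ℝ) × (Fin d → ℝ) → ℝ) : ℝ :=
  1 / (n : ℝ) * ∑ i ∈ Finset.range n, ∫ y, F (x i, y)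

/-- The empirical average `(1/n) ∑_{i<n} F(x_i, x_{i+1})` over observed transitions. -/
def Na (d n : ℕ) (x : ℕ → Fin d → ℝ) (F : (Fin d → ℝ) × (Fin d → ℝ) → ℝ) : ℝ :=
  1 / (n : ℝ) * ∑ i ∈ Finset.range n, F (x i, x (i + 1))

/-- Integrability of every section in the second variable. -/
def IntA (d : ℕ) (F : (Fin d → ℝ) × (Fin d → ℝ) → ℝ) : Prop :=
  ∀ z, Integrable fun y => F (z, y)

section Ea
variable {d n : ℕ} {x : ℕ → Fin d → ℝ} {F G : (Fin d → ℝ) × (Fin d → ℝ) → ℝ}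

lemma Ea_add (hF : IntA d F) (hG : IntA d G) :
    Ea d n x (fun p => F p + G p) = Ea d n x F + Ea d n x G := by
  unfold Ea
  rw [← mul_add, ← Finset.sum_add_distrib]
  congr 1
  exact Finset.sum_congr rfl fun i _ => integral_add (hF _) (hG _)

lemma Ea_const_mul (c : ℝ) : Ea d n x (fun p => c * F p) = c * Ea d n x F := by
  unfold Ea
  simp only [integral_const_mul, ← Finset.mul_sum]
  ring

lemma Ea_sum {ι : Type*} (t : Finset ι) (H : ι → (Fin d → ℝ) × (Fin d → ℝ) → ℝ)
    (hH : ∀ j ∈ t, IntA d (H j)) :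
    Ea d n x (fun p => ∑ j ∈ t, H j p) = ∑ j ∈ t, Ea d n x (H j) := by
  unfold Ea
  rw [← Finset.mul_sum, Finset.sum_comm]
  congr 1
  exact Finset.sum_congr rfl fun i _ => integral_finsetSum _ fun j hj => hH j hj _

lemma Ea_mono (hF : IntA d F) (hG : IntA d G) (h : ∀ p, F p ≤ G p) :
    Ea d n x F ≤ Ea d n x G := by
  unfold Ea
  gcongr with i
  · exact hF _
  · exact hG _
  · exact fun y => h _

lemma Ea_nonneg (h : ∀ p, 0 ≤ F p) : 0 ≤ Ea d n x F := by
  unfold Ea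
  refine mul_nonneg (by positivity) (Finset.sum_nonneg fun i _ => integral_nonneg fun y => h _)

lemma Na_nonneg (h : ∀ p, 0 ≤ F p) : 0 ≤ Na d n x F := by
  unfold Na
  exact mul_nonneg (by positivity) (Finset.sum_nonneg fun i _ => h _)

end Ea

/-- The value of the histogram estimator on the cube `K`. -/
def hv (d n : ℕ) (x : ℕ → Fin d → ℝ) (K : CubeIdx d) : ℝ :=
  (∑ i ∈ Finset.range n, indC d K (x i, x (i + 1))) /
    (∑ i ∈ Finset.range n, ∫ y, indC d K (x i, y))

/-- The product of the indicators of two cubes. -/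
def ind2 (d : ℕ) (K K' : CubeIdx d) (p : (Fin d → ℝ) × (Fin d → ℝ)) : ℝ :=
  indC d K p * indC d K' p

lemma ind2_zero_or_one {d : ℕ} (K K' : CubeIdx d) (p) : ind2 d K K' p = 0 ∨ ind2 d K K' p = 1 := by
  unfold ind2
  rcases indC_zero_or_one K p with h | h <;> rcases indC_zero_or_one K' p with h' | h' <;>
    simp [h, h']

lemma ind2_nonneg {d : ℕ} (K K' : CubeIdx d) (p) : 0 ≤ ind2 d K K' p :=
  mul_nonneg (indC_nonneg _ _) (indC_nonneg _ _)

lemma ind2_comm {d : ℕ} (K K' : CubeIdx d) : ind2 d K K' = ind2 d K' K :=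
  funext fun _ => mul_comm _ _

lemma measurable_ind2 {d : ℕ} (K K' : CubeIdx d) : Measurable (ind2 d K K') :=
  (measurable_indC K).mul (measurable_indC K')

lemma IntA_indC {d : ℕ} (K : CubeIdx d) : IntA d (indC d K) := fun z => integrable_indC K z

lemma IntA_ind2 {d : ℕ} (K K' : CubeIdx d) : IntA d (ind2 d K K') := fun z => by
  refine (integrable_indC K z).mono' ?_ (Filter.Eventually.of_forall fun y => ?_)
  · exact ((measurable_ind2 K K').comp measurable_prodMk_left).aestronglyMeasurable
  · rw [Real.norm_of_nonneg (ind2_nonneg _ _ _)]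
    exact mul_le_of_le_one_right (indC_nonneg _ _) (indC_le_one _ _)

/-- The weighted squared Hellinger distance to a constant is integrable in the second
variable. -/
lemma IntA_weight {d : ℕ} {b : (Fin d → ℝ) × (Fin d → ℝ) → ℝ} (hb : IntA d b)
    (hb0 : ∀ p, 0 ≤ b p) (hb1 : ∀ p, b p ≤ 1) (hbm : Measurable b)
    {s : (Fin d → ℝ) → (Fin d → ℝ) → ℝ} (hsm : Measurable (Function.uncurry s))
    (hs0 : ∀ x y, 0 ≤ s x y) (hsi : ∀ x, Integrable (s x)) :
    IntA d (fun p => b p * s p.1 p.2) ∧ IntA d (fun p => b p * √(s p.1 p.2)) := by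
  have m0 : ∀ z, Measurable fun y => s z y := fun z => hsm.comp measurable_prodMk_left
  have m1 : ∀ z, Measurable fun y => b (z, y) := fun z => hbm.comp measurable_prodMk_left
  refine ⟨fun z => ?_, fun z => ?_⟩
  · refine (hsi z).mono' ((m1 z).mul (m0 z)).aestronglyMeasurable
      (Filter.Eventually.of_forall fun y => ?_)
    rw [Real.norm_of_nonneg (mul_nonneg (hb0 _) (hs0 _ _))]
    exact mul_le_of_le_one_left (hs0 _ _) (hb1 _)
  · refine ((hb z).add (hsi z)).mono' ((m1 z).mul (m0 z).sqrt).aestronglyMeasurable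
      (Filter.Eventually.of_forall fun y => ?_)
    rw [Real.norm_of_nonneg (mul_nonneg (hb0 _) (Real.sqrt_nonneg _)), Pi.add_apply]
    have h1 := hb0 (z, y)
    have h2 := hb1 (z, y)
    have h3 := Real.sq_sqrt (hs0 z y)
    have h4 := Real.sqrt_nonneg (s z y)
    -- `b √s ≤ b + s`, because `2 b √s ≤ b + b s`
    change b (z, y) * √(s z y) ≤ b (z, y) + s z y
    nlinarith [mul_nonneg h1 (sq_nonneg (√(s z y) - 1)),
      mul_nonneg (sub_nonneg.2 h2) (hs0 z y)]

section Weight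
variable {d n : ℕ} {x : ℕ → Fin d → ℝ} {b : (Fin d → ℝ) × (Fin d → ℝ) → ℝ}
  {s : (Fin d → ℝ) → (Fin d → ℝ) → ℝ}

lemma Ea_weight_expand (hb : IntA d b) (hs0 : ∀ x y, 0 ≤ s x y)
    (h1 : IntA d (fun p => b p * s p.1 p.2)) (h2 : IntA d (fun p => b p * √(s p.1 p.2))) (c : ℝ) :
    IntA d (fun p => b p * (√(s p.1 p.2) - c) ^ 2) ∧
    Ea d n x (fun p => b p * (√(s p.1 p.2) - c) ^ 2)
      = Ea d n x (fun p => b p * s p.1 p.2) + (-(2 * c)) * Ea d n x (fun p => b p * √(s p.1 p.2))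
        + c ^ 2 * Ea d n x b := by
  have e : (fun p : (Fin d → ℝ) × (Fin d → ℝ) => b p * (√(s p.1 p.2) - c) ^ 2)
      = fun p => (b p * s p.1 p.2 + (-(2 * c)) * (b p * √(s p.1 p.2))) + c ^ 2 * b p := by
    funext p
    linear_combination b p * Real.sq_sqrt (hs0 p.1 p.2)
  have i2 : IntA d (fun p => (-(2 * c)) * (b p * √(s p.1 p.2))) := fun z => (h2 z).const_mul _
  have i3 : IntA d (fun p => c ^ 2 * b p) := fun z => (hb z).const_mul _
  have i12 : IntA d (fun p => b p * s p.1 p.2 + (-(2 * c)) * (b p * √(s p.1 p.2))) :=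
    fun z => (h1 z).add (i2 z)
  rw [e]
  refine ⟨fun z => (i12 z).add (i3 z), ?_⟩
  rw [Ea_add i12 i3, Ea_add h1 i2, Ea_const_mul, Ea_const_mul]

/-- Reverse triangle inequality in the empirical `L²` space: the Hellinger distance of the masses
is at most the Hellinger distance of the densities. -/
lemma mass_le_weight (hb : IntA d b) (hb0 : ∀ p, 0 ≤ b p) (hs0 : ∀ x y, 0 ≤ s x y)
    (h1 : IntA d (fun p => b p * s p.1 p.2)) (h2 : IntA d (fun p => b p * √(s p.1 p.2)))
    {c : ℝ} (hc : 0 ≤ c) :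
    (√(Ea d n x (fun p => b p * s p.1 p.2)) - c * √(Ea d n x b)) ^ 2
      ≤ Ea d n x (fun p => b p * (√(s p.1 p.2) - c) ^ 2) := by
  have hex := fun c => (Ea_weight_expand (n := n) (x := x) hb hs0 h1 h2 c).2
  have hnn : ∀ c, 0 ≤ Ea d n x (fun p => b p * (√(s p.1 p.2) - c) ^ 2) := fun c =>
    Ea_nonneg fun p => mul_nonneg (hb0 _) (sq_nonneg _)
  have hA : 0 ≤ Ea d n x b := Ea_nonneg hb0
  have hv : 0 ≤ Ea d n x (fun p => b p * s p.1 p.2) :=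
    Ea_nonneg fun p => mul_nonneg (hb0 _) (hs0 _ _)
  rw [hex]
  set A := Ea d n x b
  set v := Ea d n x (fun p => b p * s p.1 p.2)
  set w := Ea d n x (fun p => b p * √(s p.1 p.2))
  have hd : discrim A (-(2 * w)) v ≤ 0 := by
    refine discrim_le_zero fun t => ?_
    have := hnn t
    rw [hex] at this
    linarith
  have hw : w ≤ √v * √A := by
    rw [← Real.sqrt_mul hv]
    refine Real.le_sqrt_of_sq_le ?_
    unfold discrim at hd
    nlinarith
  nlinarith [Real.sq_sqrt hA, Real.sq_sqrt hv, mul_le_mul_of_nonneg_left hw hc]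

end Weight

section Pieces
variable {d n : ℕ} {x : ℕ → Fin d → ℝ}

lemma hv_nonneg (K : CubeIdx d) : 0 ≤ hv d n x K := by
  unfold hv
  refine div_nonneg (Finset.sum_nonneg fun i _ => indC_nonneg _ _)
    (Finset.sum_nonneg fun i _ => integral_nonneg fun y => indC_nonneg _ _)

lemma sum_indC_le (K : CubeIdx d) :
    ∑ i ∈ Finset.range n, indC d K (x i, x (i + 1))
      ≤ 2 ^ (K.1 * d) * ∑ i ∈ Finset.range n, ∫ y, indC d K (x i, y) := by
  rw [Finset.mul_sum]
  refine Finset.sum_le_sum fun i _ => ?_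
  rw [integral_indC, indC_prod]
  have h0 : (0 : ℝ) ≤ (boxS d K.1 (kx d K)).indicator 1 (x i) :=
    Set.indicator_nonneg (fun _ _ => zero_le_one) _
  have h1 : (boxS d K.1 (ky d K)).indicator (1 : (Fin d → ℝ) → ℝ) (x (i + 1)) ≤ 1 :=
    Set.indicator_le_self' (fun _ _ => zero_le_one) _
  have e : (2 : ℝ) ^ (K.1 * d) * ((boxS d K.1 (kx d K)).indicator 1 (x i) *
    ((2 : ℝ) ^ (K.1 * d))⁻¹) = (boxS d K.1 (kx d K)).indicator 1 (x i) := by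
    field_simp
  rw [e]
  exact mul_le_of_le_one_right h0 h1

lemma hv_le (K : CubeIdx d) : hv d n x K ≤ 2 ^ (K.1 * d) := by
  unfold hv
  refine div_le_of_le_mul₀ ?_ (by positivity) (sum_indC_le K)
  exact Finset.sum_nonneg fun i _ => integral_nonneg fun y => indC_nonneg _ _

lemma Na_zero_of_Ea_zero (hn : 0 < n) (K : CubeIdx d) (h : Ea d n x (indC d K) = 0) :
    Na d n x (indC d K) = 0 := by
  have hn' : (0 : ℝ) < n := by exact_mod_cast hn
  have h2 := sum_indC_le (n := n) (x := x) K
  have h3 : 0 ≤ ∑ i ∈ Finset.range n, indC d K (x i, x (i + 1)) :=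
    Finset.sum_nonneg fun i _ => indC_nonneg _ _
  unfold Ea at h
  have h4 : ∑ i ∈ Finset.range n, ∫ y, indC d K (x i, y) = 0 := by
    rcases mul_eq_zero.1 h with h | h
    · exact absurd h (by positivity)
    · exact h
  rw [h4, mul_zero] at h2
  unfold Na
  rw [le_antisymm h2 h3, mul_zero]

lemma hv_mul_Ea (hn : 0 < n) (K : CubeIdx d) :
    hv d n x K * Ea d n x (indC d K) = Na d n x (indC d K) := by
  by_cases h : Ea d n x (indC d K) = 0
  · rw [h, mul_zero, Na_zero_of_Ea_zero hn K h]
  · have h4 : ∑ i ∈ Finset.range n, ∫ y, indC d K (x i, y) ≠ 0 := by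
      intro h0
      apply h
      unfold Ea
      rw [h0, mul_zero]
    unfold hv Ea Na
    field_simp

/-- The contribution of `K ∩ K'` to the empirical Hellinger distance of two histograms. -/
def pieceH (d n : ℕ) (x : ℕ → Fin d → ℝ) (K K' : CubeIdx d) : ℝ :=
  1 / 2 * ((√(hv d n x K) - √(hv d n x K')) ^ 2 * Ea d n x (ind2 d K K'))

/-- The contribution of `K ∩ K'` to the test statistic between two histograms. -/
def pieceT (d n : ℕ) (x : ℕ → Fin d → ℝ) (K K' : CubeIdx d) : ℝ :=
  1 / (2 * √2) * (√(hv d n x K + hv d n x K') * (√(hv d n x K') - √(hv d n x K)) *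
      Ea d n x (ind2 d K K'))
    + 1 / √2 * ((√(hv d n x K') - √(hv d n x K)) / √(hv d n x K + hv d n x K') *
      Na d n x (ind2 d K K'))
    + 1 / 2 * ((hv d n x K - hv d n x K') * Ea d n x (ind2 d K K'))

lemma pieceT_swap (K K' : CubeIdx d) : pieceT d n x K' K = - pieceT d n x K K' := by
  unfold pieceT
  rw [ind2_comm K' K, add_comm (hv d n x K') (hv d n x K)]
  ring

lemma pieceH_swap (K K' : CubeIdx d) : pieceH d n x K' K = pieceH d n x K K' := by
  unfold pieceH
  rw [ind2_comm K' K]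
  ring

lemma histEst_mul_indC {Ω : Type*} {X : ℕ → Ω → Fin d → ℝ} {ω : Ω} {ℓ : ℕ}
    {m : Finset (CubeIdx d)} (hm : GoodP d ℓ m) {K : CubeIdx d} (hK : K ∈ m) (p) :
    histEst d n X m ω p * indC d K p = hv d n (fun i => X i ω) K * indC d K p := by
  unfold histEst
  rw [Finset.sum_mul, Finset.sum_eq_single_of_mem K hK]
  · rw [mul_assoc]
    congr 1
    rcases indC_zero_or_one K p with h | h <;> simp [h]
  · intro K' hK' hne
    rw [mul_assoc, indC_disj hm hK' hK hne, mul_zero]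

variable {Ω : Type*} {X : ℕ → Ω → Fin d → ℝ} {ω : Ω} {ℓ : ℕ} {m m' : Finset (CubeIdx d)}

lemma restr2_left (hm : GoodP d ℓ m) {K : CubeIdx d} (hK : K ∈ m) (K' : CubeIdx d) :
    restr2 d (histEst d n X m ω) K K' = fun p => hv d n (fun i => X i ω) K * ind2 d K K' p := by
  funext p
  unfold restr2 ind2
  rw [histEst_mul_indC hm hK, mul_assoc]

lemma restr2_right (hm : GoodP d ℓ m) {K : CubeIdx d} (hK : K ∈ m) (K' : CubeIdx d) :
    restr2 d (histEst d n X m ω) K' K = fun p => hv d n (fun i => X i ω) K * ind2 d K' K p := by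
  rw [ind2_comm, ← restr2_left hm hK]
  funext p
  unfold restr2
  ring

lemma hellSq_piece (hm : GoodP d ℓ m) (hm' : GoodP d ℓ m') {K K' : CubeIdx d} (hK : K ∈ m)
    (hK' : K' ∈ m') :
    hellSq d n X ω (restr2 d (histEst d n X m ω) K K') (restr2 d (histEst d n X m' ω) K K')
      = pieceH d n (fun i => X i ω) K K' := by
  rw [restr2_left hm hK, restr2_right hm' hK']
  unfold hellSq pieceH
  rw [← Ea_const_mul]
  unfold Ea
  rw [← mul_assoc, one_div_mul_one_div]
  congr 1
  refine Finset.sum_congr rfl fun i _ => ?_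
  congr 1
  funext y
  rcases ind2_zero_or_one K K' (X i ω, y) with h | h <;> simp [h]

lemma Tstat_piece (hm : GoodP d ℓ m) (hm' : GoodP d ℓ m') {K K' : CubeIdx d} (hK : K ∈ m)
    (hK' : K' ∈ m') :
    Tstat d n X ω (restr2 d (histEst d n X m ω) K K') (restr2 d (histEst d n X m' ω) K K')
      = pieceT d n (fun i => X i ω) K K' := by
  rw [restr2_left hm hK, restr2_right hm' hK']
  have e1 : ∀ z, ∫ y, √(hv d n (fun i => X i ω) K * ind2 d K K' (z, y)
        + hv d n (fun i => X i ω) K' * ind2 d K K' (z, y)) *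
        (√(hv d n (fun i => X i ω) K' * ind2 d K K' (z, y))
          - √(hv d n (fun i => X i ω) K * ind2 d K K' (z, y)))
      = √(hv d n (fun i => X i ω) K + hv d n (fun i => X i ω) K') *
        (√(hv d n (fun i => X i ω) K') - √(hv d n (fun i => X i ω) K)) *
        ∫ y, ind2 d K K' (z, y) := fun z => by
    rw [← integral_const_mul]
    congr 1
    funext y
    rcases ind2_zero_or_one K K' (z, y) with h | h <;> simp [h]
  have e2 : ∀ z y, (√(hv d n (fun i => X i ω) K' * ind2 d K K' (z, y))
          - √(hv d n (fun i => X i ω) K * ind2 d K K' (z, y))) /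
        √(hv d n (fun i => X i ω) K * ind2 d K K' (z, y)
          + hv d n (fun i => X i ω) K' * ind2 d K K' (z, y))
      = (√(hv d n (fun i => X i ω) K') - √(hv d n (fun i => X i ω) K)) /
        √(hv d n (fun i => X i ω) K + hv d n (fun i => X i ω) K') * ind2 d K K' (z, y) :=
    fun z y => by rcases ind2_zero_or_one K K' (z, y) with h | h <;> simp [h]
  have e3 : ∀ z, ∫ y, (hv d n (fun i => X i ω) K * ind2 d K K' (z, y)
        - hv d n (fun i => X i ω) K' * ind2 d K K' (z, y))
      = (hv d n (fun i => X i ω) K - hv d n (fun i => X i ω) K') *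
        ∫ y, ind2 d K K' (z, y) := fun z => by
    rw [← integral_const_mul]
    congr 1
    funext y
    ring
  unfold Tstat pieceT Ea Na
  simp only [e1, e2, e3, ← Finset.mul_sum]
  ring

end Pieces


/-! ### Oracle inequality for the empirical loss -/

section Hist
variable {d n ℓ ℓ' : ℕ} {x : ℕ → Fin d → ℝ} {m m' : Finset (CubeIdx d)} {a a' : CubeIdx d → ℝ}

lemma hist_at (hm : GoodP d ℓ m) {K : CubeIdx d} (hK : K ∈ m) {p} (hp : indC d K p = 1) :
    ∑ K ∈ m, a K * indC d K p = a K := by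
  rw [Finset.sum_eq_single_of_mem K hK]
  · rw [hp, mul_one]
  · intro K' hK' hne
    have := indC_disj hm hK' hK hne p
    rw [hp, mul_one] at this
    rw [this, mul_zero]

lemma hist_off (hm : GoodP d ℓ m) {p} (hp : p ∉ unitSq d) :
    ∑ K ∈ m, a K * indC d K p = 0 :=
  Finset.sum_eq_zero fun K hK => by rw [indC_le_unit (hm.valid K hK) hp, mul_zero]

/-- Two histograms differ by constants on the cells of the common refinement. -/
lemma hist_diff (hm : GoodP d ℓ m) (hm' : GoodP d ℓ' m') (p) :
    (√(∑ K ∈ m, a K * indC d K p) - √(∑ K ∈ m', a' K * indC d K p)) ^ 2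
      = ∑ K ∈ m, ∑ K' ∈ m', (√(a K) - √(a' K')) ^ 2 * ind2 d K K' p := by
  by_cases hp : p ∈ unitSq d
  · have h1 := sum_indC hm p
    have h2 := sum_indC hm' p
    rw [Set.indicator_of_mem hp, Pi.one_apply] at h1 h2
    calc _ = (∑ K ∈ m, indC d K p) * (∑ K ∈ m', indC d K p) *
          (√(∑ K ∈ m, a K * indC d K p) - √(∑ K ∈ m', a' K * indC d K p)) ^ 2 := by
            rw [h1, h2]; ring
      _ = _ := by
        rw [Finset.sum_mul_sum, Finset.sum_mul]
        refine Finset.sum_congr rfl fun K hK => ?_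
        rw [Finset.sum_mul]
        refine Finset.sum_congr rfl fun K' hK' => ?_
        unfold ind2
        rcases indC_zero_or_one K p with h | h
        · simp [h]
        rcases indC_zero_or_one K' p with h' | h'
        · simp [h']
        rw [hist_at hm hK h, hist_at hm' hK' h', h, h']
        ring
  · rw [hist_off hm hp, hist_off hm' hp, sub_self]
    symm
    rw [zero_pow two_ne_zero]
    refine Finset.sum_eq_zero fun K hK => Finset.sum_eq_zero fun K' hK' => ?_
    rw [ind2, indC_le_unit (hm.valid K hK) hp, zero_mul, mul_zero]

lemma IntA_hist_diff (hm : GoodP d ℓ m) (hm' : GoodP d ℓ' m') :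
    IntA d (fun p =>
      (√(∑ K ∈ m, a K * indC d K p) - √(∑ K ∈ m', a' K * indC d K p)) ^ 2) := fun z => by
  simp only [hist_diff hm hm']
  exact integrable_finsetSum _ fun K _ => integrable_finsetSum _ fun K' _ =>
    (IntA_ind2 K K' z).const_mul _

lemma Ea_hist_diff (hm : GoodP d ℓ m) (hm' : GoodP d ℓ' m') :
    Ea d n x (fun p =>
      (√(∑ K ∈ m, a K * indC d K p) - √(∑ K ∈ m', a' K * indC d K p)) ^ 2)
      = ∑ K ∈ m, ∑ K' ∈ m', (√(a K) - √(a' K')) ^ 2 * Ea d n x (ind2 d K K') := by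
  simp only [hist_diff hm hm']
  rw [Ea_sum _ (fun K p => ∑ K' ∈ m', (√(a K) - √(a' K')) ^ 2 * ind2 d K K' p)]
  · refine Finset.sum_congr rfl fun K _ => ?_
    rw [Ea_sum _ (fun K' p => (√(a K) - √(a' K')) ^ 2 * ind2 d K K' p)]
    · exact Finset.sum_congr rfl fun K' _ => Ea_const_mul _
    · exact fun K' _ z => (IntA_ind2 K K' z).const_mul _
  · exact fun K _ z => integrable_finsetSum _ fun K' _ => (IntA_ind2 K K' z).const_mul _

lemma Ea_hist_diff_same (hm : GoodP d ℓ m) :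
    Ea d n x (fun p =>
      (√(∑ K ∈ m, a K * indC d K p) - √(∑ K ∈ m, a' K * indC d K p)) ^ 2)
      = ∑ K ∈ m, (√(a K) - √(a' K)) ^ 2 * Ea d n x (indC d K) := by
  rw [Ea_hist_diff hm hm]
  refine Finset.sum_congr rfl fun K hK => ?_
  rw [Finset.sum_eq_single_of_mem K hK]
  · congr 2
    funext p
    rcases indC_zero_or_one K p with h | h <;> simp [ind2, h]
  · intro K' hK' hne
    have : ind2 d K K' = fun p => 0 * ind2 d K K' p :=
      funext fun p => by rw [zero_mul, ind2, indC_disj hm hK hK' hne.symm]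
    rw [this, Ea_const_mul, zero_mul, mul_zero]

end Hist

/-- The hypotheses on the transition density that the deterministic analysis uses. -/
structure DensOK (d : ℕ) (s : (Fin d → ℝ) → (Fin d → ℝ) → ℝ) : Prop where
  meas : Measurable (Function.uncurry s)
  nonneg : ∀ x y, 0 ≤ s x y
  int : ∀ x, Integrable (s x)

section Oracle
variable {d n ℓ : ℕ} {x : ℕ → Fin d → ℝ} {s : (Fin d → ℝ) → (Fin d → ℝ) → ℝ}

/-- The empirical squared Hellinger distance, on the weight `b`, between `s` and the
constant `t`. -/
def Wt (d n : ℕ) (x : ℕ → Fin d → ℝ) (s : (Fin d → ℝ) → (Fin d → ℝ) → ℝ)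
    (b : (Fin d → ℝ) × (Fin d → ℝ) → ℝ) (t : ℝ) : ℝ :=
  Ea d n x (fun p => b p * (√(s p.1 p.2) - √t) ^ 2)

lemma IntA_Wt (hs : DensOK d s) {b : (Fin d → ℝ) × (Fin d → ℝ) → ℝ} (hb : IntA d b)
    (hb0 : ∀ p, 0 ≤ b p) (hb1 : ∀ p, b p ≤ 1) (hbm : Measurable b) (t : ℝ) :
    IntA d (fun p => b p * (√(s p.1 p.2) - √t) ^ 2) := by
  obtain ⟨h1, h2⟩ := IntA_weight hb hb0 hb1 hbm hs.meas hs.nonneg hs.int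
  exact (Ea_weight_expand (n := 1) (x := fun _ => 0) hb hs.nonneg h1 h2 _).1

lemma ind2_le_one {d : ℕ} (K K' : CubeIdx d) (p) : ind2 d K K' p ≤ 1 := by
  rcases ind2_zero_or_one K K' p with h | h <;> simp [h]

lemma sum_Wt_ind2 (hs : DensOK d s) {m' : Finset (CubeIdx d)} (hm' : GoodP d ℓ m')
    {K : CubeIdx d} (hK : ValidC d K) (t : ℝ) :
    ∑ K' ∈ m', Wt d n x s (ind2 d K K') t = Wt d n x s (indC d K) t := by
  unfold Wt
  rw [← Ea_sum _ (fun K' p => ind2 d K K' p * (√(s p.1 p.2) - √t) ^ 2)]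
  · congr 1
    funext p
    rw [← Finset.sum_mul]
    unfold ind2
    rw [← Finset.mul_sum, sum_indC hm']
    by_cases hp : p ∈ unitSq d
    · rw [Set.indicator_of_mem hp, Pi.one_apply, mul_one]
    · rw [indC_le_unit hK hp, zero_mul]
  · exact fun K' _ => IntA_Wt hs (IntA_ind2 _ _) (ind2_nonneg _ _) (ind2_le_one _ _)
      (measurable_ind2 _ _) _

/-- The event on which, on every dyadic cube of level at most `ℓ`, the square roots of the
empirical and of the predictable frequencies differ by at most `τ`. -/
def Dev (d n ℓ : ℕ) (x : ℕ → Fin d → ℝ) (s : (Fin d → ℝ) → (Fin d → ℝ) → ℝ) (τ : ℝ) : Prop :=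
  ∀ R ∈ allC d ℓ, |√(Na d n x (indC d R)) - √(Ea d n x (fun p => indC d R p * s p.1 p.2))| ≤ τ

variable {τ : ℝ}

lemma mass_le_Wt (hs : DensOK d s) (R : CubeIdx d) (t : ℝ) :
    (√(Ea d n x (fun p => indC d R p * s p.1 p.2)) - √t * √(Ea d n x (indC d R))) ^ 2
      ≤ Wt d n x s (indC d R) t := by
  obtain ⟨h1, h2⟩ := IntA_weight (IntA_indC R) (indC_nonneg R) (indC_le_one R) (measurable_indC R)
    hs.meas hs.nonneg hs.int
  exact mass_le_weight (IntA_indC R) (indC_nonneg R) hs.nonneg h1 h2 (Real.sqrt_nonneg t)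

/-- On the deviation event, the local test between two histogram values is controlled by the
bias of the first one. -/
lemma pair_bound (hn : 0 < n) (hs : DensOK d s) (hτ : 0 ≤ τ) (hdev : Dev d n ℓ x s τ)
    {K K' : CubeIdx d} (hK : K ∈ allC d ℓ) (hK' : K' ∈ allC d ℓ) :
    alphaC * pieceH d n x K K' + pieceT d n x K K'
      ≤ 2 * Wt d n x s (ind2 d K K') (hv d n x K)
        + if (cubeSet d K' ∩ cubeSet d K).Nonempty then 72 * τ ^ 2 else 0 := by
  rcases indC_mul_cases (mem_allC.1 hK).2 (mem_allC.1 hK').2 with ⟨h1, h2⟩ | ⟨h1, R, hR, h2⟩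
  · rw [if_neg h1]
    have e0 : ind2 d K K' = fun _ => 0 := funext h2
    have e1 : Ea d n x (ind2 d K K') = 0 := by rw [e0]; simp [Ea]
    have e2 : Na d n x (ind2 d K K') = 0 := by rw [e0]; simp [Na]
    have e3 : 0 ≤ Wt d n x s (ind2 d K K') (hv d n x K) :=
      Ea_nonneg fun p => mul_nonneg (ind2_nonneg _ _ _) (sq_nonneg _)
    unfold pieceH pieceT
    rw [e1, e2]
    linarith
  · rw [if_pos h1]
    have e0 : ind2 d K K' = indC d R := funext h2
    have hRm : R ∈ allC d ℓ := by rcases hR with h | h <;> rwa [h]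
    unfold pieceH pieceT
    rw [e0]
    have := piece_bound (A := Ea d n x (indC d R)) (N := Na d n x (indC d R))
      (v := Ea d n x (fun p => indC d R p * s p.1 p.2)) (Ea_nonneg (indC_nonneg R))
      (Na_nonneg (indC_nonneg R)) (hv_nonneg (n := n) (x := x) K) (hv_nonneg (n := n) (x := x) K')
      hτ (Na_zero_of_Ea_zero hn R) (hdev R hRm)
    have h3 := mass_le_Wt (n := n) (x := x) hs R (hv d n x K)
    linarith

lemma sqrt_hv_mul (hn : 0 < n) (K : CubeIdx d) :
    √(hv d n x K) * √(Ea d n x (indC d K)) = √(Na d n x (indC d K)) := by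
  rw [← Real.sqrt_mul (hv_nonneg K), hv_mul_Ea hn]

/-- On the deviation event, the local histogram value is as close to any constant as the
bias of this constant allows. -/
lemma hv_close (hn : 0 < n) (hs : DensOK d s) (hdev : Dev d n ℓ x s τ)
    {K : CubeIdx d} (hK : K ∈ allC d ℓ) (t : ℝ) :
    (√t - √(hv d n x K)) ^ 2 * Ea d n x (indC d K)
      ≤ 2 * Wt d n x s (indC d K) t + 2 * τ ^ 2 := by
  have hA : 0 ≤ Ea d n x (indC d K) := Ea_nonneg (indC_nonneg K)
  have h1 := mass_le_Wt (n := n) (x := x) hs K t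
  have h2 := sq_le_sq' (neg_le_of_abs_le (hdev K hK)) (le_of_abs_le (hdev K hK))
  have h3 : (√t - √(hv d n x K)) ^ 2 * Ea d n x (indC d K)
      = (√t * √(Ea d n x (indC d K)) - √(Na d n x (indC d K))) ^ 2 := by
    rw [← sqrt_hv_mul hn, ← sub_mul, mul_pow, Real.sq_sqrt hA]
  rw [h3]
  set u := √t * √(Ea d n x (indC d K))
  set w := √(Na d n x (indC d K))
  set v := √(Ea d n x (fun p => indC d K p * s p.1 p.2))
  nlinarith [sq_nonneg ((u - v) - (v - w))]

lemma Wt_hv_le (hn : 0 < n) (hs : DensOK d s) (hdev : Dev d n ℓ x s τ)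
    {K : CubeIdx d} (hK : K ∈ allC d ℓ) (t : ℝ) :
    Wt d n x s (indC d K) (hv d n x K) ≤ 6 * Wt d n x s (indC d K) t + 4 * τ ^ 2 := by
  have hW := fun t => IntA_Wt hs (IntA_indC K) (indC_nonneg K) (indC_le_one K) (measurable_indC K) t
  have h1 : Wt d n x s (indC d K) (hv d n x K)
      ≤ Ea d n x (fun p => 2 * (indC d K p * (√(s p.1 p.2) - √t) ^ 2)
        + 2 * (√t - √(hv d n x K)) ^ 2 * indC d K p) := by
    refine Ea_mono (hW _) (fun z => ((hW t z).const_mul _).add ((IntA_indC K z).const_mul _))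
      fun p => ?_
    nlinarith [mul_nonneg (indC_nonneg K p)
      (sq_nonneg ((√(s p.1 p.2) - √t) - (√t - √(hv d n x K))))]
  rw [Ea_add (fun z => (hW t z).const_mul _) (fun z => (IntA_indC K z).const_mul _),
    Ea_const_mul, Ea_const_mul] at h1
  have h2 := hv_close hn hs hdev hK t
  unfold Wt at h2 ⊢
  unfold Wt at h1
  linarith

lemma penC_eq (L : ℝ) (n c : ℕ) : penC L n c = c * penC L n 1 := by
  unfold penC
  push_cast
  ring

/-- The criterion comparing `ŝ_m` with `ŝ_{m'}` on the cube `K ∈ m` is controlled by the bias on `K` of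
any constant `t`, up to the deviation term and the penalty. -/
lemma crit_le (hn : 0 < n) (hs : DensOK d s) (hτ : 0 ≤ τ) (hdev : Dev d n ℓ x s τ)
    {m' : Finset (CubeIdx d)} (hm' : GoodP d ℓ m') {K : CubeIdx d} (hK : K ∈ allC d ℓ) {L : ℝ}
    (hπ : 72 * τ ^ 2 ≤ penC L n 1) (t : ℝ) :
    ∑ K' ∈ m', (alphaC * pieceH d n x K K' + pieceT d n x K K')
      ≤ 12 * Wt d n x s (indC d K) t + 8 * τ ^ 2 + penC L n (veeCard d m' K) := by
  have h1 := Finset.sum_le_sum fun K' (hK' : K' ∈ m') =>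
    pair_bound hn hs hτ hdev hK (hm'.subset hK')
  rw [Finset.sum_add_distrib (g := fun K' =>
      if (cubeSet d K' ∩ cubeSet d K).Nonempty then 72 * τ ^ 2 else 0),
    ← Finset.mul_sum, sum_Wt_ind2 hs hm' (mem_allC.1 hK).2, ← Finset.sum_filter,
    Finset.sum_const, nsmul_eq_mul, ← veeCard_eq hm'] at h1
  have h2 := Wt_hv_le hn hs hdev hK t
  rw [penC_eq]
  have h3 : (veeCard d m' K : ℝ) * (72 * τ ^ 2) ≤ veeCard d m' K * penC L n 1 := by gcongr
  linarith

variable {Ω : Type*} {X : ℕ → Ω → Fin d → ℝ} {ω : Ω}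

/-- The part of the criterion `γ(m)` that compares `m` with `m'` on the cube `K`. -/
def critK (d n : ℕ) (x : ℕ → Fin d → ℝ) (L : ℝ) (m' : Finset (CubeIdx d)) (K : CubeIdx d) : ℝ :=
  ∑ K' ∈ m', (alphaC * pieceH d n x K K' + pieceT d n x K K') - penC L n (veeCard d m' K)

lemma MpartE_coe (d ℓ : ℕ) : MpartE d (ℓ : ℕ∞) = Mpart d ℓ := by
  unfold MpartE
  rw [if_neg (ENat.natCast_ne_top ℓ), ENat.toNat_natCast]

lemma gammaSel_eq {L : ℝ} {m : Finset (CubeIdx d)} (hm : m ∈ Mpart d ℓ) :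
    gammaSel d n X L (ℓ : ℕ∞) ω m
      = (∑ K ∈ m, ⨆ m' : Mpart d ℓ, critK d n (fun i => X i ω) L m' K)
        + 2 * penC L n m.card := by
  unfold gammaSel critK
  rw [MpartE_coe]
  congr 1
  refine Finset.sum_congr rfl fun K hK => ?_
  congr 1
  funext m'
  congr 1
  refine Finset.sum_congr rfl fun K' hK' => ?_
  have h1 := GoodP.of_mem hm
  have h2 := GoodP.of_mem m'.2
  rw [hellSq_piece h1 h2 hK hK', Tstat_piece h1 h2 hK hK']

lemma bdd_finite {ι : Type*} [Finite ι] (f : ι → ℝ) : BddAbove (Set.range f) ∧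
    BddBelow (Set.range f) :=
  ⟨(Set.finite_range f).bddAbove, (Set.finite_range f).bddBelow⟩

lemma alphaC_bound : (0.1464 : ℝ) ≤ alphaC := by
  have := inv_sqrt_two_bounds.2
  unfold alphaC
  linarith

/-- On the deviation event, the selected histogram is close to every histogram of the collection
up to the bias of the latter and its penalty. -/
lemma oracle_det (hn : 0 < n) (hs : DensOK d s) (hτ : 0 ≤ τ)
    (hdev : Dev d n ℓ (fun i => X i ω) s τ) {L : ℝ} (hπ : 72 * τ ^ 2 ≤ penC L n 1)
    (hπ' : 1 / (n : ℝ) ≤ penC L n 1)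
    {m mh : Finset (CubeIdx d)} (hm : m ∈ Mpart d ℓ) (hmh : mh ∈ Mpart d ℓ)
    (hsel : gammaSel d n X L (ℓ : ℕ∞) ω mh
      ≤ (⨅ m : Mpart d ℓ, gammaSel d n X L (ℓ : ℕ∞) ω (m : Finset (CubeIdx d))) + 1 / n)
    (a : CubeIdx d → ℝ) :
    Ea d n (fun i => X i ω) (fun p =>
        (√(∑ K ∈ m, a K * indC d K p) - √(histEst d n X mh ω p)) ^ 2)
      ≤ 348 * (∑ K ∈ m, Wt d n (fun i => X i ω) s (indC d K) (a K))
        + 102 * penC L n m.card := by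
  set x : ℕ → Fin d → ℝ := fun i => X i ω with hx
  have gm := GoodP.of_mem hm
  have gmh := GoodP.of_mem hmh
  have : Finite (Mpart d ℓ) := (Mpart_finite d ℓ).to_subtype
  have : Nonempty (Mpart d ℓ) := ⟨⟨m, hm⟩⟩
  set h := ∑ K ∈ m, Wt d n x s (indC d K) (a K) with hh
  set ϖ := penC L n 1 with hpi
  set M : ℝ := (m.card : ℝ) with hM
  set D := ∑ K ∈ m, ∑ K' ∈ mh, pieceH d n x K K' with hD
  have hh0 : 0 ≤ h := Finset.sum_nonneg fun K _ =>
    Ea_nonneg fun p => mul_nonneg (indC_nonneg _ _) (sq_nonneg _)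
  have hD0 : 0 ≤ D := Finset.sum_nonneg fun K _ => Finset.sum_nonneg fun K' _ => by
    have : 0 ≤ Ea d n x (ind2 d K K') := Ea_nonneg (ind2_nonneg _ _)
    unfold pieceH
    positivity
  have hM1 : 1 ≤ M := by
    obtain ⟨K, hK, -⟩ := gm.cover (fun _ => 0) (fun _ => by simp)
    rw [hM]
    exact_mod_cast Finset.card_pos.2 ⟨K, hK⟩
  have hcard : ∑ K ∈ m, (12 * Wt d n x s (indC d K) (a K) + 8 * τ ^ 2)
      = 12 * h + M * (8 * τ ^ 2) := by
    rw [Finset.sum_add_distrib, ← Finset.mul_sum, Finset.sum_const, nsmul_eq_mul]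
  -- upper bound for the criterion at `m`
  have hup : gammaSel d n X L (ℓ : ℕ∞) ω m ≤ 12 * h + M * (8 * τ ^ 2) + 2 * (M * ϖ) := by
    rw [gammaSel_eq hm, penC_eq, ← hcard]
    gcongr with K hK
    refine ciSup_le fun m' => ?_
    have := crit_le hn hs hτ hdev (GoodP.of_mem m'.2) (gm.subset hK) hπ (a K)
    unfold critK
    linarith
  -- lower bound for the criterion at `mh`, by comparison with `m`
  have hlow : 2 * alphaC * D - (12 * h + M * (8 * τ ^ 2)) - 2 * (M * ϖ)
      ≤ gammaSel d n X L (ℓ : ℕ∞) ω mh := by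
    rw [gammaSel_eq hmh, penC_eq]
    have h1 : ∑ K ∈ mh, critK d n x L m K
        ≤ ∑ K ∈ mh, ⨆ m' : Mpart d ℓ, critK d n x L m' K :=
      Finset.sum_le_sum fun K _ =>
        le_ciSup (f := fun m' : Mpart d ℓ => critK d n x L m' K) (bdd_finite _).1 ⟨m, hm⟩
    have h2 : ∑ K ∈ mh, critK d n x L m K
        = (2 * alphaC * D - ∑ K ∈ m, ∑ K' ∈ mh,
            (alphaC * pieceH d n x K K' + pieceT d n x K K'))
          - (∑ K ∈ mh, (veeCard d m K : ℝ)) * ϖ := by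
      unfold critK
      rw [Finset.sum_sub_distrib, Finset.sum_comm, hD, Finset.mul_sum, ← Finset.sum_sub_distrib,
        Finset.sum_mul]
      congr 1
      · refine Finset.sum_congr rfl fun K _ => ?_
        rw [Finset.mul_sum, ← Finset.sum_sub_distrib]
        refine Finset.sum_congr rfl fun K' _ => ?_
        rw [pieceH_swap, pieceT_swap K K']
        ring
      · exact Finset.sum_congr rfl fun K _ => penC_eq _ _ _
    have h3 : ∑ K ∈ m, ∑ K' ∈ mh, (alphaC * pieceH d n x K K' + pieceT d n x K K')
        ≤ 12 * h + M * (8 * τ ^ 2) + (∑ K ∈ m, (veeCard d mh K : ℝ)) * ϖ := by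
      rw [← hcard, Finset.sum_mul, ← Finset.sum_add_distrib]
      refine Finset.sum_le_sum fun K hK => ?_
      rw [← penC_eq]
      exact crit_le hn hs hτ hdev gmh (gm.subset hK) hπ (a K)
    have hπ0 : 0 ≤ ϖ := le_trans (by positivity) hπ'
    have h4 : (∑ K ∈ m, (veeCard d mh K : ℝ)) ≤ M + mh.card := by
      have := card_pairs_le gm gmh
      simp only [← veeCard_eq gmh] at this
      rw [hM]
      exact_mod_cast this
    have h5 : (∑ K ∈ mh, (veeCard d m K : ℝ)) ≤ M + mh.card := by
      have := card_pairs_le gmh gm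
      simp only [← veeCard_eq gm] at this
      rw [add_comm] at this
      rw [hM]
      exact_mod_cast this
    have h6 := mul_le_mul_of_nonneg_right h4 hπ0
    have h7 := mul_le_mul_of_nonneg_right h5 hπ0
    linarith
  have hsel' : gammaSel d n X L (ℓ : ℕ∞) ω mh ≤ gammaSel d n X L (ℓ : ℕ∞) ω m + 1 / n :=
    hsel.trans (by
      gcongr
      exact ciInf_le (f := fun m : Mpart d ℓ => gammaSel d n X L (ℓ : ℕ∞) ω
        (m : Finset (CubeIdx d))) (bdd_finite _).2 ⟨m, hm⟩)
  have hMπ : M * (72 * τ ^ 2) ≤ M * ϖ := by gcongr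
  have hMπ' : ϖ ≤ M * ϖ := le_mul_of_one_le_left (le_trans (by positivity) hπ') hM1
  have hDle : 2 * D ≤ 164 * h + 36 * (M * ϖ) := by
    nlinarith [mul_le_mul_of_nonneg_right alphaC_bound hD0]
  -- triangle inequality through the histogram on `m`
  have hQ1 : ∑ K ∈ m, (√(a K) - √(hv d n x K)) ^ 2 * Ea d n x (indC d K)
      ≤ 2 * h + M * (2 * τ ^ 2) := by
    rw [hh, Finset.mul_sum, hM, ← nsmul_eq_mul, ← Finset.sum_const, ← Finset.sum_add_distrib]
    exact Finset.sum_le_sum fun K hK => hv_close hn hs hdev (gm.subset hK) (a K)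
  have hQ2 : ∑ K ∈ m, ∑ K' ∈ mh, (√(hv d n x K) - √(hv d n x K')) ^ 2 * Ea d n x (ind2 d K K')
      = 2 * D := by
    rw [hD, Finset.mul_sum]
    refine Finset.sum_congr rfl fun K _ => ?_
    rw [Finset.mul_sum]
    refine Finset.sum_congr rfl fun K' _ => ?_
    unfold pieceH
    ring
  rw [← Ea_hist_diff_same gm (a' := hv d n x)] at hQ1
  rw [← Ea_hist_diff gm gmh] at hQ2
  have i1 := IntA_hist_diff (a := a) (a' := hv d n x) gm gm
  have i2 := IntA_hist_diff (a := hv d n x) (a' := hv d n x) gm gmh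
  have hQ : Ea d n x (fun p => (√(∑ K ∈ m, a K * indC d K p)
        - √(∑ K ∈ mh, hv d n x K * indC d K p)) ^ 2)
      ≤ Ea d n x (fun p => 2 * (√(∑ K ∈ m, a K * indC d K p)
          - √(∑ K ∈ m, hv d n x K * indC d K p)) ^ 2 + 2 * (√(∑ K ∈ m, hv d n x K * indC d K p)
          - √(∑ K ∈ mh, hv d n x K * indC d K p)) ^ 2) := by
    refine Ea_mono (IntA_hist_diff gm gmh)
      (fun z => ((i1 z).const_mul 2).add ((i2 z).const_mul 2)) fun p => ?_
    set u := √(∑ K ∈ m, a K * indC d K p)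
    set v := √(∑ K ∈ m, hv d n x K * indC d K p)
    set w := √(∑ K ∈ mh, hv d n x K * indC d K p)
    nlinarith [sq_nonneg ((u - v) - (v - w))]
  rw [penC_eq L n m.card]
  rw [Ea_add (fun z => (i1 z).const_mul 2) (fun z => (i2 z).const_mul 2), Ea_const_mul,
    Ea_const_mul, hQ2] at hQ
  have hfin : Ea d n x (fun p =>
      (√(∑ K ∈ m, a K * indC d K p) - √(histEst d n X mh ω p)) ^ 2)
      ≤ 2 * (2 * h + M * (2 * τ ^ 2)) + 2 * (164 * h + 36 * (M * ϖ)) :=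
    hQ.trans (by linarith)
  have : 0 ≤ M * (τ ^ 2) := by positivity
  linarith

end Oracle


/-! ### The Markov property and its iterates -/

/-- The standing assumptions on the chain: Markov property with transition density `s`, and
stationarity with density `φ`. -/
structure ChainOK (d : ℕ) {Ω : Type} [MeasurableSpace Ω] (P : Measure Ω)
    (X : ℕ → Ω → (Fin d → ℝ)) (s : (Fin d → ℝ) → (Fin d → ℝ) → ℝ)
    (φ : (Fin d → ℝ) → ℝ) : Prop where
  prob : IsProbabilityMeasure P
  measX : ∀ i, Measurable (X i)
  dens : DensOK d s
  one : ∀ x, ∫ y, s x y = 1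
  markov : ∀ i, ∀ g : (Fin d → ℝ) → ℝ, Measurable g → (∃ c, ∀ x, |g x| ≤ c) →
    P[(fun ω => g (X (i + 1) ω)) |
        ⨆ k ∈ Finset.range (i + 1), MeasurableSpace.comap (X k) inferInstance]
      =ᵐ[P] fun ω => ∫ y, g y * s (X i ω) y
  measφ : Measurable φ
  nonnegφ : ∀ x, 0 ≤ φ x
  stat : ∀ i : ℕ, Measure.map (X i) P = volume.withDensity fun x => ENNReal.ofReal (φ x)

/-- The σ-algebra generated by `X_0, …, X_i`. -/
abbrev Past (d : ℕ) {Ω : Type} (X : ℕ → Ω → (Fin d → ℝ)) (i : ℕ) : MeasurableSpace Ω :=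
  ⨆ k ∈ Finset.range (i + 1), MeasurableSpace.comap (X k) inferInstance

lemma Past_mono {d : ℕ} {Ω : Type} {X : ℕ → Ω → (Fin d → ℝ)} {i j : ℕ} (h : i ≤ j) :
    Past d X i ≤ Past d X j := by
  refine biSup_mono fun k hk => ?_
  rw [Finset.mem_range] at hk ⊢
  omega

lemma measurable_Past {d : ℕ} {Ω : Type} {X : ℕ → Ω → (Fin d → ℝ)} {i k : ℕ} (h : k ≤ i) :
    Measurable[Past d X i] (X k) := by
  have h1 : MeasurableSpace.comap (X k) inferInstance ≤ Past d X i :=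
    le_iSup₂_of_le k (Finset.mem_range.2 (by omega)) le_rfl
  exact (comap_measurable (X k)).mono h1 le_rfl

section Chain
variable {d : ℕ} {Ω : Type} [mΩ : MeasurableSpace Ω] {P : Measure Ω}
  {X : ℕ → Ω → (Fin d → ℝ)} {s : (Fin d → ℝ) → (Fin d → ℝ) → ℝ} {φ : (Fin d → ℝ) → ℝ}

lemma Past_le (hX : ∀ i, Measurable (X i)) (i : ℕ) : Past d X i ≤ mΩ :=
  iSup₂_le fun k _ => (hX k).comap_le

/-- A kernel density: nonnegative, jointly measurable, with total mass one. -/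
structure KerOK (d : ℕ) (r : (Fin d → ℝ) → (Fin d → ℝ) → ℝ) : Prop where
  meas : Measurable (Function.uncurry r)
  nonneg : ∀ x y, 0 ≤ r x y
  one : ∀ x, ∫ y, r x y = 1

lemma ChainOK.ker (h : ChainOK d P X s φ) : KerOK d s := ⟨h.dens.meas, h.dens.nonneg, h.one⟩

lemma KerOK.int {r : (Fin d → ℝ) → (Fin d → ℝ) → ℝ} (h : KerOK d r) (x) : Integrable (r x) := by
  by_contra hn
  have := h.one x
  rw [integral_undef hn] at this
  exact zero_ne_one this

lemma KerOK.int_mul {r : (Fin d → ℝ) → (Fin d → ℝ) → ℝ} (h : KerOK d r) {g : (Fin d → ℝ) → ℝ}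
    (hg : Measurable g) {c : ℝ} (hc : ∀ x, |g x| ≤ c) (x) : Integrable fun y => g y * r x y :=
  (h.int x).bdd_mul (c := c) hg.aestronglyMeasurable (Filter.Eventually.of_forall hc)

lemma KerOK.abs_le {r : (Fin d → ℝ) → (Fin d → ℝ) → ℝ} (h : KerOK d r) {g : (Fin d → ℝ) → ℝ}
    (hg : Measurable g) {c : ℝ} (hc : ∀ x, |g x| ≤ c) (x) : |∫ y, g y * r x y| ≤ c := by
  calc |∫ y, g y * r x y| ≤ ∫ y, |g y * r x y| := abs_integral_le_integral_abs
    _ ≤ ∫ y, c * r x y := by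
        refine integral_mono (h.int_mul hg hc x).abs ((h.int x).const_mul c) fun y => ?_
        simp only
        rw [abs_mul, abs_of_nonneg (h.nonneg x y)]
        exact mul_le_mul_of_nonneg_right (hc y) (h.nonneg x y)
    _ = c := by rw [integral_const_mul, h.one, mul_one]

lemma KerOK.meas_int {r : (Fin d → ℝ) → (Fin d → ℝ) → ℝ} (h : KerOK d r) {g : (Fin d → ℝ) → ℝ}
    (hg : Measurable g) : Measurable fun x => ∫ y, g y * r x y := by
  have : StronglyMeasurable fun p : (Fin d → ℝ) × (Fin d → ℝ) => g p.2 * r p.1 p.2 :=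
    ((hg.comp measurable_snd).mul h.meas).stronglyMeasurable
  exact this.integral_prod_right'.measurable

/-- Composition of two kernel densities. -/
lemma KerOK.comp_integral {r t u : (Fin d → ℝ) → (Fin d → ℝ) → ℝ} (hr : KerOK d r)
    (ht : KerOK d t) (hu : ∀ x y, u x y = ∫ z, r x z * t z y) {g : (Fin d → ℝ) → ℝ}
    (hg : Measurable g) {c : ℝ} (hc : ∀ x, |g x| ≤ c) (x) :
    ∫ z, (∫ y, g y * t z y) * r x z = ∫ y, g y * u x y := by
  have hm : Measurable fun p : (Fin d → ℝ) × (Fin d → ℝ) => g p.2 * t p.1 p.2 * r x p.1 :=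
    ((hg.comp measurable_snd).mul ht.meas).mul
      ((hr.meas.comp measurable_prodMk_left).comp measurable_fst)
  have hint : Integrable (fun p : (Fin d → ℝ) × (Fin d → ℝ) => g p.2 * t p.1 p.2 * r x p.1)
      (volume.prod volume) := by
    rw [integrable_prod_iff hm.aestronglyMeasurable]
    constructor
    · exact Filter.Eventually.of_forall fun z => (ht.int_mul hg hc z).mul_const (r x z)
    · have hc0 : 0 ≤ c := (abs_nonneg _).trans (hc 0)
      refine ((hr.int x).const_mul c).mono' hm.norm.stronglyMeasurable.integral_prod_right'.aestronglyMeasurable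
        (Filter.Eventually.of_forall fun z => ?_)
      rw [Real.norm_of_nonneg (integral_nonneg fun y => norm_nonneg _)]
      have : ∀ y, ‖g y * t z y * r x z‖ = |g y| * t z y * r x z := fun y => by
        rw [Real.norm_eq_abs, abs_mul, abs_mul, abs_of_nonneg (ht.nonneg z y),
          abs_of_nonneg (hr.nonneg x z)]
      simp only [this]
      rw [integral_mul_const]
      refine mul_le_mul_of_nonneg_right ?_ (hr.nonneg x z)
      have h2 := ht.abs_le hg.abs (c := c) (fun x => by rw [abs_abs]; exact hc x) z
      exact (le_abs_self _).trans h2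
  have h1 := integral_integral_swap (f := fun z y => g y * t z y * r x z) (μ := volume)
    (ν := volume) hint
  simp only [integral_mul_const] at h1
  rw [h1]
  congr 1
  funext y
  rw [hu, ← integral_const_mul]
  congr 1
  funext z
  ring

lemma KerOK.comp {r t u : (Fin d → ℝ) → (Fin d → ℝ) → ℝ} (hr : KerOK d r)
    (ht : KerOK d t) (hu : ∀ x y, u x y = ∫ z, r x z * t z y) : KerOK d u := by
  refine ⟨?_, fun x y => ?_, fun x => ?_⟩
  · have hm : StronglyMeasurable fun p : ((Fin d → ℝ) × (Fin d → ℝ)) × (Fin d → ℝ) =>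
        r p.1.1 p.2 * t p.2 p.1.2 :=
      ((hr.meas.comp (measurable_fst.fst.prodMk measurable_snd)).mul
        (ht.meas.comp (measurable_snd.prodMk measurable_fst.snd))).stronglyMeasurable
    have := (hm.integral_prod_right' (ν := (volume : Measure (Fin d → ℝ)))).measurable
    convert this using 1
    funext p
    exact hu p.1 p.2
  · rw [hu]
    exact integral_nonneg fun z => mul_nonneg (hr.nonneg _ _) (ht.nonneg _ _)
  · have := hr.comp_integral ht hu (g := fun _ => 1) measurable_const (c := 1) (by simp) x
    simp only [one_mul, ht.one] at this
    rw [← this, hr.one]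

lemma sIter_ker (hs : KerOK d s) {sIter : ℕ → (Fin d → ℝ) → (Fin d → ℝ) → ℝ}
    (h1 : sIter 1 = s) (h2 : ∀ q x y, sIter (q + 1) x y = ∫ z, sIter q x z * s z y)
    (q : ℕ) (hq : 1 ≤ q) : KerOK d (sIter q) := by
  induction q, hq using Nat.le_induction with
  | base => rwa [h1]
  | succ q _ ih => exact ih.comp hs (h2 q)

lemma integrable_bdd [IsProbabilityMeasure P] {W : Ω → ℝ} (hW : Measurable W) {c : ℝ}
    (hc : ∀ ω, |W ω| ≤ c) : Integrable W P :=
  Integrable.of_bound hW.aestronglyMeasurable c (Filter.Eventually.of_forall hc)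

/-- The Markov property, tested against a bounded function of the past. -/
lemma ChainOK.markov_int (h : ChainOK d P X s φ) {i : ℕ} {W : Ω → ℝ}
    (hW : Measurable[Past d X i] W) {cW : ℝ} (hcW : ∀ ω, |W ω| ≤ cW)
    {g : (Fin d → ℝ) → ℝ} (hg : Measurable g) {c : ℝ} (hc : ∀ x, |g x| ≤ c) :
    ∫ ω, W ω * g (X (i + 1) ω) ∂P = ∫ ω, W ω * (∫ y, g y * s (X i ω) y) ∂P := by
  have := h.prob
  have hle := Past_le h.measX i
  have hW' : Measurable W := hW.mono hle le_rfl
  have hgX : Measurable fun ω => g (X (i + 1) ω) := hg.comp (h.measX _)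
  have ig : Integrable (fun ω => g (X (i + 1) ω)) P := integrable_bdd hgX fun ω => hc _
  have iWg : Integrable (W * fun ω => g (X (i + 1) ω)) P :=
    ig.bdd_mul (c := cW) hW'.aestronglyMeasurable (Filter.Eventually.of_forall hcW)
  have h1 := condExp_mul_of_stronglyMeasurable_left (m := Past d X i) (μ := P)
    hW.stronglyMeasurable iWg ig
  have h2 := h.markov i g hg ⟨c, hc⟩
  calc ∫ ω, W ω * g (X (i + 1) ω) ∂P
      = ∫ ω, (P[W * (fun ω => g (X (i + 1) ω)) | Past d X i]) ω ∂P := (integral_condExp hle).symm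
    _ = _ := by
      refine integral_congr_ae ?_
      filter_upwards [h1, h2] with ω e1 e2
      rw [e1, Pi.mul_apply]
      congr 1

/-- The `q`-step Markov property. -/
lemma ChainOK.markov_iter (h : ChainOK d P X s φ)
    {sIter : ℕ → (Fin d → ℝ) → (Fin d → ℝ) → ℝ}
    (h1 : sIter 1 = s) (h2 : ∀ q x y, sIter (q + 1) x y = ∫ z, sIter q x z * s z y)
    (q : ℕ) (hq : 1 ≤ q) {i : ℕ} {W : Ω → ℝ}
    (hW : Measurable[Past d X i] W) {cW : ℝ} (hcW : ∀ ω, |W ω| ≤ cW) :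
    ∀ {g : (Fin d → ℝ) → ℝ}, Measurable g → ∀ {c : ℝ}, (∀ x, |g x| ≤ c) →
    ∫ ω, W ω * g (X (i + q) ω) ∂P = ∫ ω, W ω * (∫ y, g y * sIter q (X i ω) y) ∂P := by
  induction q, hq using Nat.le_induction with
  | base =>
    intro g hg c hc
    rw [h1]
    exact h.markov_int hW hcW hg hc
  | succ q hq ih =>
    intro g hg c hc
    have hk := sIter_ker h.ker h1 h2 q hq
    rw [← add_assoc, h.markov_int (hW.mono (Past_mono (Nat.le_add_right i q)) le_rfl) hcW hg hc,
      ih (h.ker.meas_int hg) (h.ker.abs_le hg hc)]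
    congr 1
    funext ω
    rw [hk.comp_integral h.ker (h2 q) hg hc]

/-- Stationarity, for expectations. -/
lemma ChainOK.stat_int (h : ChainOK d P X s φ) (i : ℕ) {f : (Fin d → ℝ) → ℝ} (hf : Measurable f) :
    ∫ ω, f (X i ω) ∂P = ∫ x, f x * φ x := by
  rw [← integral_map (φ := X i) (h.measX i).aemeasurable hf.aestronglyMeasurable, h.stat,
    integral_withDensity_eq_integral_toReal_smul h.measφ.ennreal_ofReal
      (Filter.Eventually.of_forall fun _ => ENNReal.ofReal_lt_top)]
  congr 1
  funext x
  rw [ENNReal.toReal_ofReal (h.nonnegφ x), smul_eq_mul, mul_comm]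

lemma ChainOK.integral_φ (h : ChainOK d P X s φ) : ∫ x, φ x = 1 := by
  have := h.prob
  have h1 := h.stat_int 0 (f := fun _ => 1) measurable_const
  simp only [one_mul, integral_const, probReal_univ, smul_eq_mul] at h1
  exact h1.symm

lemma ChainOK.int_φ (h : ChainOK d P X s φ) : Integrable φ := by
  by_contra hn
  have := h.integral_φ
  rw [integral_undef hn] at this
  exact zero_ne_one this

end Chain


/-! ### Exponential deviation inequality -/

section Deviation
variable {d : ℕ} {Ω : Type} {X : ℕ → Ω → (Fin d → ℝ)} {s : (Fin d → ℝ) → (Fin d → ℝ) → ℝ}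

/-- The number of observed transitions in the cube `R` before time `k`. -/
def Ncount (d : ℕ) {Ω : Type} (X : ℕ → Ω → (Fin d → ℝ)) (R : CubeIdx d) (k : ℕ) (ω : Ω) : ℝ :=
  ∑ i ∈ Finset.range k, indC d R (X i ω, X (i + 1) ω)

/-- The predictable compensator of `Ncount`. -/
def Vcomp (d : ℕ) {Ω : Type} (X : ℕ → Ω → (Fin d → ℝ)) (s : (Fin d → ℝ) → (Fin d → ℝ) → ℝ)
    (R : CubeIdx d) (k : ℕ) (ω : Ω) : ℝ :=
  ∑ i ∈ Finset.range k, ∫ y, indC d R (X i ω, y) * s (X i ω) y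

lemma indicator_zero_or_one {α : Type*} (S : Set α) (z : α) :
    S.indicator (1 : α → ℝ) z = 0 ∨ S.indicator (1 : α → ℝ) z = 1 := by
  by_cases h : z ∈ S <;> simp [h]

lemma abs_indicator_le {α : Type*} (S : Set α) (z : α) : |S.indicator (1 : α → ℝ) z| ≤ 1 := by
  rcases indicator_zero_or_one S z with h | h <;> simp [h]

lemma comp_eq (s : (Fin d → ℝ) → (Fin d → ℝ) → ℝ) (R : CubeIdx d) (z : Fin d → ℝ) :
    ∫ y, indC d R (z, y) * s z y
      = (boxS d R.1 (kx d R)).indicator 1 z *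
        ∫ y, (boxS d R.1 (ky d R)).indicator 1 y * s z y := by
  rw [← integral_const_mul]
  congr 1
  funext y
  rw [indC_prod, mul_assoc]

lemma measurable_comp (hs : KerOK d s) (R : CubeIdx d) :
    Measurable fun z => ∫ y, indC d R (z, y) * s z y := by
  simp only [comp_eq]
  exact (measurable_one.indicator (measurableSet_boxS _ _ _)).mul
    (hs.meas_int (measurable_one.indicator (measurableSet_boxS _ _ _)))

lemma comp_nonneg (hs : KerOK d s) (R : CubeIdx d) (z : Fin d → ℝ) :
    0 ≤ ∫ y, indC d R (z, y) * s z y :=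
  integral_nonneg fun _ => mul_nonneg (indC_nonneg _ _) (hs.nonneg _ _)

lemma comp_le_one (hs : KerOK d s) (R : CubeIdx d) (z : Fin d → ℝ) :
    ∫ y, indC d R (z, y) * s z y ≤ 1 :=
  (le_abs_self _).trans (hs.abs_le (g := fun y => indC d R (z, y))
    ((measurable_indC R).comp measurable_prodMk_left)
    (fun _ => by rw [abs_of_nonneg (indC_nonneg _ _)]; exact indC_le_one _ _) z)

lemma Vcomp_nonneg (hs : KerOK d s) (R : CubeIdx d) (k : ℕ) (ω : Ω) : 0 ≤ Vcomp d X s R k ω :=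
  Finset.sum_nonneg fun _ _ => comp_nonneg hs R _

lemma Vcomp_le (hs : KerOK d s) (R : CubeIdx d) (k : ℕ) (ω : Ω) : Vcomp d X s R k ω ≤ k := by
  refine (Finset.sum_le_card_nsmul _ _ 1 fun _ _ => comp_le_one hs R _).trans ?_
  simp

lemma Ncount_nonneg (R : CubeIdx d) (k : ℕ) (ω : Ω) : 0 ≤ Ncount d X R k ω :=
  Finset.sum_nonneg fun _ _ => indC_nonneg _ _

lemma Ncount_le (R : CubeIdx d) (k : ℕ) (ω : Ω) : Ncount d X R k ω ≤ k := by
  refine (Finset.sum_le_card_nsmul _ _ 1 fun _ _ => indC_le_one _ _).trans ?_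
  simp

lemma measurable_Ncount (R : CubeIdx d) (k : ℕ) : Measurable[Past d X k] (Ncount d X R k) := by
  unfold Ncount
  refine Finset.measurable_sum _ fun i hi => ?_
  rw [Finset.mem_range] at hi
  exact (measurable_indC R).comp
    ((measurable_Past (by omega : i ≤ k)).prodMk (measurable_Past (by omega : i + 1 ≤ k)))

lemma measurable_Vcomp (hs : KerOK d s) (R : CubeIdx d) (k : ℕ) :
    Measurable[Past d X k] (Vcomp d X s R k) := by
  unfold Vcomp
  refine Finset.measurable_sum _ fun i hi => ?_
  rw [Finset.mem_range] at hi
  exact (measurable_comp hs R).comp (measurable_Past (by omega : i ≤ k))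

lemma exp_bound (hs : KerOK d s) (R : CubeIdx d) (lam : ℝ) (k : ℕ) (ω : Ω) :
    |rexp (lam * Ncount d X R k ω - (rexp lam - 1) * Vcomp d X s R k ω)|
      ≤ rexp (|lam| * k + |rexp lam - 1| * k) := by
  rw [abs_of_pos (Real.exp_pos _), Real.exp_le_exp]
  have h1 : lam * Ncount d X R k ω ≤ |lam| * k :=
    mul_le_mul (le_abs_self _) (Ncount_le R k ω) (Ncount_nonneg R k ω) (abs_nonneg _)
  have h2 : -(rexp lam - 1) * Vcomp d X s R k ω ≤ |rexp lam - 1| * k :=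
    mul_le_mul (neg_le_abs _) (Vcomp_le hs R k ω) (Vcomp_nonneg hs R k ω) (abs_nonneg _)
  linarith

variable [mΩ : MeasurableSpace Ω] {P : Measure Ω} {φ : (Fin d → ℝ) → ℝ}

/-- The exponential supermartingale attached to the counting process. -/
lemma exp_super (h : ChainOK d P X s φ) (R : CubeIdx d) (lam : ℝ) (k : ℕ) :
    ∫ ω, rexp (lam * Ncount d X R k ω - (rexp lam - 1) * Vcomp d X s R k ω) ∂P ≤ 1 := by
  have := h.prob
  have hs := h.ker
  induction k with
  | zero => simp [Ncount, Vcomp]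
  | succ k ih =>
    refine le_trans ?_ ih
    set c := rexp lam - 1 with hc
    set Y : Ω → ℝ := fun ω => rexp (lam * Ncount d X R k ω - c * Vcomp d X s R k ω) with hY
    set v : Ω → ℝ := fun ω => ∫ y, indC d R (X k ω, y) * s (X k ω) y with hv
    set I : (Fin d → ℝ) → ℝ := (boxS d R.1 (kx d R)).indicator 1 with hI
    set J : (Fin d → ℝ) → ℝ := (boxS d R.1 (ky d R)).indicator 1 with hJ
    have mI : Measurable I := measurable_one.indicator (measurableSet_boxS _ _ _)
    have mJ : Measurable J := measurable_one.indicator (measurableSet_boxS _ _ _)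
    have mY : Measurable[Past d X k] Y :=
      (((measurable_Ncount R k).const_mul lam).sub ((measurable_Vcomp hs R k).const_mul c)).exp
    have mv : Measurable[Past d X k] v := (measurable_comp hs R).comp (measurable_Past le_rfl)
    have mW : Measurable[Past d X k] fun ω => Y ω * rexp (-(c * v ω)) * I (X k ω) :=
      (mY.mul (mv.const_mul c).neg.exp).mul (mI.comp (measurable_Past le_rfl))
    have v0 : ∀ ω, 0 ≤ v ω := fun ω => comp_nonneg hs R _
    have v1 : ∀ ω, v ω ≤ 1 := fun ω => comp_le_one hs R _
    have bY : ∀ ω, |Y ω| ≤ rexp (|lam| * k + |c| * k) := exp_bound hs R lam k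
    have bE : ∀ ω, |rexp (-(c * v ω))| ≤ rexp |c| := fun ω => by
      rw [abs_of_pos (Real.exp_pos _), Real.exp_le_exp]
      have : -c * v ω ≤ |c| * 1 := mul_le_mul (neg_le_abs _) (v1 ω) (v0 ω) (abs_nonneg _)
      linarith
    have bYE : ∀ ω, |Y ω * rexp (-(c * v ω))| ≤ rexp (|lam| * k + |c| * k) * rexp |c| := fun ω => by
      rw [abs_mul]
      exact mul_le_mul (bY ω) (bE ω) (abs_nonneg _) (Real.exp_pos _).le
    have bW : ∀ ω, |Y ω * rexp (-(c * v ω)) * I (X k ω)|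
        ≤ rexp (|lam| * k + |c| * k) * rexp |c| := fun ω => by
      rw [abs_mul]
      exact (mul_le_of_le_one_right (abs_nonneg _) (abs_indicator_le _ _)).trans (bYE ω)
    have hle := Past_le h.measX k
    have key := h.markov_int mW bW mJ (abs_indicator_le (boxS d R.1 (ky d R)))
    have e1 : ∀ ω, rexp (lam * Ncount d X R (k + 1) ω - c * Vcomp d X s R (k + 1) ω)
        = Y ω * rexp (-(c * v ω)) + c * (Y ω * rexp (-(c * v ω)) * I (X k ω) * J (X (k + 1) ω)) := by
      intro ω
      have hN : Ncount d X R (k + 1) ω = Ncount d X R k ω + I (X k ω) * J (X (k + 1) ω) := by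
        unfold Ncount
        rw [Finset.sum_range_succ, indC_prod]
      have hV : Vcomp d X s R (k + 1) ω = Vcomp d X s R k ω + v ω := by
        unfold Vcomp
        rw [Finset.sum_range_succ]
      have he : lam * Ncount d X R (k + 1) ω - c * Vcomp d X s R (k + 1) ω
          = (lam * Ncount d X R k ω - c * Vcomp d X s R k ω) + (-(c * v ω))
            + lam * (I (X k ω) * J (X (k + 1) ω)) := by rw [hN, hV]; ring
      rw [he, Real.exp_add, Real.exp_add]
      have hIJ : rexp (lam * (I (X k ω) * J (X (k + 1) ω)))
          = 1 + c * (I (X k ω) * J (X (k + 1) ω)) := by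
        rcases indicator_zero_or_one (boxS d R.1 (kx d R)) (X k ω) with h1 | h1 <;>
        rcases indicator_zero_or_one (boxS d R.1 (ky d R)) (X (k + 1) ω) with h2 | h2 <;>
        simp [hI, hJ, h1, h2, hc]
      rw [hIJ]
      ring
    have i1 : Integrable (fun ω => Y ω * rexp (-(c * v ω))) P :=
      integrable_bdd ((mY.mul (mv.const_mul c).neg.exp).mono hle le_rfl) bYE
    have mYE : Measurable fun ω => Y ω * rexp (-(c * v ω)) :=
      (mY.mul (mv.const_mul c).neg.exp).mono hle le_rfl
    have i2 : Integrable (fun ω => Y ω * rexp (-(c * v ω)) * I (X k ω) * J (X (k + 1) ω)) P :=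
      integrable_bdd ((mW.mono hle le_rfl).mul (mJ.comp (h.measX _))) fun ω => by
        rw [abs_mul]
        exact (mul_le_of_le_one_right (abs_nonneg _) (abs_indicator_le _ _)).trans (bW ω)
    have i3 : Integrable (fun ω => Y ω * rexp (-(c * v ω)) * I (X k ω) *
        ∫ y, J y * s (X k ω) y) P :=
      integrable_bdd ((mW.mono hle le_rfl).mul ((hs.meas_int mJ).comp (h.measX _))) fun ω => by
        rw [abs_mul]
        exact (mul_le_of_le_one_right (abs_nonneg _)
          (hs.abs_le mJ (abs_indicator_le (boxS d R.1 (ky d R))) _)).trans (bW ω)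
    simp only [e1]
    rw [integral_add i1 (i2.const_mul c), integral_const_mul, key, ← integral_const_mul,
      ← integral_add i1 (i3.const_mul c)]
    refine integral_mono (i1.add (i3.const_mul c)) (integrable_bdd (mY.mono hle le_rfl) bY)
      fun ω => ?_
    have hvv : v ω = I (X k ω) * ∫ y, J y * s (X k ω) y := comp_eq s R (X k ω)
    have e2 : Y ω * rexp (-(c * v ω)) + c * (Y ω * rexp (-(c * v ω)) * I (X k ω) *
        ∫ y, J y * s (X k ω) y) = Y ω * (rexp (-(c * v ω)) * (c * v ω + 1)) := by
      rw [hvv]; ring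
    change Y ω * rexp (-(c * v ω)) + c * (Y ω * rexp (-(c * v ω)) * I (X k ω) *
        ∫ y, J y * s (X k ω) y) ≤ Y ω
    rw [e2]
    refine mul_le_of_le_one_right (Real.exp_pos _).le ?_
    calc rexp (-(c * v ω)) * (c * v ω + 1) ≤ rexp (-(c * v ω)) * rexp (c * v ω) := by
          gcongr
          exact Real.add_one_le_exp _
      _ = 1 := by rw [← Real.exp_add]; simp

/-- The event on which the exponential supermartingale of parameter `lam` exceeds `e^x`. -/
def BadExp (d : ℕ) {Ω : Type} (X : ℕ → Ω → (Fin d → ℝ)) (s : (Fin d → ℝ) → (Fin d → ℝ) → ℝ)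
    (R : CubeIdx d) (n : ℕ) (x lam : ℝ) : Set Ω :=
  {ω | rexp x ≤ rexp (lam * Ncount d X R n ω - (rexp lam - 1) * Vcomp d X s R n ω)}

lemma BadExp_prob (h : ChainOK d P X s φ) (R : CubeIdx d) (n : ℕ) (x lam : ℝ) :
    P.real (BadExp d X s R n x lam) ≤ rexp (-x) := by
  have := h.prob
  have hs := h.ker
  have hm : Measurable fun ω =>
      rexp (lam * Ncount d X R n ω - (rexp lam - 1) * Vcomp d X s R n ω) :=
    (((measurable_Ncount R n).const_mul lam).sub
      ((measurable_Vcomp hs R n).const_mul _)).exp.mono (Past_le h.measX n) le_rfl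
  have h1 := mul_meas_ge_le_integral_of_nonneg (μ := P)
    (Filter.Eventually.of_forall fun ω => (Real.exp_pos _).le)
    (integrable_bdd hm (exp_bound hs R lam n)) (rexp x)
  have h2 := h1.trans (exp_super h R lam n)
  unfold BadExp
  rw [Real.exp_neg, ← one_div, le_div_iff₀ (Real.exp_pos x), mul_comm]
  exact h2

/-- A family of linearized Bernstein bounds, one for each integer `k`, gives a bound on the
difference of the square roots: for `V ≥ x` take `k = ⌈√(V/x)⌉`, otherwise `k = 1`. -/
lemma sqrt_close {n : ℕ} {N V x : ℝ} (hn : 1 ≤ n) (hN : 0 ≤ N) (hV : 0 ≤ V) (hVn : V ≤ n)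
    (hx : 1 ≤ x)
    (h : ∀ k ∈ Finset.Icc 1 n, |N - V| ≤ V / k + k * x) : |√N - √V| ≤ 4 * √x := by
  have hx0 : 0 ≤ x := by linarith
  have sx : 1 ≤ √x := Real.one_le_sqrt.2 hx
  rcases le_total V x with hVx | hVx
  · have h1 := h 1 (Finset.mem_Icc.2 ⟨le_rfl, hn⟩)
    rw [Nat.cast_one, div_one, one_mul] at h1
    have h2 := abs_le.1 h1
    have hN3 : √N ≤ 2 * √x := by
      refine Real.sqrt_le_iff.2 ⟨by positivity, ?_⟩
      rw [mul_pow, Real.sq_sqrt hx0]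
      linarith
    have hV1 : √V ≤ √x := Real.sqrt_le_sqrt hVx
    rw [abs_le]
    constructor <;> linarith [Real.sqrt_nonneg N, Real.sqrt_nonneg V]
  · set u := √V / √x with hu
    have hu1 : 1 ≤ u := by
      rw [hu, le_div_iff₀ (by linarith), one_mul]
      exact Real.sqrt_le_sqrt hVx
    have hsV : √V = u * √x := by rw [hu]; field_simp
    have hVu : V = u ^ 2 * x := by
      rw [← Real.sq_sqrt hV, hsV, mul_pow, Real.sq_sqrt hx0]
    have hun : u ≤ n := by nlinarith
    have hk := Nat.ceil_lt_add_one (by linarith : 0 ≤ u)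
    have hk' := Nat.le_ceil u
    have hkn : ⌈u⌉₊ ≤ n := Nat.ceil_le.2 hun
    have hk1 : 1 ≤ ⌈u⌉₊ := Nat.one_le_ceil_iff.2 (by linarith)
    have h1 := h ⌈u⌉₊ (Finset.mem_Icc.2 ⟨hk1, hkn⟩)
    have h2 : V / (⌈u⌉₊ : ℝ) ≤ u * x := by
      rw [div_le_iff₀ (by linarith), hVu]
      nlinarith [mul_nonneg (by linarith : 0 ≤ u) hx0]
    have h3 : (⌈u⌉₊ : ℝ) * x ≤ 2 * u * x := by
      refine mul_le_mul_of_nonneg_right ?_ hx0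
      linarith
    have h4 : |√N - √V| * √V ≤ 3 * √x * √V := by
      calc |√N - √V| * √V ≤ |√N - √V| * (√N + √V) := by
            gcongr
            linarith [Real.sqrt_nonneg N]
        _ = |N - V| := by
            rw [← abs_of_nonneg (by positivity : 0 ≤ √N + √V), ← abs_mul]
            congr 1
            linear_combination Real.sq_sqrt hN - Real.sq_sqrt hV
        _ ≤ 3 * (u * x) := by linarith
        _ = 3 * √x * √V := by
            rw [hsV]
            linear_combination (-3 * u) * Real.sq_sqrt hx0
    have hVpos : 0 < √V := by rw [hsV]; positivity
    have h5 := le_of_mul_le_mul_right h4 hVpos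
    linarith

/-- The union of the bad events over all cubes of level at most `ℓ` and all parameters `± 1/k`,
`1 ≤ k ≤ n`. -/
def BadDev (d : ℕ) {Ω : Type} (X : ℕ → Ω → (Fin d → ℝ)) (s : (Fin d → ℝ) → (Fin d → ℝ) → ℝ)
    (ℓ n : ℕ) (x : ℝ) : Set Ω :=
  ⋃ R ∈ allC d ℓ, ⋃ k ∈ Finset.Icc 1 n,
    (BadExp d X s R n x (1 / k) ∪ BadExp d X s R n x (-(1 / k)))

lemma BadDev_prob (h : ChainOK d P X s φ) (ℓ n : ℕ) (x : ℝ) :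
    P.real (BadDev d X s ℓ n x) ≤ (allC d ℓ).card * (n * (2 * rexp (-x))) := by
  have := h.prob
  unfold BadDev
  have h1 : ∀ R ∈ allC d ℓ, P.real (⋃ k ∈ Finset.Icc 1 n,
      (BadExp d X s R n x (1 / k) ∪ BadExp d X s R n x (-(1 / k)))) ≤ n * (2 * rexp (-x)) := by
    intro R _
    refine (measureReal_biUnion_finset_le _ _).trans ?_
    refine (Finset.sum_le_sum (g := fun _ => 2 * rexp (-x)) fun k _ => ?_).trans
      (le_of_eq (by simp))
    refine (measureReal_union_le _ _).trans ?_
    linarith [BadExp_prob h R n x (1 / k), BadExp_prob h R n x (-(1 / k))]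
  refine (measureReal_biUnion_finset_le _ _).trans ?_
  exact (Finset.sum_le_sum h1).trans (le_of_eq (by simp))

lemma dev_of_not_bad (h : ChainOK d P X s φ) {ℓ n : ℕ} (hn : 1 ≤ n) {x : ℝ} (hx : 1 ≤ x) {ω : Ω}
    (hω : ω ∉ BadDev d X s ℓ n x) : Dev d n ℓ (fun i => X i ω) s (4 * √(x / n)) := by
  intro R hR
  have hs := h.ker
  have hn0 : (0 : ℝ) < n := by exact_mod_cast hn
  have hN : Na d n (fun i => X i ω) (indC d R) = Ncount d X R n ω / n := by
    unfold Na Ncount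
    ring
  have hV : Ea d n (fun i => X i ω) (fun p => indC d R p * s p.1 p.2) = Vcomp d X s R n ω / n := by
    unfold Ea Vcomp
    ring
  rw [hN, hV, Real.sqrt_div (Ncount_nonneg R n ω), Real.sqrt_div (Vcomp_nonneg hs R n ω),
    Real.sqrt_div (by linarith), ← sub_div, abs_div, abs_of_nonneg (Real.sqrt_nonneg _),
    ← mul_div_assoc]
  gcongr
  refine sqrt_close hn (Ncount_nonneg R n ω) (Vcomp_nonneg hs R n ω) (Vcomp_le hs R n ω) hx
    fun k hk => ?_
  have hk1 : (1 : ℝ) ≤ k := by exact_mod_cast (Finset.mem_Icc.1 hk).1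
  have hV0 := Vcomp_nonneg (X := X) hs R n ω
  unfold BadDev at hω
  simp only [Set.mem_iUnion, not_exists, Set.mem_union, not_or] at hω
  obtain ⟨h1, h2⟩ := hω R hR k hk
  unfold BadExp at h1 h2
  rw [Set.mem_ofPred_eq, Real.exp_le_exp, not_le] at h1 h2
  set t : ℝ := 1 / k with ht
  have ht0 : 0 < t := by positivity
  have ht1 : |t| ≤ 1 := by
    rw [abs_of_pos ht0, ht, div_le_one (by linarith)]
    exact hk1
  have e1 := (abs_le.1 (Real.abs_exp_sub_one_sub_id_le ht1)).2
  have e2 := (abs_le.1 (Real.abs_exp_sub_one_sub_id_le (x := -t) (by rwa [abs_neg]))).2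
  set V := Vcomp d X s R n ω
  set N := Ncount d X R n ω
  have f1 : (rexp t - 1) * V ≤ (t + t ^ 2) * V := by
    gcongr
    linarith
  have f2 : (rexp (-t) - 1) * V ≤ (-t + t ^ 2) * V := by
    gcongr
    linarith
  have hkt : (k : ℝ) * t = 1 := by rw [ht]; field_simp
  have hk0 : (0 : ℝ) ≤ k := by linarith
  have g1 : t * (N - V) ≤ t ^ 2 * V + x := by linarith
  have g2 : t * (V - N) ≤ t ^ 2 * V + x := by linarith
  have g3 := mul_le_mul_of_nonneg_left g1 hk0
  have g4 := mul_le_mul_of_nonneg_left g2 hk0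
  have q1 : (k : ℝ) * (t * (N - V)) = N - V := by rw [← mul_assoc, hkt, one_mul]
  have q2 : (k : ℝ) * (t * (V - N)) = V - N := by rw [← mul_assoc, hkt, one_mul]
  have q3 : (k : ℝ) * (t ^ 2 * V + x) = V / k + k * x := by
    rw [ht]
    field_simp
  rw [q1, q3] at g3
  rw [q2, q3] at g4
  rw [abs_le]
  constructor <;> linarith

end Deviation

/-! ### Occupation of the fine cells under β-mixing -/

section Occupation
variable {d : ℕ} {Ω : Type} [mΩ : MeasurableSpace Ω] {P : Measure Ω}
  {X : ℕ → Ω → (Fin d → ℝ)} {s : (Fin d → ℝ) → (Fin d → ℝ) → ℝ} {φ : (Fin d → ℝ) → ℝ}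
  {sIter : ℕ → (Fin d → ℝ) → (Fin d → ℝ) → ℝ}

/-- The β-mixing coefficient of a kernel density `r` with respect to `φ`. -/
def betaC (d : ℕ) (r : (Fin d → ℝ) → (Fin d → ℝ) → ℝ) (φ : (Fin d → ℝ) → ℝ) : ℝ :=
  ∫ x, (∫ y, |r x y - φ y|) * φ x

lemma betaC_nonneg (r : (Fin d → ℝ) → (Fin d → ℝ) → ℝ) (hφ : ∀ x, 0 ≤ φ x) :
    0 ≤ betaC d r φ :=
  integral_nonneg fun x => mul_nonneg (integral_nonneg fun _ => abs_nonneg _) (hφ x)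

/-- Decoupling: replacing `X_{i+q}` by an independent copy costs at most `β_q`. -/
lemma ChainOK.decouple (h : ChainOK d P X s φ) (h1 : sIter 1 = s)
    (h2 : ∀ q x y, sIter (q + 1) x y = ∫ z, sIter q x z * s z y) {q : ℕ} (hq : 1 ≤ q) {i : ℕ}
    {W : Ω → ℝ} (hW : Measurable[Past d X i] W) (hW1 : ∀ ω, |W ω| ≤ 1)
    {g : (Fin d → ℝ) → ℝ} (hg : Measurable g) (hg1 : ∀ x, |g x| ≤ 1) :
    |∫ ω, W ω * g (X (i + q) ω) ∂P - (∫ x, g x * φ x) * ∫ ω, W ω ∂P| ≤ betaC d (sIter q) φ := by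
  have := h.prob
  have hk := sIter_ker h.ker h1 h2 q hq
  have hφi := h.int_φ
  have hφ1 := h.integral_φ
  have hW' : Measurable W := hW.mono (Past_le h.measX i) le_rfl
  rw [h.markov_iter h1 h2 q hq hW hW1 hg hg1, mul_comm (∫ x, g x * φ x), ← integral_mul_const]
  have hgφ : Integrable fun y => g y * φ y :=
    hφi.bdd_mul (c := 1) hg.aestronglyMeasurable (Filter.Eventually.of_forall hg1)
  have iW : ∀ {Z : Ω → ℝ}, Measurable Z → (∀ ω, |Z ω| ≤ 1) →
      Integrable (fun ω => W ω * Z ω) P := fun hZ hZ1 =>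
    (integrable_bdd hZ hZ1).bdd_mul (c := 1) hW'.aestronglyMeasurable
      (Filter.Eventually.of_forall hW1)
  have hpabs : |∫ x, g x * φ x| ≤ 1 := by
    calc |∫ x, g x * φ x| ≤ ∫ x, |g x * φ x| := abs_integral_le_integral_abs
      _ ≤ ∫ x, φ x := by
          refine integral_mono hgφ.abs hφi fun x => ?_
          simp only
          rw [abs_mul, abs_of_nonneg (h.nonnegφ x)]
          exact mul_le_of_le_one_left (h.nonnegφ x) (hg1 x)
      _ = 1 := hφ1
  have i1 : Integrable (fun ω => W ω * ∫ y, g y * sIter q (X i ω) y) P :=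
    iW ((hk.meas_int hg).comp (h.measX i)) fun ω => hk.abs_le hg hg1 _
  have i2 : Integrable (fun ω => W ω * ∫ x, g x * φ x) P :=
    iW measurable_const fun _ => hpabs
  rw [← integral_sub i1 i2]
  have hD : Measurable fun x => ∫ y, |sIter q x y - φ y| := by
    have : StronglyMeasurable fun p : (Fin d → ℝ) × (Fin d → ℝ) => |sIter q p.1 p.2 - φ p.2| :=
      ((hk.meas.sub (h.measφ.comp measurable_snd)).abs).stronglyMeasurable
    exact this.integral_prod_right'.measurable
  have hDi : ∀ x, Integrable fun y => |sIter q x y - φ y| := fun x => ((hk.int x).sub hφi).abs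
  have hDb : ∀ x, |(∫ y, |sIter q x y - φ y|)| ≤ 2 := by
    intro x
    rw [abs_of_nonneg (integral_nonneg fun _ => abs_nonneg _)]
    calc ∫ y, |sIter q x y - φ y| ≤ ∫ y, (sIter q x y + φ y) := by
          refine integral_mono (hDi x) ((hk.int x).add hφi) fun y => ?_
          simp only
          rw [abs_le]
          constructor <;> linarith [hk.nonneg x y, h.nonnegφ y]
      _ = 2 := by
          rw [integral_add (hk.int x) hφi, hk.one, hφ1]
          norm_num
  unfold betaC
  rw [← h.stat_int i hD]
  refine abs_integral_le_integral_abs.trans (integral_mono (i1.sub i2).abs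
    (integrable_bdd (hD.comp (h.measX i)) fun ω => hDb _) fun ω => ?_)
  simp only
  rw [← mul_sub, abs_mul]
  refine (mul_le_of_le_one_left (abs_nonneg _) (hW1 ω)).trans ?_
  rw [← integral_sub (hk.int_mul hg hg1 _) hgφ]
  refine abs_integral_le_integral_abs.trans (integral_mono
    ((hk.int_mul hg hg1 _).sub hgφ).abs (hDi _) fun y => ?_)
  simp only
  rw [← mul_sub, abs_mul]
  exact mul_le_of_le_one_left (abs_nonneg _) (hg1 y)

/-- Number of visits to `I` along the skeleton `X_r, X_{r+q}, …` of length `N`. -/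
def visits (d : ℕ) {Ω : Type} (X : ℕ → Ω → (Fin d → ℝ)) (I : Set (Fin d → ℝ)) (r q N : ℕ)
    (ω : Ω) : ℝ := ∑ k ∈ Finset.range N, I.indicator 1 (X (r + k * q) ω)

/-- Indicator function of the event that there are at most `t` visits. -/
def fewV (d : ℕ) {Ω : Type} (X : ℕ → Ω → (Fin d → ℝ)) (I : Set (Fin d → ℝ)) (r q N : ℕ) (t : ℝ)
    (ω : Ω) : ℝ := if visits d X I r q N ω ≤ t then 1 else 0

lemma visits_nonneg (I : Set (Fin d → ℝ)) (r q N : ℕ) (ω : Ω) : 0 ≤ visits d X I r q N ω :=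
  Finset.sum_nonneg fun _ _ => Set.indicator_nonneg (fun _ _ => zero_le_one) _

lemma fewV_mem (I : Set (Fin d → ℝ)) (r q N : ℕ) (t : ℝ) (ω : Ω) :
    0 ≤ fewV d X I r q N t ω ∧ fewV d X I r q N t ω ≤ 1 := by
  unfold fewV
  split_ifs <;> norm_num

lemma fewV_mono (I : Set (Fin d → ℝ)) (r q N : ℕ) {t u : ℝ} (htu : t ≤ u) (ω : Ω) :
    fewV d X I r q N t ω ≤ fewV d X I r q N u ω := by
  unfold fewV
  split_ifs with h1 h2 h2
  · exact le_rfl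
  · exact absurd (h1.trans htu) h2
  · norm_num
  · exact le_rfl

lemma fewV_succ (I : Set (Fin d → ℝ)) (r q N : ℕ) (t : ℝ) (ω : Ω) :
    fewV d X I r q (N + 1) t ω = fewV d X I r q N t ω
      - (fewV d X I r q N t ω - fewV d X I r q N (t - 1) ω) * I.indicator 1 (X (r + N * q) ω) := by
  have hS : visits d X I r q (N + 1) ω
      = visits d X I r q N ω + I.indicator 1 (X (r + N * q) ω) := by
    unfold visits
    rw [Finset.sum_range_succ]
  unfold fewV
  rw [hS]
  rcases indicator_zero_or_one I (X (r + N * q) ω) with e | e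
  · rw [e]
    simp
  · rw [e, mul_one, sub_sub_cancel]
    exact if_congr le_sub_iff_add_le.symm rfl rfl

lemma measurable_fewV {I : Set (Fin d → ℝ)} (hI : MeasurableSet I) {r q N i : ℕ}
    (hi : ∀ k < N, r + k * q ≤ i) (t : ℝ) : Measurable[Past d X i] (fewV d X I r q N t) := by
  have hS : Measurable[Past d X i] (visits d X I r q N) := by
    unfold visits
    refine Finset.measurable_fun_sum _ fun k hk => ?_
    exact (measurable_const.indicator hI).comp (measurable_Past (hi k (Finset.mem_range.1 hk)))
  exact Measurable.ite (measurableSet_le hS measurable_const) measurable_const measurable_const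

lemma fewV_int (h : ChainOK d P X s φ) {I : Set (Fin d → ℝ)} (hI : MeasurableSet I)
    (r q N : ℕ) (t : ℝ) : Integrable (fewV d X I r q N t) P := by
  have := h.prob
  refine integrable_bdd (c := 1) ((measurable_fewV hI (i := r + N * q) (fun k hk => ?_) t).mono
    (Past_le h.measX _) le_rfl) fun ω => ?_
  · gcongr
  · obtain ⟨a, b⟩ := fewV_mem (X := X) I r q N t ω
    rw [abs_of_nonneg a]
    exact b

/-- Laplace-transform bound on the number of visits along a skeleton: up to `N β_q`, the visits
behave like independent Bernoulli trials with success probability `p`. -/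
lemma fewV_bound (h : ChainOK d P X s φ) (h1 : sIter 1 = s)
    (h2 : ∀ q x y, sIter (q + 1) x y = ∫ z, sIter q x z * s z y) {q : ℕ} (hq : 1 ≤ q)
    {I : Set (Fin d → ℝ)} (hI : MeasurableSet I) (r : ℕ) {p : ℝ}
    (hp : p = ∫ x, I.indicator 1 x * φ x) (hp0 : 0 ≤ p) (hp1 : p ≤ 1) (N : ℕ) : ∀ t : ℝ,
    ∫ ω, fewV d X I r q N t ω ∂P
      ≤ rexp t * (1 - p * (1 - rexp (-1))) ^ N + N * betaC d (sIter q) φ := by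
  have := h.prob
  have hβ := betaC_nonneg (sIter q) h.nonnegφ
  have hgm : Measurable (I.indicator (1 : (Fin d → ℝ) → ℝ)) := measurable_one.indicator hI
  induction N with
  | zero =>
    intro t
    have : ∀ ω, fewV d X I r q 0 t ω ≤ rexp t := by
      intro ω
      unfold fewV visits
      rw [Finset.range_zero, Finset.sum_empty]
      split_ifs with ht
      · exact Real.one_le_exp ht
      · exact (Real.exp_pos t).le
    calc ∫ ω, fewV d X I r q 0 t ω ∂P ≤ ∫ _, rexp t ∂P :=
          integral_mono (fewV_int h hI r q 0 t) (integrable_const _) this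
      _ = _ := by simp
  | succ N ih =>
    intro t
    set D : Ω → ℝ := fun ω => fewV d X I r q N t ω - fewV d X I r q N (t - 1) ω with hD
    have hD0 : ∀ ω, 0 ≤ D ω := fun ω =>
      sub_nonneg.2 (fewV_mono I r q N (by linarith) ω)
    have hD1 : ∀ ω, |D ω| ≤ 1 := fun ω => by
      rw [abs_of_nonneg (hD0 ω)]
      have a := (fewV_mem (X := X) I r q N t ω).2
      have b := (fewV_mem (X := X) I r q N (t - 1) ω).1
      simp only [hD]
      linarith
    have iD : Integrable D P := (fewV_int h hI r q N t).sub (fewV_int h hI r q N (t - 1))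
    have key : |∫ ω, D ω * I.indicator 1 (X (r + N * q) ω) ∂P - p * ∫ ω, D ω ∂P|
        ≤ betaC d (sIter q) φ := by
      rcases N with _ | N
      · -- without any earlier visit `D` is constant and stationarity alone is enough
        have hc : ∀ ω, D ω = (if (0 : ℝ) ≤ t then 1 else 0) - (if (0 : ℝ) ≤ t - 1 then 1 else 0) := by
          intro ω
          simp only [hD, fewV, visits, Finset.range_zero, Finset.sum_empty]
          congr 1
        simp only [hc]
        rw [integral_const_mul, h.stat_int _ hgm, ← hp]
        simp only [integral_const, probReal_univ, one_smul]
        rw [mul_comm p, sub_self, abs_zero]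
        exact hβ
      · have hm : ∀ u, Measurable[Past d X (r + N * q)] (fewV d X I r q (N + 1) u) := fun u =>
          measurable_fewV hI (fun k hk => by gcongr; omega) u
        have hDm : Measurable[Past d X (r + N * q)] D :=
          Measurable.sub (m := Past d X (r + N * q)) (hm t) (hm (t - 1))
        have := h.decouple h1 h2 hq hDm hD1 hgm (abs_indicator_le I)
        rw [← hp] at this
        have e : r + (N + 1) * q = r + N * q + q := by ring
        rw [e]
        exact this
    have hstep : ∫ ω, fewV d X I r q (N + 1) t ω ∂P
        = ∫ ω, fewV d X I r q N t ω ∂P - ∫ ω, D ω * I.indicator 1 (X (r + N * q) ω) ∂P := by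
      rw [← integral_sub (fewV_int h hI r q N t)]
      · congr 1
        funext ω
        exact fewV_succ I r q N t ω
      · exact iD.mul_bdd (c := 1) ((hgm.comp (h.measX _)).aestronglyMeasurable)
          (Filter.Eventually.of_forall fun ω => abs_indicator_le I _)
    have hDint : ∫ ω, D ω ∂P = ∫ ω, fewV d X I r q N t ω ∂P - ∫ ω, fewV d X I r q N (t - 1) ω ∂P :=
      integral_sub (fewV_int h hI r q N t) (fewV_int h hI r q N (t - 1))
    have ha := (abs_le.1 key).1
    have b1 := mul_le_mul_of_nonneg_left (ih t) (sub_nonneg.2 hp1)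
    have b2 := mul_le_mul_of_nonneg_left (ih (t - 1)) hp0
    have ee : rexp (t - 1) = rexp t * rexp (-1) := by rw [← Real.exp_add]; ring_nf
    rw [ee] at b2
    rw [hstep, pow_succ]
    rw [hDint] at ha
    push_cast
    nlinarith

lemma sum_range_mul_eq (f : ℕ → ℝ) (q N : ℕ) :
    ∑ i ∈ Finset.range (N * q), f i
      = ∑ k ∈ Finset.range N, ∑ r ∈ Finset.range q, f (r + k * q) := by
  induction N with
  | zero => simp
  | succ N ih =>
    rw [Finset.sum_range_succ, ← ih, Nat.succ_mul, Finset.sum_range_add]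
    simp only [add_comm]

/-- The event that the cell `I`, of probability `p`, is visited abnormally rarely. -/
def RareV (d : ℕ) {Ω : Type} (X : ℕ → Ω → (Fin d → ℝ)) (n : ℕ) (p : ℝ) (I : Set (Fin d → ℝ)) :
    Set Ω := {ω | ∑ i ∈ Finset.range n, I.indicator (1 : (Fin d → ℝ) → ℝ) (X i ω) ≤ n * p / 10}

/-- Probability that a cell is visited rarely: in that case it is visited rarely by at least half of
the `q` interlaced skeletons, so Markov's inequality for the number of such skeletons reduces the
claim to `fewV_bound`. -/
lemma RareV_prob (h : ChainOK d P X s φ) (h1 : sIter 1 = s)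
    (h2 : ∀ q x y, sIter (q + 1) x y = ∫ z, sIter q x z * s z y) {q n : ℕ} (hq : 1 ≤ q)
    (hqn : q ≤ n) {I : Set (Fin d → ℝ)} (hI : MeasurableSet I) {p : ℝ}
    (hp : p = ∫ x, I.indicator 1 x * φ x) (hp0 : 0 < p) (hp1 : p ≤ 1) :
    P.real (RareV d X n p I)
      ≤ 2 * (rexp (-(p / 10) * (n / q)) + n * betaC d (sIter q) φ / q) := by
  have := h.prob
  have hβ := betaC_nonneg (sIter q) h.nonnegφ
  have hq0 : (0 : ℝ) < q := by exact_mod_cast hq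
  have hn0 : (0 : ℝ) < n := by exact_mod_cast (hq.trans hqn)
  set N := n / q with hN
  set t : ℝ := n * p / (5 * q) with ht
  have ht0 : 0 < t := by positivity
  have hgm : Measurable (I.indicator (1 : (Fin d → ℝ) → ℝ)) := measurable_one.indicator hI
  have hmeas : MeasurableSet (RareV d X n p I) := by
    refine measurableSet_le ?_ measurable_const
    exact Finset.measurable_fun_sum _ fun i _ => hgm.comp (h.measX i)
  have hNq : N * q ≤ n := Nat.div_mul_le_self n q
  have hpt : ∀ ω, (RareV d X n p I).indicator (1 : Ω → ℝ) ω
      ≤ (2 / q) * ∑ r ∈ Finset.range q, fewV d X I r q N t ω := by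
    intro ω
    have hnn : 0 ≤ ∑ r ∈ Finset.range q, fewV d X I r q N t ω :=
      Finset.sum_nonneg fun r _ => (fewV_mem I r q N t ω).1
    by_cases hω : ω ∈ RareV d X n p I
    · rw [Set.indicator_of_mem hω, Pi.one_apply]
      have e1 : ∑ r ∈ Finset.range q, visits d X I r q N ω ≤ n * p / 10 := by
        refine le_trans ?_ hω
        unfold visits
        rw [Finset.sum_comm,
          ← sum_range_mul_eq (fun i => I.indicator (1 : (Fin d → ℝ) → ℝ) (X i ω)) q N]
        exact Finset.sum_le_sum_of_subset_of_nonneg (Finset.range_mono hNq)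
          fun i _ _ => Set.indicator_nonneg (fun _ _ => zero_le_one) _
      have e2 : ∑ r ∈ Finset.range q, t * (1 - fewV d X I r q N t ω)
          ≤ ∑ r ∈ Finset.range q, visits d X I r q N ω := by
        refine Finset.sum_le_sum fun r _ => ?_
        unfold fewV
        split_ifs with hc
        · simpa using visits_nonneg I r q N ω
        · linarith [not_le.1 hc]
      rw [← Finset.mul_sum, Finset.sum_sub_distrib] at e2
      simp only [Finset.sum_const, Finset.card_range, nsmul_eq_mul, mul_one] at e2
      have e3 : (n : ℝ) * p / 10 = t * (q / 2) := by
        rw [ht]; field_simp; norm_num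
      have e4 := le_of_mul_le_mul_left ((e2.trans e1).trans_eq e3) ht0
      rw [div_mul_eq_mul_div, le_div_iff₀ hq0]
      linarith
    · rw [Set.indicator_of_notMem hω]
      positivity
  have hb : ∀ r, ∫ ω, fewV d X I r q N t ω ∂P
      ≤ rexp (-(p / 10) * (n / q)) + n * betaC d (sIter q) φ / q := by
    intro r
    refine (fewV_bound h h1 h2 hq hI r hp hp0.le hp1 N t).trans ?_
    have hNle : (N : ℝ) ≤ n / q := by
      rw [le_div_iff₀ hq0]
      exact_mod_cast hNq
    have hNge : (n : ℝ) / q ≤ 2 * N := by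
      have hN1 : 1 ≤ N := (Nat.one_le_div_iff (by omega)).2 hqn
      have hlt : n < (N + 1) * q := by
        rw [hN, add_mul, one_mul]
        exact Nat.lt_div_mul_add (by omega)
      have : n ≤ 2 * N * q := by nlinarith
      rw [div_le_iff₀ hq0]
      exact_mod_cast this
    have he : rexp (-1) ≤ 0.3679 := by linarith [Real.exp_neg_one_lt_d9]
    have hbase : 1 - p * (1 - rexp (-1)) ≤ rexp (-(p * 0.632)) := by
      have := Real.add_one_le_exp (-(p * 0.632))
      nlinarith
    have hbase0 : 0 ≤ 1 - p * (1 - rexp (-1)) := by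
      nlinarith [Real.exp_pos (-1)]
    gcongr ?_ + ?_
    · calc rexp t * (1 - p * (1 - rexp (-1))) ^ N ≤ rexp t * (rexp (-(p * 0.632))) ^ N := by
            gcongr
        _ = rexp (t + N * (-(p * 0.632))) := by
            rw [Real.exp_add, Real.exp_nat_mul]
        _ ≤ rexp (-(p / 10) * (n / q)) := by
            rw [Real.exp_le_exp]
            have : t = p * (n / q) / 5 := by rw [ht]; field_simp
            rw [this]
            nlinarith
    · rw [mul_div_right_comm]
      gcongr
  calc P.real (RareV d X n p I) = ∫ ω, (RareV d X n p I).indicator (1 : Ω → ℝ) ω ∂P :=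
        (integral_indicator_one hmeas).symm
    _ ≤ ∫ ω, (2 / q) * ∑ r ∈ Finset.range q, fewV d X I r q N t ω ∂P := by
        refine integral_mono ((integrable_const (1 : ℝ)).indicator hmeas) ?_ hpt
        exact (integrable_finsetSum _ fun r _ => fewV_int h hI r q N t).const_mul _
    _ = (2 / q) * ∑ r ∈ Finset.range q, ∫ ω, fewV d X I r q N t ω ∂P := by
        rw [integral_const_mul, integral_finsetSum _ fun r _ => fewV_int h hI r q N t]
    _ ≤ (2 / q) * ∑ r ∈ Finset.range q,
          (rexp (-(p / 10) * (n / q)) + n * betaC d (sIter q) φ / q) := by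
        gcongr with r
        exact hb r
    _ = _ := by
        rw [Finset.sum_const, Finset.card_range, nsmul_eq_mul]
        field_simp

end Occupation

/-! ### Comparing the empirical and the deterministic losses -/

section Loss
variable {d : ℕ} {Ω : Type} [mΩ : MeasurableSpace Ω] {P : Measure Ω}
  {X : ℕ → Ω → (Fin d → ℝ)} {s : (Fin d → ℝ) → (Fin d → ℝ) → ℝ} {φ : (Fin d → ℝ) → ℝ}

/-- The histogram `∑_{K ∈ m} a_K 1_K`. -/
abbrev Hs (d : ℕ) (m : Finset (CubeIdx d)) (a : CubeIdx d → ℝ) (p : (Fin d → ℝ) × (Fin d → ℝ)) : ℝ :=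
  ∑ K ∈ m, a K * indC d K p

lemma measurable_Hs (m : Finset (CubeIdx d)) (a : CubeIdx d → ℝ) : Measurable (Hs d m a) :=
  Finset.measurable_fun_sum _ fun K _ => measurable_const.mul (measurable_indC K)

lemma Hs_nonneg {m : Finset (CubeIdx d)} {a : CubeIdx d → ℝ} (ha : ∀ K ∈ m, 0 ≤ a K) (p) :
    0 ≤ Hs d m a p := Finset.sum_nonneg fun K hK => mul_nonneg (ha K hK) (indC_nonneg _ _)

lemma measurableSet_unitSq (d : ℕ) : MeasurableSet (unitSq d) :=
  measurableSet_Icc.prod measurableSet_Icc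

lemma Hs_le {ℓ : ℕ} {m : Finset (CubeIdx d)} (hm : GoodP d ℓ m) {a : CubeIdx d → ℝ} {c : ℝ}
    (hac : ∀ K ∈ m, a K ≤ c) (p) : Hs d m a p ≤ c * (unitSq d).indicator 1 p := by
  rw [← sum_indC hm p, Finset.mul_sum]
  exact Finset.sum_le_sum fun K hK => mul_le_mul_of_nonneg_right (hac K hK) (indC_nonneg _ _)

lemma unitSq_le_snd (p : (Fin d → ℝ) × (Fin d → ℝ)) :
    (unitSq d).indicator (1 : (Fin d → ℝ) × (Fin d → ℝ) → ℝ) p ≤ (Set.Icc (0 : Fin d → ℝ) 1).indicator 1 p.2 := by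
  by_cases hp : p ∈ unitSq d
  · rw [Set.indicator_of_mem hp, Set.indicator_of_mem hp.2]
    exact le_rfl
  · rw [Set.indicator_of_notMem hp]
    exact Set.indicator_nonneg (fun _ _ => zero_le_one) _

/-- Nonnegative functions whose integrals over the second variable are bounded by `C`. -/
structure Slice (d : ℕ) (G : (Fin d → ℝ) × (Fin d → ℝ) → ℝ) (C : ℝ) : Prop where
  meas : Measurable G
  nonneg : ∀ p, 0 ≤ G p
  int : IntA d G
  le : ∀ x, ∫ y, G (x, y) ≤ C

lemma integral_unit (d : ℕ) :
    ∫ y, (Set.Icc (0 : Fin d → ℝ) 1).indicator (1 : (Fin d → ℝ) → ℝ) y = 1 := by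
  rw [integral_indicator_one measurableSet_Icc, Measure.real, Real.volume_Icc_pi]
  simp

lemma integrable_unit (d : ℕ) :
    Integrable ((Set.Icc (0 : Fin d → ℝ) 1).indicator (1 : (Fin d → ℝ) → ℝ)) := by
  by_contra hn
  have := integral_unit d
  rw [integral_undef hn] at this
  exact zero_ne_one this

lemma Slice.of_le (hs : KerOK d s) {G : (Fin d → ℝ) × (Fin d → ℝ) → ℝ} (hG : Measurable G)
    (hG0 : ∀ p, 0 ≤ G p) {c : ℝ}
    (hle : ∀ p, G p ≤ s p.1 p.2 + c * (Set.Icc (0 : Fin d → ℝ) 1).indicator 1 p.2) :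
    Slice d G (1 + c) := by
  have hi : ∀ x, Integrable fun y =>
      s x y + c * (Set.Icc (0 : Fin d → ℝ) 1).indicator (1 : (Fin d → ℝ) → ℝ) y :=
    fun x => (hs.int x).add ((integrable_unit d).const_mul c)
  have hI : IntA d G := fun x => by
    refine (hi x).mono' (hG.comp measurable_prodMk_left).aestronglyMeasurable
      (Filter.Eventually.of_forall fun y => ?_)
    rw [Real.norm_of_nonneg (hG0 _)]
    exact hle (x, y)
  refine ⟨hG, hG0, hI, fun x => (integral_mono (hI x) (hi x) fun y => hle (x, y)).trans ?_⟩
  rw [integral_add (hs.int x) ((integrable_unit d).const_mul c), integral_const_mul,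
    integral_unit, hs.one, mul_one]

variable {G : (Fin d → ℝ) × (Fin d → ℝ) → ℝ} {C : ℝ}

lemma Slice.meas_int (hG : Slice d G C) : Measurable fun x => ∫ y, G (x, y) :=
  (hG.meas.stronglyMeasurable.integral_prod_right' (ν := (volume : Measure (Fin d → ℝ)))).measurable

lemma Slice.abs_int_le (hG : Slice d G C) (x : Fin d → ℝ) : |∫ y, G (x, y)| ≤ C := by
  rw [abs_of_nonneg (integral_nonneg fun y => hG.nonneg _)]
  exact hG.le x

lemma Slice.integrable (hG : Slice d G C) (h : ChainOK d P X s φ) :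
    Integrable fun p : (Fin d → ℝ) × (Fin d → ℝ) => G p * φ p.1 := by
  have hm : Measurable fun p : (Fin d → ℝ) × (Fin d → ℝ) => G p * φ p.1 :=
    hG.meas.mul (h.measφ.comp measurable_fst)
  rw [Measure.volume_eq_prod, integrable_prod_iff hm.aestronglyMeasurable]
  refine ⟨Filter.Eventually.of_forall fun x => (hG.int x).mul_const (φ x), ?_⟩
  have e : ∀ p : (Fin d → ℝ) × (Fin d → ℝ), ‖G p * φ p.1‖ = G p * φ p.1 := fun p =>
    Real.norm_of_nonneg (mul_nonneg (hG.nonneg p) (h.nonnegφ _))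
  simp only [e, integral_mul_const]
  exact h.int_φ.bdd_mul (c := C) hG.meas_int.aestronglyMeasurable
    (Filter.Eventually.of_forall hG.abs_int_le)

lemma Slice.integral_eq (hG : Slice d G C) (h : ChainOK d P X s φ) :
    ∫ p : (Fin d → ℝ) × (Fin d → ℝ), G p * φ p.1 = ∫ x, (∫ y, G (x, y)) * φ x := by
  have hi := hG.integrable h
  rw [Measure.volume_eq_prod] at hi ⊢
  rw [integral_prod _ hi]
  simp only [integral_mul_const]

lemma Slice.integral_le (hG : Slice d G C) (h : ChainOK d P X s φ) :
    ∫ p : (Fin d → ℝ) × (Fin d → ℝ), G p * φ p.1 ≤ C := by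
  rw [hG.integral_eq h]
  calc ∫ x, (∫ y, G (x, y)) * φ x ≤ ∫ x, C * φ x := by
        refine integral_mono (h.int_φ.bdd_mul (c := C) hG.meas_int.aestronglyMeasurable
          (Filter.Eventually.of_forall hG.abs_int_le)) (h.int_φ.const_mul C) fun x => ?_
        exact mul_le_mul_of_nonneg_right (hG.le x) (h.nonnegφ x)
    _ = C := by rw [integral_const_mul, h.integral_φ, mul_one]

/-- By stationarity the empirical integral has the deterministic one as its mean. -/
lemma Slice.Ea_mean (hG : Slice d G C) (h : ChainOK d P X s φ) {n : ℕ} (hn : 0 < n) :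
    Integrable (fun ω => Ea d n (fun i => X i ω) G) P ∧
    ∫ ω, Ea d n (fun i => X i ω) G ∂P = ∫ p : (Fin d → ℝ) × (Fin d → ℝ), G p * φ p.1 := by
  have := h.prob
  have hi : ∀ i, Integrable (fun ω => ∫ y, G (X i ω, y)) P := fun i =>
    integrable_bdd (hG.meas_int.comp (h.measX i)) fun ω => hG.abs_int_le _
  have hn' : (n : ℝ) ≠ 0 := by exact_mod_cast hn.ne'
  refine ⟨(integrable_finsetSum _ fun i _ => hi i).const_mul _, ?_⟩
  unfold Ea
  rw [integral_const_mul, integral_finsetSum _ fun i _ => hi i, hG.integral_eq h]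
  have e : ∀ i ∈ Finset.range n, ∫ ω, (∫ y, G (X i ω, y)) ∂P = ∫ x, (∫ y, G (x, y)) * φ x :=
    fun i _ => h.stat_int i hG.meas_int
  rw [Finset.sum_congr rfl e, Finset.sum_const, Finset.card_range, nsmul_eq_mul]
  field_simp

/-- The loss density `1_A (√s - √g)²`. -/
def lossS (d : ℕ) (s : (Fin d → ℝ) → (Fin d → ℝ) → ℝ) (g : (Fin d → ℝ) × (Fin d → ℝ) → ℝ) :
    (Fin d → ℝ) × (Fin d → ℝ) → ℝ :=
  (unitSq d).indicator fun p => (√(s p.1 p.2) - √(g p)) ^ 2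

lemma hellDet_eq (s : (Fin d → ℝ) → (Fin d → ℝ) → ℝ) (φ : (Fin d → ℝ) → ℝ)
    (g : (Fin d → ℝ) × (Fin d → ℝ) → ℝ) :
    hellDet d φ (sIndA d s) g = 1 / 2 * ∫ p, lossS d s g p * φ p.1 := by
  unfold hellDet
  rw [← integral_indicator (measurableSet_unitSq d)]
  congr 2
  funext p
  unfold lossS sIndA
  by_cases hp : p ∈ unitSq d
  · simp only [Set.indicator_of_mem hp]
  · simp only [Set.indicator_of_notMem hp, zero_mul]

lemma sqrt_sub_sq_le {u v : ℝ} (hu : 0 ≤ u) (hv : 0 ≤ v) : (√u - √v) ^ 2 ≤ u + v := by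
  nlinarith [Real.sq_sqrt hu, Real.sq_sqrt hv, mul_nonneg (Real.sqrt_nonneg u) (Real.sqrt_nonneg v)]

lemma slice_lossS (hs : KerOK d s) {ℓ : ℕ} {m : Finset (CubeIdx d)} (hm : GoodP d ℓ m)
    {a : CubeIdx d → ℝ} (ha : ∀ K ∈ m, 0 ≤ a K) {c : ℝ} (hc : 0 ≤ c) (hac : ∀ K ∈ m, a K ≤ c) :
    Slice d (lossS d s (Hs d m a)) (1 + c) := by
  refine Slice.of_le hs ?_ (fun p => Set.indicator_nonneg (fun _ _ => sq_nonneg _) _) fun p => ?_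
  · refine Measurable.indicator ?_ (measurableSet_unitSq d)
    exact ((hs.meas.sqrt).sub (measurable_Hs m a).sqrt).pow_const 2
  · have h1 := (Hs_le hm hac p).trans (mul_le_mul_of_nonneg_left (unitSq_le_snd p) hc)
    have h2 := Hs_nonneg ha p
    by_cases hp : p ∈ unitSq d
    · rw [Set.indicator_of_mem hp]
      exact (sqrt_sub_sq_le (hs.nonneg _ _) h2).trans (add_le_add_right h1 _)
    · rw [Set.indicator_of_notMem hp]
      exact add_nonneg (hs.nonneg _ _) (h2.trans h1)

lemma slice_hist (hs : KerOK d s) {ℓ : ℕ} {m m' : Finset (CubeIdx d)} (hm : GoodP d ℓ m)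
    (hm' : GoodP d ℓ m') {a a' : CubeIdx d → ℝ} (ha : ∀ K ∈ m, 0 ≤ a K) (ha' : ∀ K ∈ m', 0 ≤ a' K)
    {c c' : ℝ} (hc : 0 ≤ c) (hc' : 0 ≤ c') (hac : ∀ K ∈ m, a K ≤ c) (hac' : ∀ K ∈ m', a' K ≤ c') :
    Slice d (fun p => (√(Hs d m a p) - √(Hs d m' a' p)) ^ 2) (1 + (c + c')) := by
  refine Slice.of_le hs ?_ (fun p => sq_nonneg _) fun p => ?_
  · exact ((measurable_Hs m a).sqrt.sub (measurable_Hs m' a').sqrt).pow_const 2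
  · have h1 := (Hs_le hm hac p).trans (mul_le_mul_of_nonneg_left (unitSq_le_snd p) hc)
    have h1' := (Hs_le hm' hac' p).trans (mul_le_mul_of_nonneg_left (unitSq_le_snd p) hc')
    have h3 := sqrt_sub_sq_le (Hs_nonneg ha p) (Hs_nonneg ha' p)
    have h4 := hs.nonneg p.1 p.2
    linarith

lemma sum_Wt_eq (hs : DensOK d s) {ℓ n : ℕ} {x : ℕ → Fin d → ℝ} {m : Finset (CubeIdx d)}
    (hm : GoodP d ℓ m) (a : CubeIdx d → ℝ) :
    ∑ K ∈ m, Wt d n x s (indC d K) (a K) = Ea d n x (lossS d s (Hs d m a)) := by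
  unfold Wt
  rw [← Ea_sum m (fun K p => indC d K p * (√(s p.1 p.2) - √(a K)) ^ 2)]
  · congr 1
    funext p
    have e : ∀ K ∈ m, indC d K p * (√(s p.1 p.2) - √(a K)) ^ 2
        = indC d K p * (√(s p.1 p.2) - √(Hs d m a p)) ^ 2 := by
      intro K hK
      rcases indC_zero_or_one K p with h | h
      · rw [h, zero_mul, zero_mul]
      · rw [show Hs d m a p = a K from hist_at hm hK h]
    rw [Finset.sum_congr rfl e, ← Finset.sum_mul, sum_indC hm p]
    unfold lossS
    by_cases hp : p ∈ unitSq d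
    · rw [Set.indicator_of_mem hp, Set.indicator_of_mem hp, Pi.one_apply, one_mul]
    · rw [Set.indicator_of_notMem hp, Set.indicator_of_notMem hp, zero_mul]
  · intro K _
    exact IntA_Wt hs (IntA_indC K) (indC_nonneg K) (indC_le_one K) (measurable_indC K) _

/-- Multi-indices of the cells of the regular grid of mesh `2^{-ℓ}` of `[0,1]^d`. -/
abbrev cells (d ℓ : ℕ) : Finset (Fin d → ℕ) :=
  Fintype.piFinset (fun _ : Fin d => Finset.range (2 ^ ℓ))

lemma lt_of_mem_cells {ℓ : ℕ} {k : Fin d → ℕ} (hk : k ∈ cells d ℓ) (i) : k i < 2 ^ ℓ :=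
  Finset.mem_range.1 (Fintype.mem_piFinset.1 hk i)

lemma card_cells (d ℓ : ℕ) : (cells d ℓ).card = 2 ^ (ℓ * d) := by
  simp [cells, Fintype.card_piFinset, pow_mul]

/-- The stationary probability of a cell. -/
def cellP (d ℓ : ℕ) (φ : (Fin d → ℝ) → ℝ) (k : Fin d → ℕ) : ℝ :=
  ∫ x, (boxS d ℓ k).indicator 1 x * φ x

lemma cell_int (h : ChainOK d P X s φ) (ℓ : ℕ) (k : Fin d → ℕ) :
    Integrable fun x => (boxS d ℓ k).indicator (1 : (Fin d → ℝ) → ℝ) x * φ x :=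
  h.int_φ.bdd_mul (c := 1) (measurable_one.indicator (measurableSet_boxS d ℓ k)).aestronglyMeasurable
    (Filter.Eventually.of_forall fun x => abs_indicator_le _ x)

/-- If every cell receives at least a tenth of its expected number of visits, then the
`φ`-integral of a function that is constant on the cells is at most ten times its empirical
mean. -/
lemma occ_compare (h : ChainOK d P X s φ) {ℓ n : ℕ} (hn : 0 < n) {x : ℕ → Fin d → ℝ}
    (hx : ∀ k ∈ cells d ℓ, n * cellP d ℓ φ k / 10
      ≤ ∑ i ∈ Finset.range n, (boxS d ℓ k).indicator (1 : (Fin d → ℝ) → ℝ) (x i))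
    {F : (Fin d → ℝ) → ℝ} (hF0 : ∀ z, 0 ≤ F z) (hFoff : ∀ z, z ∉ Set.Icc (0 : Fin d → ℝ) 1 → F z = 0)
    (hFc : ∀ k ∈ cells d ℓ, ∀ z ∈ boxS d ℓ k, ∀ z' ∈ boxS d ℓ k, F z = F z') :
    ∫ z, F z * φ z ≤ 10 * (1 / n * ∑ i ∈ Finset.range n, F (x i)) := by
  have hn' : (0 : ℝ) < n := by exact_mod_cast hn
  have hc : ∀ k, ∃ c, 0 ≤ c ∧ (k ∈ cells d ℓ → ∀ z ∈ boxS d ℓ k, F z = c) := by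
    intro k
    by_cases hne : (boxS d ℓ k).Nonempty
    · obtain ⟨z, hz⟩ := hne
      exact ⟨F z, hF0 z, fun hk z' hz' => hFc k hk z' hz' z hz⟩
    · exact ⟨0, le_rfl, fun _ z hz => absurd ⟨z, hz⟩ hne⟩
  choose c hc0 hc using hc
  have hF : ∀ z, F z = ∑ k ∈ cells d ℓ, c k * (boxS d ℓ k).indicator (1 : (Fin d → ℝ) → ℝ) z := by
    intro z
    have e : ∀ k ∈ cells d ℓ, c k * (boxS d ℓ k).indicator (1 : (Fin d → ℝ) → ℝ) z
        = F z * (boxS d ℓ k).indicator (1 : (Fin d → ℝ) → ℝ) z := by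
      intro k hk
      by_cases hz : z ∈ boxS d ℓ k
      · rw [hc k hk z hz]
      · rw [Set.indicator_of_notMem hz, mul_zero, mul_zero]
    rw [Finset.sum_congr rfl e, ← Finset.mul_sum, sum_boxS]
    by_cases hz : z ∈ Set.Icc (0 : Fin d → ℝ) 1
    · rw [Set.indicator_of_mem hz, Pi.one_apply, mul_one]
    · rw [hFoff z hz, zero_mul]
  have e1 : ∫ z, F z * φ z = ∑ k ∈ cells d ℓ, c k * cellP d ℓ φ k := by
    simp only [hF, Finset.sum_mul, mul_assoc]
    rw [integral_finsetSum _ fun k _ => (cell_int h ℓ k).const_mul (c k)]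
    simp only [integral_const_mul]
    rfl
  have e2 : ∑ i ∈ Finset.range n, F (x i) = ∑ k ∈ cells d ℓ, c k *
      ∑ i ∈ Finset.range n, (boxS d ℓ k).indicator (1 : (Fin d → ℝ) → ℝ) (x i) := by
    simp only [hF, Finset.mul_sum]
    exact Finset.sum_comm
  rw [e1, e2, Finset.mul_sum, Finset.mul_sum]
  refine Finset.sum_le_sum fun k hk => ?_
  have := mul_le_mul_of_nonneg_left (hx k hk) (hc0 k)
  calc c k * cellP d ℓ φ k = 10 * (1 / n * (c k * (n * cellP d ℓ φ k / 10))) := by field_simp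
    _ ≤ _ := by gcongr

/-- Deterministic control of the true loss by the empirical one when all the cells are visited
often enough. -/
lemma hell_le (h : ChainOK d P X s φ) {ℓ n : ℕ} (hn : 0 < n) {x : ℕ → Fin d → ℝ}
    (hx : ∀ k ∈ cells d ℓ, n * cellP d ℓ φ k / 10
      ≤ ∑ i ∈ Finset.range n, (boxS d ℓ k).indicator (1 : (Fin d → ℝ) → ℝ) (x i))
    {m m' : Finset (CubeIdx d)} (hm : GoodP d ℓ m) (hm' : GoodP d ℓ m') {a a' : CubeIdx d → ℝ}
    (ha : ∀ K ∈ m, 0 ≤ a K) (ha' : ∀ K ∈ m', 0 ≤ a' K) :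
    hellDet d φ (sIndA d s) (Hs d m' a') ≤ 2 * hellDet d φ (sIndA d s) (Hs d m a)
      + 10 * Ea d n x (fun p => (√(Hs d m a p) - √(Hs d m' a' p)) ^ 2) := by
  have hs := h.ker
  set c := ∑ K ∈ m, a K with hc
  set c' := ∑ K ∈ m', a' K with hc'
  have c0 : 0 ≤ c := Finset.sum_nonneg ha
  have c0' : 0 ≤ c' := Finset.sum_nonneg ha'
  have hac : ∀ K ∈ m, a K ≤ c := fun K hK => Finset.single_le_sum ha hK
  have hac' : ∀ K ∈ m', a' K ≤ c' := fun K hK => Finset.single_le_sum ha' hK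
  have S1 := slice_lossS hs hm ha c0 hac
  have S2 := slice_lossS hs hm' ha' c0' hac'
  have S3 := slice_hist hs hm hm' ha ha' c0 c0' hac hac'
  have hocc := occ_compare h hn hx (F := fun z => ∫ y, (√(Hs d m a (z, y)) - √(Hs d m' a' (z, y))) ^ 2)
    (fun z => integral_nonneg fun y => sq_nonneg _) (fun z hz => ?_) (fun k hk z hz z' hz' => ?_)
  · rw [← S3.integral_eq h] at hocc
    have hle : ∫ p, lossS d s (Hs d m' a') p * φ p.1
        ≤ ∫ p : (Fin d → ℝ) × (Fin d → ℝ), (2 * (lossS d s (Hs d m a) p * φ p.1)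
          + 2 * ((√(Hs d m a p) - √(Hs d m' a' p)) ^ 2 * φ p.1)) := by
      refine integral_mono (S2.integrable h)
        (((S1.integrable h).const_mul 2).add ((S3.integrable h).const_mul 2)) fun p => ?_
      have hp0 := h.nonnegφ p.1
      have : lossS d s (Hs d m' a') p ≤ 2 * lossS d s (Hs d m a) p
          + 2 * (√(Hs d m a p) - √(Hs d m' a' p)) ^ 2 := by
        unfold lossS
        by_cases hp : p ∈ unitSq d
        · rw [Set.indicator_of_mem hp, Set.indicator_of_mem hp]
          nlinarith [sq_nonneg ((√(s p.1 p.2) - √(Hs d m a p)) - (√(Hs d m a p) - √(Hs d m' a' p)))]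
        · rw [Set.indicator_of_notMem hp, Set.indicator_of_notMem hp]
          positivity
      simp only
      nlinarith
    rw [integral_add ((S1.integrable h).const_mul 2) ((S3.integrable h).const_mul 2),
      integral_const_mul, integral_const_mul] at hle
    rw [hellDet_eq, hellDet_eq]
    unfold Ea
    linarith
  · have : ∀ y, (z, y) ∉ unitSq d := fun y hy => hz hy.1
    simp only [Hs, hist_off hm (this _), hist_off hm' (this _), sub_self]
    simp
  · have hk' := lt_of_mem_cells hk
    have e : ∀ {m : Finset (CubeIdx d)} (_ : GoodP d ℓ m) (a : CubeIdx d → ℝ) (y),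
        Hs d m a (z, y) = Hs d m a (z', y) := fun hm a y =>
      Finset.sum_congr rfl fun K hK => by
        rw [indC_eq_of_cell (hm.valid K hK) (hm.level K hK) hk' hz hz' y]
    simp only [e hm, e hm']

lemma hellDet_nonneg (hφ : ∀ x, 0 ≤ φ x) (f g : (Fin d → ℝ) × (Fin d → ℝ) → ℝ) :
    0 ≤ hellDet d φ f g :=
  mul_nonneg (by norm_num) (integral_nonneg fun p => mul_nonneg (sq_nonneg _) (hφ _))

/-- As the histogram values are at most `2^{ℓd}`, the loss is at most `(1 + 2^{ℓd}) / 2`. -/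
lemma hellDet_le (h : ChainOK d P X s φ) {ℓ n : ℕ} {x : ℕ → Fin d → ℝ} {m : Finset (CubeIdx d)}
    (hm : GoodP d ℓ m) :
    hellDet d φ (sIndA d s) (Hs d m (hv d n x)) ≤ 2 ^ (ℓ * d) := by
  have h1 : (1 : ℝ) ≤ 2 ^ (ℓ * d) := one_le_pow₀ (by norm_num)
  have S := slice_lossS h.ker hm (fun K _ => hv_nonneg (n := n) (x := x) K)
    (c := 2 ^ (ℓ * d)) (by positivity) (fun K hK => (hv_le K).trans
      (pow_le_pow_right₀ (by norm_num) (Nat.mul_le_mul_right d (hm.level K hK))))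
  rw [hellDet_eq]
  linarith [S.integral_le h]

end Loss

/-! ### Risk bound for a fixed partition, a fixed histogram and a fixed lag -/

section Risk
variable {d : ℕ} {Ω : Type} [mΩ : MeasurableSpace Ω] {P : Measure Ω}
  {X : ℕ → Ω → (Fin d → ℝ)} {s : (Fin d → ℝ) → (Fin d → ℝ) → ℝ} {φ : (Fin d → ℝ) → ℝ}
  {κ : ℝ}

lemma le_cellP (h : ChainOK d P X s φ) (hκ : ∀ x ∈ Set.Icc (0 : Fin d → ℝ) 1, κ ≤ φ x) {ℓ : ℕ}
    {k : Fin d → ℕ} (hk : k ∈ cells d ℓ) : κ / 2 ^ (ℓ * d) ≤ cellP d ℓ φ k := by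
  have e : κ / 2 ^ (ℓ * d) = ∫ x, κ * (boxS d ℓ k).indicator (1 : (Fin d → ℝ) → ℝ) x := by
    rw [integral_const_mul, integral_indicator_one (measurableSet_boxS _ _ _), measureReal_def,
      volume_boxS, ENNReal.toReal_ofReal (by positivity), div_eq_mul_inv]
  rw [e]
  refine integral_mono ((integrable_indicator_boxS d ℓ k).const_mul κ) (cell_int h ℓ k) fun x => ?_
  simp only
  by_cases hx : x ∈ boxS d ℓ k
  · rw [Set.indicator_of_mem hx, Pi.one_apply, mul_one, one_mul]
    exact hκ x (boxS_subset (lt_of_mem_cells hk) hx)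
  · rw [Set.indicator_of_notMem hx, mul_zero, zero_mul]

lemma cellP_le_one (h : ChainOK d P X s φ) (ℓ : ℕ) (k : Fin d → ℕ) : cellP d ℓ φ k ≤ 1 := by
  rw [← h.integral_φ]
  refine integral_mono (cell_int h ℓ k) h.int_φ fun x => ?_
  exact mul_le_of_le_one_left (h.nonnegφ x) ((le_abs_self _).trans (abs_indicator_le _ x))

lemma kappa_le_one (h : ChainOK d P X s φ) (hκ : ∀ x ∈ Set.Icc (0 : Fin d → ℝ) 1, κ ≤ φ x) :
    κ ≤ 1 := by
  have e : κ = ∫ x, κ * (Set.Icc (0 : Fin d → ℝ) 1).indicator (1 : (Fin d → ℝ) → ℝ) x := by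
    rw [integral_const_mul, integral_unit, mul_one]
  rw [e, ← h.integral_φ]
  refine integral_mono ((integrable_unit d).const_mul κ) h.int_φ fun x => ?_
  simp only
  by_cases hx : x ∈ Set.Icc (0 : Fin d → ℝ) 1
  · rw [Set.indicator_of_mem hx, Pi.one_apply, mul_one]
    exact hκ x hx
  · rw [Set.indicator_of_notMem hx, mul_zero]
    exact h.nonnegφ x

/-- The event outside which the risk is controlled: some empirical frequency deviates from its
compensator, or some cell is visited too rarely. -/
def BadAll (d : ℕ) {Ω : Type} (X : ℕ → Ω → (Fin d → ℝ)) (s : (Fin d → ℝ) → (Fin d → ℝ) → ℝ)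
    (φ : (Fin d → ℝ) → ℝ) (ℓ n : ℕ) : Set Ω :=
  BadDev d X s ℓ n (6 * Real.log n) ∪
    ⋃ k ∈ cells d ℓ, RareV d X n (cellP d ℓ φ k) (boxS d ℓ k)

variable {sIter : ℕ → (Fin d → ℝ) → (Fin d → ℝ) → ℝ}

/-- The remainder term attached to the lag `q`. -/
def remQ (κ : ℝ) (n q D : ℕ) (β : ℝ) : ℝ :=
  rexp (-(κ / 10) * ((n : ℝ) / (q * 2 ^ D))) + (n : ℝ) * β / q

/-- If `2^{ℓd} ≤ n`, there are at most `n ^ 3` dyadic cubes of level at most `ℓ`, so that the deviation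
level `6 log n` makes the contribution of the deviations negligible. -/
lemma BadAll_prob (h : ChainOK d P X s φ) (h1 : sIter 1 = s)
    (h2 : ∀ q x y, sIter (q + 1) x y = ∫ z, sIter q x z * s z y) (hκ0 : 0 < κ)
    (hκ : ∀ x ∈ Set.Icc (0 : Fin d → ℝ) 1, κ ≤ φ x) {ℓ n q : ℕ} (hd : 0 < d)
    (hq : 1 ≤ q) (hqn : q ≤ n) (hB : 2 ^ (ℓ * d) ≤ n) :
    P.real (BadAll d X s φ ℓ n) ≤ 2 / (n : ℝ) ^ 2
      + 2 ^ (ℓ * d) * (2 * remQ κ n q (ℓ * d) (betaC d (sIter q) φ)) := by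
  have := h.prob
  have hn0 : (0 : ℝ) < n := by exact_mod_cast (hq.trans hqn)
  have hq0 : (0 : ℝ) < q := by exact_mod_cast hq
  refine (measureReal_union_le _ _).trans (add_le_add ?_ ?_)
  · refine (BadDev_prob h ℓ n _).trans ?_
    have hc : ((allC d ℓ).card : ℝ) ≤ (n : ℝ) ^ 3 := by
      have c1 : ℓ + 1 ≤ 2 ^ (ℓ * d) :=
        (Nat.lt_two_pow_self (n := ℓ)).trans_le
          (Nat.pow_le_pow_right (by norm_num) (Nat.le_mul_of_pos_right ℓ hd))
      have c2 : (allC d ℓ).card ≤ n ^ 3 := by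
        calc (allC d ℓ).card ≤ (ℓ + 1) * 2 ^ (2 * (ℓ * d)) := card_allC d ℓ
          _ = (ℓ + 1) * (2 ^ (ℓ * d)) ^ 2 := by rw [← pow_mul, mul_comm 2]
          _ ≤ n * n ^ 2 := by
              gcongr
              exact c1.trans hB
          _ = n ^ 3 := by ring
      exact_mod_cast c2
    have he : rexp (-(6 * Real.log n)) = ((n : ℝ) ^ 6)⁻¹ := by
      rw [Real.exp_neg, show (6 : ℝ) * Real.log n = ((6 : ℕ) : ℝ) * Real.log n by norm_num,
        Real.exp_nat_mul, Real.exp_log hn0]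
    rw [he]
    calc ((allC d ℓ).card : ℝ) * (n * (2 * ((n : ℝ) ^ 6)⁻¹))
        ≤ (n : ℝ) ^ 3 * (n * (2 * ((n : ℝ) ^ 6)⁻¹)) := by gcongr
      _ = 2 / (n : ℝ) ^ 2 := by field_simp
  · refine (measureReal_biUnion_finset_le _ _).trans ?_
    refine (Finset.sum_le_sum (g := fun _ => 2 * remQ κ n q (ℓ * d) (betaC d (sIter q) φ))
      fun k hk => ?_).trans (le_of_eq ?_)
    · have hp := le_cellP h hκ hk
      have hp0 : 0 < cellP d ℓ φ k := lt_of_lt_of_le (by positivity) hp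
      refine (RareV_prob h h1 h2 hq hqn (measurableSet_boxS d ℓ k) (p := cellP d ℓ φ k) rfl hp0
        (cellP_le_one h ℓ k)).trans ?_
      unfold remQ
      refine mul_le_mul_of_nonneg_left (add_le_add ?_ le_rfl) (by norm_num)
      rw [Real.exp_le_exp]
      have e : κ / 10 * ((n : ℝ) / (q * 2 ^ (ℓ * d))) = κ / 2 ^ (ℓ * d) / 10 * (n / q) := by
        field_simp
      rw [neg_mul, neg_mul, e, neg_le_neg_iff]
      gcongr
    · rw [Finset.sum_const, card_cells, nsmul_eq_mul]
      push_cast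
      rfl

/-- The risk bound before the infima are taken. On the good event the oracle inequality applies; the
bad event contributes at most `2^{ℓd}` times its probability. -/
lemma risk_bound (h : ChainOK d P X s φ) (h1 : sIter 1 = s)
    (h2 : ∀ q x y, sIter (q + 1) x y = ∫ z, sIter q x z * s z y) (hκ0 : 0 < κ)
    (hκ : ∀ x ∈ Set.Icc (0 : Fin d → ℝ) 1, κ ≤ φ x) {ℓ n q : ℕ} (hd : 0 < d) (hn : 3 < n)
    (hq : 1 ≤ q) (hqn : q ≤ n) {L : ℝ} (hL : 6912 ≤ L) {mhat : Ω → Finset (CubeIdx d)}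
    (hmh : ∀ ω, mhat ω ∈ Mpart d ℓ)
    (hsel : ∀ ω, gammaSel d n X L (ℓ : ℕ∞) ω (mhat ω)
      ≤ (⨅ m : Mpart d ℓ, gammaSel d n X L (ℓ : ℕ∞) ω (m : Finset (CubeIdx d))) + 1 / n)
    {m : Finset (CubeIdx d)} (hm : m ∈ Mpart d ℓ) {a : CubeIdx d → ℝ} (ha : ∀ K ∈ m, 0 ≤ a K) :
    ∫ ω, hellDet d φ (sIndA d s) (histEst d n X (mhat ω) ω) ∂P
      ≤ 10000 * (hellDet d φ (sIndA d s) (Hs d m a) + penC L n m.card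
        + 2 ^ (3 * ℓ * d) * remQ κ n q (ℓ * d) (betaC d (sIter q) φ)) := by
  have := h.prob
  have gm := GoodP.of_mem hm
  have hn0 : (0 : ℝ) < n := by exact_mod_cast (by omega : 0 < n)
  have hq0 : (0 : ℝ) < q := by exact_mod_cast hq
  have hq1 : (1 : ℝ) ≤ q := by exact_mod_cast hq
  have hβ := betaC_nonneg (sIter q) h.nonnegφ
  set B : ℝ := 2 ^ (ℓ * d) with hB
  have hB1 : 1 ≤ B := one_le_pow₀ (by norm_num)
  have hB3 : (2 : ℝ) ^ (3 * ℓ * d) = B ^ 3 := by rw [hB, ← pow_mul]; ring_nf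
  set R := remQ κ n q (ℓ * d) (betaC d (sIter q) φ) with hR
  have hR1 : rexp (-(κ / 10) * ((n : ℝ) / (q * B))) ≤ R := by
    rw [hR]
    unfold remQ
    exact le_add_of_nonneg_right (by positivity)
  have hR0 : 0 ≤ R := (Real.exp_pos _).le.trans hR1
  set H := hellDet d φ (sIndA d s) (Hs d m a) with hH
  have hH0 : 0 ≤ H := hellDet_nonneg h.nonnegφ _ _
  have hlog : 1 ≤ Real.log n := by
    rw [Real.le_log_iff_exp_le hn0]
    have h4 : (4 : ℝ) ≤ n := by exact_mod_cast hn
    linarith [Real.exp_one_lt_d9]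
  set π₁ := penC L n 1 with hπ₁
  have hπe : π₁ = L * Real.log n / n := by
    rw [hπ₁]
    unfold penC
    norm_num
  have hπn : 1 / (n : ℝ) ≤ π₁ := by
    rw [hπe]
    gcongr
    nlinarith
  have hπ0 : 0 ≤ π₁ := le_trans (by positivity) hπn
  have hcard : 1 ≤ m.card := by
    obtain ⟨K, hK, _⟩ := gm.cover (fun _ => 0) (fun _ => ⟨le_rfl, zero_le_one⟩)
    exact Finset.card_pos.2 ⟨K, hK⟩
  set Q := penC L n m.card with hQ
  have hπQ : π₁ ≤ Q := by
    rw [hQ, penC_eq]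
    exact le_mul_of_one_le_left hπ0 (by exact_mod_cast hcard)
  rw [hB3]
  have hhist : ∀ ω, histEst d n X (mhat ω) ω = Hs d (mhat ω) (hv d n (fun i => X i ω)) :=
    fun ω => rfl
  have htriv : ∀ ω, hellDet d φ (sIndA d s) (histEst d n X (mhat ω) ω) ≤ B := fun ω => by
    rw [hhist]
    exact hellDet_le h (GoodP.of_mem (hmh ω))
  have hnn : ∀ ω, 0 ≤ hellDet d φ (sIndA d s) (histEst d n X (mhat ω) ω) := fun ω =>
    hellDet_nonneg h.nonnegφ _ _
  by_cases hBn : 2 ^ (ℓ * d) ≤ n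
  · have hBn' : B ≤ n := by rw [hB]; exact_mod_cast hBn
    have hbad := BadAll_prob h h1 h2 hκ0 hκ hd hq hqn hBn
    -- the measurable hull avoids any measurability question about the bad event
    set T := toMeasurable P (BadAll d X s φ ℓ n) with hT
    have hTm : MeasurableSet T := measurableSet_toMeasurable _ _
    have hTP : P.real T = P.real (BadAll d X s φ ℓ n) := by
      rw [measureReal_def, measureReal_def, hT, measure_toMeasurable]
    have hS := slice_lossS h.ker gm ha (Finset.sum_nonneg ha)
      (fun K hK => Finset.single_le_sum ha hK)
    obtain ⟨hEi, hEm⟩ := hS.Ea_mean h (n := n) (by omega)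
    set E : Ω → ℝ := fun ω => Ea d n (fun i => X i ω) (lossS d s (Hs d m a)) with hE
    have hE0 : ∀ ω, 0 ≤ E ω := fun ω => Ea_nonneg hS.nonneg
    have hpt : ∀ ω, hellDet d φ (sIndA d s) (histEst d n X (mhat ω) ω)
        ≤ (2 * H + 10 * (348 * E ω + 102 * Q)) + B * T.indicator (1 : Ω → ℝ) ω := by
      intro ω
      by_cases hω : ω ∈ T
      · rw [Set.indicator_of_mem hω, Pi.one_apply, mul_one]
        have := hE0 ω
        have hQ0 := hπ0.trans hπQ
        linarith [htriv ω]
      · rw [Set.indicator_of_notMem hω, mul_zero, add_zero]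
        have hω' : ω ∉ BadAll d X s φ ℓ n := fun hb => hω (subset_toMeasurable _ _ hb)
        unfold BadAll at hω'
        rw [Set.mem_union, not_or] at hω'
        obtain ⟨b1, b2⟩ := hω'
        simp only [Set.mem_iUnion, not_exists] at b2
        have hdev := dev_of_not_bad h (by omega : 1 ≤ n) (by linarith) b1
        have horc := oracle_det (m := m) (mh := mhat ω) (X := X) (ω := ω) (L := L)
          (by omega) h.dens (by positivity) hdev ?_ hπn hm (hmh ω) (hsel ω) a
        · rw [sum_Wt_eq h.dens gm] at horc
          have hl := hell_le h (by omega : 0 < n) (x := fun i => X i ω) (ℓ := ℓ)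
            (fun k hk => ?_) gm (GoodP.of_mem (hmh ω)) ha
            (fun K _ => hv_nonneg (n := n) (x := fun i => X i ω) K)
          · rw [hhist]
            refine hl.trans ?_
            have : Ea d n (fun i => X i ω) (fun p => (√(Hs d m a p)
                - √(Hs d (mhat ω) (hv d n (fun i => X i ω)) p)) ^ 2) ≤ 348 * E ω + 102 * Q := horc
            linarith
          · have := b2 k hk
            unfold RareV at this
            rw [Set.mem_ofPred_eq, not_le] at this
            exact this.le
        · rw [mul_pow, Real.sq_sqrt (by positivity), ← hπ₁, hπe]
          have : 72 * ((4 : ℝ) ^ 2 * (6 * Real.log n / n)) = 6912 * Real.log n / n := by ring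
          rw [this]
          gcongr
    have hi1 : Integrable (fun ω => 2 * H + 10 * (348 * E ω + 102 * Q)) P :=
      (integrable_const _).add (((hEi.const_mul 348).add (integrable_const _)).const_mul 10)
    have hi2 : Integrable (fun ω => B * T.indicator (1 : Ω → ℝ) ω) P :=
      ((integrable_const (1 : ℝ)).indicator hTm).const_mul B
    have hint := integral_mono_of_nonneg (μ := P) (Filter.Eventually.of_forall hnn) (hi1.add hi2)
      (Filter.Eventually.of_forall hpt)
    have heq : ∫ ω, ((2 * H + 10 * (348 * E ω + 102 * Q)) + B * T.indicator (1 : Ω → ℝ) ω) ∂P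
        = 2 * H + 10 * (348 * (2 * H) + 102 * Q) + B * P.real T := by
      have e1 : ∫ ω, (2 * H + 10 * (348 * E ω + 102 * Q)) ∂P
          = 2 * H + 10 * (348 * (2 * H) + 102 * Q) := by
        have : (fun ω => 2 * H + 10 * (348 * E ω + 102 * Q))
            = fun ω => (2 * H + 1020 * Q) + 3480 * E ω := by
          funext ω
          ring
        rw [this, integral_add (integrable_const _) (hEi.const_mul 3480), integral_const_mul, hEm,
          hH, hellDet_eq]
        simp only [integral_const, probReal_univ, one_smul]
        ring
      rw [integral_add hi1 hi2, e1, integral_const_mul, integral_indicator_one hTm]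
    have hb2 : B * P.real T ≤ 2 * π₁ + 2 * (B ^ 3 * R) := by
      rw [hTP]
      calc B * P.real (BadAll d X s φ ℓ n) ≤ B * (2 / (n : ℝ) ^ 2 + B * (2 * R)) := by gcongr
        _ = B * (2 / (n : ℝ) ^ 2) + 2 * (B ^ 2 * R) := by ring
        _ ≤ n * (2 / (n : ℝ) ^ 2) + 2 * (B ^ 3 * R) := by
            gcongr
            norm_num
        _ = 2 * (1 / n) + 2 * (B ^ 3 * R) := by field_simp
        _ ≤ _ := by gcongr
    have hBR : 0 ≤ B ^ 3 * R := by positivity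
    have hQ0 := hπ0.trans hπQ
    calc ∫ ω, hellDet d φ (sIndA d s) (histEst d n X (mhat ω) ω) ∂P
        ≤ 2 * H + 10 * (348 * (2 * H) + 102 * Q) + B * P.real T := hint.trans heq.le
      _ ≤ _ := by linarith
  -- when `n < 2^{ℓd}` the exponential is at least `9/10` and the trivial bound suffices
  · have hBn' : (n : ℝ) ≤ B := by
      rw [hB]
      exact_mod_cast (not_le.1 hBn).le
    have hint : ∫ ω, hellDet d φ (sIndA d s) (histEst d n X (mhat ω) ω) ∂P ≤ ∫ _, B ∂P :=
      integral_mono_of_nonneg (Filter.Eventually.of_forall hnn) (integrable_const B)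
        (Filter.Eventually.of_forall htriv)
    simp only [integral_const, probReal_univ, one_smul] at hint
    have hκ1 := kappa_le_one h hκ
    have hfrac : (n : ℝ) / (q * B) ≤ 1 := by
      rw [div_le_one (by positivity)]
      nlinarith
    have hfrac0 : 0 ≤ (n : ℝ) / (q * B) := by positivity
    have hexp := Real.add_one_le_exp (-(κ / 10) * ((n : ℝ) / (q * B)))
    have hR9 : 9 / 10 ≤ R := by nlinarith
    have hB3' : B ≤ B ^ 3 := le_self_pow₀ hB1 (by norm_num)
    have hQ0 := hπ0.trans hπQ
    have : B * (9 / 10) ≤ B ^ 3 * R := by gcongr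
    linarith

end Risk

/-- **Theorem 2 of the paper.** Under stationarity, with a stationary density
`φ ≥ κ₀ > 0` on `[0,1]^d`, the selected estimator `ŝ = ŝ(L,ℓ)` satisfies
`C E[h²(s 1_A, ŝ)] ≤ inf_{m ∈ 𝓜_ℓ} { h²(s 1_A, V_m) + L |m| log n / n } + R_n(ℓ)/n`, where
`R_n(ℓ) = n 2^{3ℓd} inf_{1 ≤ q ≤ n} { exp(-(κ₀/10) n/(q 2^{ℓd})) + n β_q / q }`. -/
theorem stmt_7 :
    ∃ C L₀ : ℝ, 0 < C ∧ 0 < L₀ ∧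
      ∀ (d : ℕ), 0 < d →
      ∀ (Ω : Type) (_ : MeasurableSpace Ω) (P : Measure Ω), IsProbabilityMeasure P →
      ∀ (n : ℕ), 3 < n →
      ∀ (X : ℕ → Ω → (Fin d → ℝ)), (∀ i, Measurable (X i)) →
      ∀ (s : (Fin d → ℝ) → (Fin d → ℝ) → ℝ),
        Measurable (Function.uncurry s) → (∀ x y, 0 ≤ s x y) →
        (∀ x, ∫ y, s x y = 1) →
        (∀ i, ∀ g : (Fin d → ℝ) → ℝ, Measurable g → (∃ c, ∀ x, |g x| ≤ c) →
          P[(fun ω => g (X (i + 1) ω)) |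
              ⨆ k ∈ Finset.range (i + 1), MeasurableSpace.comap (X k) inferInstance]
            =ᵐ[P] fun ω => ∫ y, g y * s (X i ω) y) →
      -- stationarity: every `X_i` has density `φ` w.r.t. Lebesgue measure
      ∀ (φ : (Fin d → ℝ) → ℝ), Measurable φ → (∀ x, 0 ≤ φ x) →
        (∀ i : ℕ, Measure.map (X i) P = volume.withDensity fun x => ENNReal.ofReal (φ x)) →
      ∀ (κ₀ : ℝ), 0 < κ₀ → (∀ x ∈ Set.Icc (0 : Fin d → ℝ) 1, κ₀ ≤ φ x) →
      -- the iterated transition densities and the β-mixing coefficients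
      ∀ (sIter : ℕ → (Fin d → ℝ) → (Fin d → ℝ) → ℝ), sIter 1 = s →
        (∀ q x y, sIter (q + 1) x y = ∫ z, sIter q x z * s z y) →
      ∀ (β : ℕ → ℝ),
        (∀ q, β q = ∫ x, (∫ y, |sIter q x y - φ y|) * φ x) →
      ∀ (ℓ : ℕ), 1 ≤ ℓ →
      ∀ (L : ℝ), L₀ ≤ L →
      ∀ (mhat : Ω → Finset (CubeIdx d)),
        (∀ ω, mhat ω ∈ Mpart d ℓ) →
        (∀ ω, gammaSel d n X L (ℓ : ℕ∞) ω (mhat ω)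
            ≤ (⨅ m : Mpart d ℓ, gammaSel d n X L (ℓ : ℕ∞) ω (m : Finset (CubeIdx d)))
              + 1 / n) →
      C * (∫ ω, hellDet d φ (sIndA d s) (histEst d n X (mhat ω) ω) ∂P)
        ≤ sInf {x : ℝ | ∃ m ∈ Mpart d ℓ,
              x = sInf {y : ℝ | ∃ g ∈ VmD d m, y = hellDet d φ (sIndA d s) g}
                + penC L n m.card}
          + ((n : ℝ) * 2 ^ (3 * ℓ * d) *
              sInf {x : ℝ | ∃ q : ℕ, 1 ≤ q ∧ q ≤ n ∧
                x = Real.exp (-(κ₀ / 10) * ((n : ℝ) / (q * 2 ^ (ℓ * d))))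
                  + (n : ℝ) * β q / q}) / n := by
  refine ⟨1 / 10000, 6912, by norm_num, by norm_num, ?_⟩
  intro d hd Ω mΩ P hP n hn X hX s hsm hs0 hs1 hmark φ hφm hφ0 hstat κ₀ hκ0 hκ sIter h1 h2 β hβ
    ℓ _ L hL mhat hmh hsel
  have h : ChainOK d P X s φ :=
    { prob := hP
      measX := hX
      dens := ⟨hsm, hs0, fun x => by
        -- a non-integrable function would have integral `0`
        by_contra hc
        exact zero_ne_one ((integral_undef hc).symm.trans (hs1 x))⟩
      one := hs1
      markov := hmark
      measφ := hφm
      nonnegφ := hφ0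
      stat := hstat }
  have hn0 : (0 : ℝ) < n := by exact_mod_cast (by omega : 0 < n)
  set I := ∫ ω, hellDet d φ (sIndA d s) (histEst d n X (mhat ω) ω) ∂P with hI
  have key : ∀ q, 1 ≤ q → q ≤ n → ∀ m ∈ Mpart d ℓ, ∀ g ∈ VmD d m,
      1 / 10000 * I ≤ hellDet d φ (sIndA d s) g + penC L n m.card
        + 2 ^ (3 * ℓ * d) * (Real.exp (-(κ₀ / 10) * ((n : ℝ) / (q * 2 ^ (ℓ * d))))
          + (n : ℝ) * β q / q) := by
    rintro q hq hqn m hm g ⟨a, ha, rfl⟩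
    have := risk_bound h h1 h2 hκ0 hκ hd hn hq hqn hL hmh hsel hm ha
    have hb : β q = betaC d (sIter q) φ := hβ q
    rw [hb]
    unfold remQ at this
    change 1 / 10000 * I ≤ hellDet d φ (sIndA d s) (Hs d m a) + _ + _
    linarith
  have h2pos : (0 : ℝ) < 2 ^ (3 * ℓ * d) := by positivity
  -- the three infima are taken one after the other; each is over a nonempty set
  rw [mul_assoc, mul_div_cancel_left₀ _ hn0.ne', ← sub_le_iff_le_add', ← div_le_iff₀' h2pos]
  refine le_csInf ⟨_, 1, le_rfl, by omega, rfl⟩ ?_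
  rintro _ ⟨q, hq, hqn, rfl⟩
  rw [div_le_iff₀' h2pos, sub_le_comm]
  refine le_csInf ⟨_, _, root_mem_Mpart d ℓ, rfl⟩ ?_
  rintro _ ⟨m, hm, rfl⟩
  rw [← sub_le_iff_le_add]
  refine le_csInf ⟨_, _, ⟨fun _ => 0, fun _ _ => le_rfl, rfl⟩, rfl⟩ ?_
  rintro _ ⟨g, hg, rfl⟩
  linarith [key q hq hqn m hm g hg]
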